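/- Let θ ∈ [π/3, π/2] be a fixed angle. Then the maximal sphere packing densities satisfy δ_n ≤ (1+o(1))·e^{−1}·δ_n^{KL}(θ) as n → ∞; equivalently, limsup_{n→∞} δ_n / δ_n^{KL}(θ) ≤ 1/e. -/

import Mathlib

open MeasureTheory Filter Real

noncomputable section

/-- Generalized binomial coefficient `C(a, k)` for real `a`. -/
def genBinom (a : ℝ) (k : ℕ) : ℝ := (∏ i ∈ Finset.range k, (a - i)) / (Nat.factorial k : ℝ)

/-- The Jacobi polynomial `p_d^{α,β}`, via the standard explicit formula; it is the degree-`d`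
polynomial orthogonal to lower degrees for the weight `(1-t)^α (1+t)^β` on `[-1,1]`,
normalized by `p_d^{α,β}(1) = Γ(d+α+1)/(Γ(α+1)Γ(d+1))`. -/
def jacobiP (α β : ℝ) (d : ℕ) (x : ℝ) : ℝ :=
  ∑ s ∈ Finset.range (d + 1),
    genBinom ((d : ℝ) + α) (d - s) * genBinom ((d : ℝ) + β) s *
      ((x - 1) / 2) ^ s * ((x + 1) / 2) ^ (d - s)

/-- The largest root `t_{1,d}^{α,β}` of the Jacobi polynomial `p_d^{α,β}`. -/
def maxRoot (α β : ℝ) (d : ℕ) : ℝ := sSup {x : ℝ | jacobiP α β d x = 0}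

/-- The degree `d = d(n, θ')` determined by `t_{1,d-1}^{α+1,α+1} < cos θ' ≤ t_{1,d}^{α+1,α+1}`,
where `α = (n-3)/2`. -/
def levD (n : ℕ) (θ' : ℝ) : ℕ :=
  sInf {d : ℕ | 1 ≤ d ∧
    Real.cos θ' ≤ maxRoot (((n : ℝ) - 3) / 2 + 1) (((n : ℝ) - 3) / 2 + 1) d}

/-- Levenshtein's bound `M_Lev(n, θ')` on the size of `θ'`-spherical codes in `S^{n-1}`. -/
def MLev (n : ℕ) (θ' : ℝ) : ℝ :=
  if maxRoot (((n : ℝ) - 3) / 2 + 1) (((n : ℝ) - 3) / 2) (levD n θ') < Real.cos θ' then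
    2 * (Nat.choose (levD n θ' + n - 1) (n - 1) : ℝ)
  else
    (Nat.choose (levD n θ' + n - 1) (n - 1) : ℝ) + (Nat.choose (levD n θ' + n - 2) (n - 1) : ℝ)

/-- The Kabatyanskii–Levenshtein upper bound `δ_n^{KL}(θ) = sin^n(θ/2) · M_Lev(n, θ)`. -/
def deltaKL (n : ℕ) (θ : ℝ) : ℝ := Real.sin (θ / 2) ^ n * MLev n θ

/-- The density of the packing of unit balls centered at the points of `S`. -/
def packingDensity (n : ℕ) (S : Set (EuclideanSpace ℝ (Fin n))) : ℝ :=
  limsup (fun r : ℝ =>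
    (volume ((⋃ x ∈ S, Metric.ball x 1) ∩ Metric.ball 0 r)).toReal /
      (volume (Metric.ball (0 : EuclideanSpace ℝ (Fin n)) r)).toReal) atTop

/-- The maximal sphere packing density `δ_n` in `ℝ^n`. -/
def spherePackingConst (n : ℕ) : ℝ :=
  sSup {δ : ℝ | ∃ S : Set (EuclideanSpace ℝ (Fin n)),
    S.Pairwise (fun x y => 2 ≤ dist x y) ∧ δ = packingDensity n S}

/-!
The linear programming bound is averaged over a spherical shell. If `f` has nonnegative Gegenbauer
coefficients, the kernel `k(a, b) = f(cos ∠(a, b))`, restricted to `ρ ≤ ‖a‖, ‖b‖ ≤ R`, is positive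
definite (Schoenberg), and summing it over the translates of a packing gives
`δ_n ≤ (f(1) / f₀) / (R ^ n - ρ ^ n)` as soon as `∫ k(z, z - w) dz ≤ 0` whenever `‖w‖ ≥ 2`.

Take for `f` Levenshtein's polynomial, for which `f(1) / f₀ = M_Lev(n, θ)`. Its sign on
`[-1, cos θ]` makes `R = 1 / sin (θ / 2)` admissible with a nonpositive integrand. Since `k` only
has to be nonpositive on average, `R = (1 + c / n) / sin (θ / 2)` is still admissible for large `n`
and any fixed `c < 1`: the differential equation of the Gegenbauer polynomials shows that
`f(t) (1 - t²)^(n/2)` is close to `K (t - s)` at distance `O(1 / n)` from its sign change `s`, and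
the integral, which concentrates within relative distance `O(1 / n)` of the outer sphere, is then
at most a positive multiple of `∫ a e⁻ᵃ (2c - a) da = 2c - 2 < 0`, up to a small error. With
`ρ = 3 R / 4` this bounds `δ_n / δ_n^{KL}(θ)` by `((1 + c / n)^n (1 - (3 / 4)^n))⁻¹ → e⁻ᶜ`; let
`c → 1`.
-/

namespace SpherePacking

/-! ### Zonal polynomials and their linearization cone -/

section Zonal

open Polynomial

variable {n : ℕ} {f g : ℝ[X]}

/-- The coefficient `γ_k` of the three-term recurrence `X p_k = p_{k+1} + γ_k p_{k-1}` satisfied by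
the monic zonal polynomials of the sphere `S^{n-1}`. -/
def recCoeff (n k : ℕ) : ℝ := (k * (k + n - 3)) / ((2 * k + n - 2) * (2 * k + n - 4))

/-- The monic zonal polynomial of degree `k` on `S^{n-1}`, that is, the monic multiple of the
Gegenbauer polynomial `C_k^{(n/2-1)}`. -/
def zonalPoly (n : ℕ) : ℕ → ℝ[X]
  | 0 => 1
  | 1 => X
  | k + 2 => X * zonalPoly n (k + 1) - C (recCoeff n (k + 1)) * zonalPoly n k

lemma X_mul_zonalPoly_succ (n k : ℕ) :
    X * zonalPoly n (k + 1) = zonalPoly n (k + 2) + C (recCoeff n (k + 1)) * zonalPoly n k := by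
  rw [zonalPoly]
  ring

lemma isMonicOfDegree_zonalPoly (n k : ℕ) : IsMonicOfDegree (zonalPoly n k) k := by
  induction k using Nat.twoStepInduction with
  | zero => simp [zonalPoly]
  | one => exact isMonicOfDegree_X ℝ
  | more k ih ih' =>
    rw [zonalPoly, show k + 2 = 1 + (k + 1) by ring]
    refine ((isMonicOfDegree_X ℝ).mul ih').sub ((natDegree_C_mul_le _ _).trans_lt ?_)
    rw [ih.natDegree_eq]
    omega

/-- The monic zonal polynomials, one in each degree. -/
def zonalSequence (n : ℕ) : Polynomial.Sequence ℝ where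
  elems' := zonalPoly n
  degree_eq' k := by
    rw [degree_eq_natDegree (isMonicOfDegree_zonalPoly n k).ne_zero,
      (isMonicOfDegree_zonalPoly n k).natDegree_eq]

/-- The basis of `ℝ[X]` consisting of the monic zonal polynomials. -/
def zonalBasis (n : ℕ) : Module.Basis ℕ ℝ ℝ[X] :=
  (zonalSequence n).basis fun k ↦ (isMonicOfDegree_zonalPoly n k).monic.leadingCoeff ▸ isUnit_one

lemma zonalBasis_apply (n k : ℕ) : zonalBasis n k = zonalPoly n k :=
  Polynomial.Sequence.basis_eq_self _ _ k

/-- The coefficient of the degree `k` zonal polynomial in the zonal expansion of a polynomial. Up to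
normalization, `zonalCoeff n 0` is integration of zonal functions over `S^{n-1}`. -/
def zonalCoeff (n k : ℕ) : ℝ[X] →ₗ[ℝ] ℝ := (zonalBasis n).coord k

lemma zonalCoeff_zonalPoly (n j k : ℕ) :
    zonalCoeff n k (zonalPoly n j) = if j = k then 1 else 0 := by
  rw [zonalCoeff, ← zonalBasis_apply, Module.Basis.coord_apply, Module.Basis.repr_self,
    Finsupp.single_apply]

@[simp]
lemma zonalCoeff_zero_one (n : ℕ) : zonalCoeff n 0 1 = 1 := zonalCoeff_zonalPoly n 0 0

lemma zonalCoeff_C_mul (n k : ℕ) (a : ℝ) (f : ℝ[X]) :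
    zonalCoeff n k (C a * f) = a * zonalCoeff n k f := by
  rw [← smul_eq_C_mul, map_smul, smul_eq_mul]

lemma exists_eq_sum_zonalPoly (n : ℕ) (f : ℝ[X]) :
    ∃ s : Finset ℕ, f = ∑ k ∈ s, C (zonalCoeff n k f) * zonalPoly n k := by
  refine ⟨((zonalBasis n).repr f).support, ?_⟩
  conv_lhs => rw [← (zonalBasis n).linearCombination_repr f]
  simp only [Finsupp.linearCombination_apply, Finsupp.sum, zonalBasis_apply, smul_eq_C_mul]
  rfl

/-- The cone of polynomials all of whose zonal coefficients are nonnegative. By Schoenberg's theorem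
these are the polynomials `f` for which `f ⟪x, y⟫` is a positive definite kernel on `S^{n-1}`. -/
def ZonalNonneg (n : ℕ) (f : ℝ[X]) : Prop := ∀ k, 0 ≤ zonalCoeff n k f

lemma ZonalNonneg.add (hf : ZonalNonneg n f) (hg : ZonalNonneg n g) : ZonalNonneg n (f + g) :=
  fun k ↦ by rw [map_add]; exact add_nonneg (hf k) (hg k)

lemma ZonalNonneg.C_mul {a : ℝ} (ha : 0 ≤ a) (hf : ZonalNonneg n f) : ZonalNonneg n (C a * f) :=
  fun k ↦ by rw [zonalCoeff_C_mul]; exact mul_nonneg ha (hf k)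

lemma ZonalNonneg.sum {ι : Type*} {s : Finset ι} {f : ι → ℝ[X]}
    (h : ∀ i ∈ s, ZonalNonneg n (f i)) : ZonalNonneg n (∑ i ∈ s, f i) :=
  fun k ↦ by rw [map_sum]; exact Finset.sum_nonneg fun i hi ↦ h i hi k

lemma zonalNonneg_zonalPoly (n k : ℕ) : ZonalNonneg n (zonalPoly n k) := fun j ↦ by
  rw [zonalCoeff_zonalPoly]
  positivity

lemma zonalNonneg_C {a : ℝ} (n : ℕ) (ha : 0 ≤ a) : ZonalNonneg n (C a) := by
  simpa [zonalPoly] using (zonalNonneg_zonalPoly n 0).C_mul ha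

lemma recCoeff_nonneg (hn : 3 ≤ n) (k : ℕ) : 0 ≤ recCoeff n k := by
  have hn' : (3 : ℝ) ≤ n := mod_cast hn
  rcases k.eq_zero_or_pos with rfl | hk
  · simp [recCoeff]
  have hk' : (1 : ℝ) ≤ k := mod_cast hk
  exact div_nonneg (mul_nonneg (by linarith) (by linarith))
    (mul_nonneg (by linarith) (by linarith))

lemma four_mul_recCoeff (hn : 3 ≤ n) {k : ℕ} (hk : 1 ≤ k) :
    4 * recCoeff n k = 1 - (n - 2) * (n - 4) / ((2 * k + n - 2) * (2 * k + n - 4)) := by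
  have hn' : (3 : ℝ) ≤ n := mod_cast hn
  have hk' : (1 : ℝ) ≤ k := mod_cast hk
  have hden : ((2 * k + n - 2) * (2 * k + n - 4) : ℝ) ≠ 0 :=
    mul_ne_zero (by linarith) (by linarith)
  rw [recCoeff, eq_sub_iff_add_eq, mul_div_assoc', ← add_div, div_eq_one_iff_eq hden]
  ring

lemma recCoeff_mono (hn : 4 ≤ n) {j k : ℕ} (hjk : j ≤ k) : recCoeff n j ≤ recCoeff n k := by
  rcases j.eq_zero_or_pos with rfl | hj
  · simpa [recCoeff] using recCoeff_nonneg (by omega : 3 ≤ n) k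
  have hn' : (4 : ℝ) ≤ n := mod_cast hn
  have hj' : (1 : ℝ) ≤ j := mod_cast hj
  have hjk' : (j : ℝ) ≤ k := mod_cast hjk
  have : ((n : ℝ) - 2) * (n - 4) / ((2 * k + n - 2) * (2 * k + n - 4)) ≤
      (n - 2) * (n - 4) / ((2 * j + n - 2) * (2 * j + n - 4)) :=
    div_le_div_of_nonneg_left (mul_nonneg (by linarith) (by linarith))
      (mul_pos (by linarith) (by linarith))
      (mul_le_mul (by linarith) (by linarith) (by linarith) (by linarith))
  linarith [four_mul_recCoeff (by omega : 3 ≤ n) hj,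
    four_mul_recCoeff (by omega : 3 ≤ n) (hj.trans_le hjk)]

/-- The second conjunct, a Turán-type positivity, is what carries the induction on `j`: it turns
`p_j p_{k+1}` into `p_{j+1} p_k`, and it propagates because the recurrence coefficients increase. -/
lemma zonalNonneg_zonalPoly_mul_and_sub (hn : 4 ≤ n) (j : ℕ) : ∀ k, j ≤ k →
    ZonalNonneg n (zonalPoly n j * zonalPoly n k) ∧
      ZonalNonneg n
        (zonalPoly n (j + 1) * zonalPoly n k - zonalPoly n j * zonalPoly n (k + 1)) := by
  induction j with
  | zero =>
    refine fun k _ ↦ ⟨by simpa [zonalPoly] using zonalNonneg_zonalPoly n k, ?_⟩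
    match k with
    | 0 => simpa [zonalPoly] using zonalNonneg_C n le_rfl
    | k + 1 =>
      have : zonalPoly n (0 + 1) * zonalPoly n (k + 1) - zonalPoly n 0 * zonalPoly n (k + 1 + 1) =
          C (recCoeff n (k + 1)) * zonalPoly n k := by
        simp only [zonalPoly]
        ring
      rw [this]
      exact (zonalNonneg_zonalPoly n k).C_mul (recCoeff_nonneg (by omega) _)
  | succ j ih =>
    have hmul (k : ℕ) (hk : j + 1 ≤ k) : ZonalNonneg n (zonalPoly n (j + 1) * zonalPoly n k) := by
      simpa using (ih k (by omega)).2.add (ih (k + 1) (by omega)).1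
    refine fun k hk ↦ ⟨hmul k hk, ?_⟩
    obtain ⟨k, rfl⟩ := Nat.exists_eq_add_of_le' (Nat.one_le_of_lt hk)
    have hsub : zonalPoly n (j + 1 + 1) * zonalPoly n (k + 1) -
          zonalPoly n (j + 1) * zonalPoly n (k + 1 + 1) =
        C (recCoeff n (k + 1) - recCoeff n (j + 1)) * (zonalPoly n (j + 1) * zonalPoly n k) +
        C (recCoeff n (j + 1)) *
          (zonalPoly n (j + 1) * zonalPoly n k - zonalPoly n j * zonalPoly n (k + 1)) := by
      rw [zonalPoly, zonalPoly, C_sub]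
      ring
    rw [hsub]
    refine .add (.C_mul (sub_nonneg.2 (recCoeff_mono hn hk)) ?_)
      ((ih k (by omega)).2.C_mul (recCoeff_nonneg (by omega) _))
    rcases (Nat.le_of_succ_le_succ hk).lt_or_eq with hjk | rfl
    · exact hmul k hjk
    · rw [mul_comm]
      exact (ih (j + 1) (by omega)).1

lemma ZonalNonneg.mul (hn : 4 ≤ n) (hf : ZonalNonneg n f) (hg : ZonalNonneg n g) :
    ZonalNonneg n (f * g) := by
  obtain ⟨s, hs⟩ := exists_eq_sum_zonalPoly n f
  obtain ⟨t, ht⟩ := exists_eq_sum_zonalPoly n g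
  rw [hs, ht, Finset.sum_mul_sum]
  refine .sum fun i _ ↦ .sum fun j _ ↦ ?_
  rw [mul_mul_mul_comm, ← Polynomial.C_mul]
  refine .C_mul (mul_nonneg (hf i) (hg j)) ?_
  rcases le_total i j with h | h
  · exact (zonalNonneg_zonalPoly_mul_and_sub hn i j h).1
  · rw [mul_comm]
    exact (zonalNonneg_zonalPoly_mul_and_sub hn j i h).1

lemma zonalCoeff_zero_zonalPoly_mul_X_pow (n : ℕ) {m k : ℕ} (hmk : m < k) :
    zonalCoeff n 0 (zonalPoly n k * X ^ m) = 0 := by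
  induction m generalizing k with
  | zero => rw [pow_zero, mul_one, zonalCoeff_zonalPoly, if_neg hmk.ne']
  | succ m ih =>
    obtain ⟨k, rfl⟩ := Nat.exists_eq_add_of_le' (Nat.one_le_of_lt hmk)
    have : zonalPoly n (k + 1) * X ^ (m + 1) = zonalPoly n (k + 2) * X ^ m +
        C (recCoeff n (k + 1)) * (zonalPoly n k * X ^ m) := by
      linear_combination X ^ m * X_mul_zonalPoly_succ n k
    rw [this, map_add, zonalCoeff_C_mul, ih (by omega), ih (by omega), mul_zero, add_zero]

lemma zonalCoeff_zero_zonalPoly_mul (n : ℕ) {k : ℕ} (hg : g.natDegree < k) :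
    zonalCoeff n 0 (zonalPoly n k * g) = 0 := by
  rw [g.as_sum_range' k hg, Finset.mul_sum, map_sum]
  refine Finset.sum_eq_zero fun i hi ↦ ?_
  rw [← C_mul_X_pow_eq_monomial, mul_left_comm, zonalCoeff_C_mul,
    zonalCoeff_zero_zonalPoly_mul_X_pow n (Finset.mem_range.1 hi), mul_zero]

lemma zonalCoeff_zero_zonalPoly_succ_sq (n k : ℕ) :
    zonalCoeff n 0 (zonalPoly n (k + 1) ^ 2) =
      recCoeff n (k + 1) * zonalCoeff n 0 (zonalPoly n k ^ 2) := by
  have horth (j : ℕ) : zonalCoeff n 0 (zonalPoly n (j + 2) * zonalPoly n j) = 0 :=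
    zonalCoeff_zero_zonalPoly_mul n (by rw [(isMonicOfDegree_zonalPoly n j).natDegree_eq]; omega)
  have hX : zonalCoeff n 0 (zonalPoly n (k + 1) * (X * zonalPoly n k)) =
      zonalCoeff n 0 (zonalPoly n (k + 1) ^ 2) := by
    match k with
    | 0 => simp [zonalPoly, sq]
    | k + 1 =>
      rw [X_mul_zonalPoly_succ n k, mul_add, map_add, mul_left_comm _ (C _), zonalCoeff_C_mul,
        horth, mul_zero, add_zero, ← sq]
  have hrec : zonalPoly n (k + 1) * (X * zonalPoly n k) = zonalPoly n (k + 2) * zonalPoly n k +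
      C (recCoeff n (k + 1)) * zonalPoly n k ^ 2 := by
    linear_combination zonalPoly n k * X_mul_zonalPoly_succ n k
  rw [← hX, hrec, map_add, zonalCoeff_C_mul, horth, zero_add]

lemma recCoeff_succ (n k : ℕ) : recCoeff n (k + 1) =
    (k + 1) * (k + n - 2) / ((2 * k + n) * (2 * k + n - 2)) := by
  rw [recCoeff]
  push_cast
  ring_nf

lemma eval_one_zonalPoly_succ (hn : 3 ≤ n) (k : ℕ) : (zonalPoly n (k + 1)).eval 1 =
    (zonalPoly n k).eval 1 * ((k + n - 2) / (2 * k + n - 2)) := by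
  have hn' : (3 : ℝ) ≤ n := mod_cast hn
  induction k with
  | zero => simp [zonalPoly, div_self (by linarith : (n : ℝ) - 2 ≠ 0)]
  | succ k ih =>
    have hmul : recCoeff n (k + 1) * (zonalPoly n k).eval 1 =
        (k + 1) / (2 * k + n) * (zonalPoly n (k + 1)).eval 1 := by
      rw [recCoeff_succ, ih, mul_div_mul_comm]
      ring
    have hdiv : (((k + 1 : ℕ) : ℝ) + n - 2) / (2 * ((k + 1 : ℕ) : ℝ) + n - 2) =
        1 - (k + 1) / (2 * k + n) := by
      push_cast
      rw [show (2 * (k + 1) + n - 2 : ℝ) = 2 * k + n by ring]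
      field_simp
      ring
    rw [zonalPoly, hdiv]
    simp only [eval_sub, eval_mul, eval_C, eval_X, one_mul, hmul]
    ring

end Zonal

/-! ### Levenshtein's polynomials -/

section Levenshtein

open Polynomial

variable {n d e : ℕ} {s t : ℝ}

/-- The Gegenbauer polynomial `C_k^{(n/2)}`, up to a scalar the Jacobi polynomial of index
`α = β = (n-1)/2`. -/
def gegenbauer (n : ℕ) : ℕ → ℝ[X]
  | 0 => 1
  | 1 => C (n : ℝ) * X
  | k + 2 => C ((2 * k + 2 + n) / (k + 2) : ℝ) * (X * gegenbauer n (k + 1)) -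
      C ((k + n) / (k + 2) : ℝ) * gegenbauer n k

lemma gegenbauer_rec (n k : ℕ) (t : ℝ) : (k + 2) * (gegenbauer n (k + 2)).eval t =
    (2 * k + 2 + n) * (t * (gegenbauer n (k + 1)).eval t) - (k + n) * (gegenbauer n k).eval t := by
  simp only [gegenbauer, eval_sub, eval_mul, eval_C, eval_X]
  field_simp

lemma eval_gegenbauer_pos_and_le_succ (hn : 1 ≤ n) (hs : 1 ≤ s) (k : ℕ) :
    0 < (gegenbauer n k).eval s ∧ (gegenbauer n k).eval s ≤ (gegenbauer n (k + 1)).eval s := by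
  have hn' : (1 : ℝ) ≤ n := mod_cast hn
  induction k with
  | zero =>
    simp only [gegenbauer, eval_one, eval_mul, eval_C, eval_X]
    exact ⟨one_pos, one_le_mul_of_one_le_of_one_le hn' hs⟩
  | succ k ih =>
    have hpos := ih.1.trans_le ih.2
    refine ⟨hpos, le_of_mul_le_mul_left ?_ (by positivity : (0 : ℝ) < k + 2)⟩
    have hX : (2 * k + 2 + n) * (gegenbauer n (k + 1)).eval s ≤
        (2 * k + 2 + n) * (s * (gegenbauer n (k + 1)).eval s) := by
      gcongr
      exact le_mul_of_one_le_left hpos.le hs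
    have hprev : (k + n) * (gegenbauer n k).eval s ≤ (k + n) * (gegenbauer n (k + 1)).eval s := by
      gcongr
      exact ih.2
    rw [gegenbauer_rec]
    linarith

lemma natDegree_gegenbauer_le (n k : ℕ) : (gegenbauer n k).natDegree ≤ k := by
  induction k using Nat.twoStepInduction with
  | zero => simp [gegenbauer]
  | one => exact (natDegree_C_mul_le _ _).trans natDegree_X_le
  | more k ih ih' =>
    have hX : (X * gegenbauer n (k + 1)).natDegree ≤ k + 2 :=
      natDegree_mul_le.trans (by rw [natDegree_X]; omega)
    rw [gegenbauer]
    exact (natDegree_sub_le_of_le ((natDegree_C_mul_le _ _).trans hX)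
      ((natDegree_C_mul_le _ _).trans (ih.trans (by omega)))).trans (max_self _).le

/-- The leading coefficient of `gegenbauer n k`. -/
def gegenbauerLead (n k : ℕ) : ℝ := ∏ i ∈ Finset.range k, (2 * i + n) / (i + 1)

lemma gegenbauerLead_succ (n k : ℕ) :
    gegenbauerLead n (k + 1) = gegenbauerLead n k * ((2 * k + n) / (k + 1)) :=
  Finset.prod_range_succ _ _

lemma gegenbauerLead_nonneg (n k : ℕ) : 0 ≤ gegenbauerLead n k :=
  Finset.prod_nonneg fun _ _ ↦ by positivity

lemma gegenbauer_sub_rec (n k : ℕ) : gegenbauer n (k + 4) - gegenbauer n (k + 2) =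
    C ((2 * k + 6 + n) / (k + 4) : ℝ) *
      (X * (gegenbauer n (k + 3) - gegenbauer n (k + 1)) -
        C ((k + n) / (2 * k + 2 + n) : ℝ) * (gegenbauer n (k + 2) - gegenbauer n k)) := by
  refine Polynomial.funext fun t ↦ ?_
  have h₁ := gegenbauer_rec n k t
  have h₂ := gegenbauer_rec n (k + 2) t
  push_cast at h₂
  simp only [eval_sub, eval_mul, eval_C, eval_X]
  field_simp
  linear_combination (2 * k + 2 + n : ℝ) * h₂ - (2 * k + 6 + n : ℝ) * h₁

lemma gegenbauerLead_mul_recCoeff (n k : ℕ) : gegenbauerLead n (k + 4) * recCoeff n (k + 3) =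
    (2 * k + 6 + n) / (k + 4) * ((k + n) / (2 * k + 2 + n)) * gegenbauerLead n (k + 2) := by
  rw [recCoeff_succ, gegenbauerLead_succ, gegenbauerLead_succ]
  push_cast
  rw [show (2 * (k + 2) + n - 2 : ℝ) = 2 * k + 2 + n by ring]
  field_simp
  ring

lemma recCoeff_one (hn : 3 ≤ n) : recCoeff n 1 = 1 / n := by
  have hn' : (3 : ℝ) ≤ n := mod_cast hn
  rw [recCoeff, div_eq_div_iff] <;> push_cast
  · ring
  · exact mul_ne_zero (by linarith) (by linarith)
  · linarith

lemma gegenbauer_sub (hn : 3 ≤ n) (k : ℕ) : gegenbauer n (k + 2) - gegenbauer n k =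
    C (gegenbauerLead n (k + 2)) * zonalPoly n (k + 2) := by
  induction k using Nat.twoStepInduction with
  | zero =>
    refine Polynomial.funext fun t ↦ ?_
    simp only [gegenbauer, zonalPoly, gegenbauerLead_succ, recCoeff_one hn, zero_add, eval_sub,
      eval_mul, eval_C, eval_X, eval_one]
    simp only [gegenbauerLead, Finset.range_zero, Finset.prod_empty]
    push_cast
    field_simp
    ring
  | one =>
    have h₂ : recCoeff n 2 = 2 * (n - 1) / ((n + 2) * n) := by
      rw [recCoeff]
      push_cast
      ring_nf
    refine Polynomial.funext fun t ↦ ?_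
    simp only [gegenbauer, zonalPoly, gegenbauerLead_succ, recCoeff_one hn, h₂, zero_add,
      Nat.reduceAdd, eval_sub, eval_mul, eval_C, eval_X, eval_one]
    simp only [gegenbauerLead, Finset.range_zero, Finset.prod_empty]
    push_cast
    field_simp
    ring
  | more k ih ih' =>
    have hlead : (2 * k + 6 + n) / (k + 4) * gegenbauerLead n (k + 3) =
        gegenbauerLead n (k + 4) := by
      rw [gegenbauerLead_succ n (k + 3)]
      push_cast
      ring
    have hzonal : zonalPoly n (k + 4) =
        X * zonalPoly n (k + 3) - C (recCoeff n (k + 3)) * zonalPoly n (k + 2) := rfl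
    rw [gegenbauer_sub_rec, ih, ih', hzonal, mul_sub, mul_sub]
    congr 1
    · rw [← hlead, C_mul]
      ring
    · rw [← mul_assoc, ← mul_assoc, ← mul_assoc, ← C_mul, ← C_mul, ← C_mul,
        gegenbauerLead_mul_recCoeff]

lemma zonalNonneg_gegenbauer (hn : 3 ≤ n) (k : ℕ) : ZonalNonneg n (gegenbauer n k) := by
  induction k using Nat.twoStepInduction with
  | zero => exact zonalNonneg_zonalPoly n 0
  | one => exact (zonalNonneg_zonalPoly n 1).C_mul n.cast_nonneg
  | more k ih _ =>
    rw [← sub_add_cancel (gegenbauer n (k + 2)) (gegenbauer n k), gegenbauer_sub hn]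
    exact ((zonalNonneg_zonalPoly n _).C_mul (gegenbauerLead_nonneg n _)).add ih

/-- The reproducing kernel at `1` of the polynomials of degree at most `k` with respect to the
zonal measure, see `zonalCoeff_zero_kernelPoly_mul`. -/
def kernelPoly (n : ℕ) : ℕ → ℝ[X]
  | 0 => gegenbauer n 0
  | k + 1 => gegenbauer n (k + 1) + gegenbauer n k

lemma kernelPoly_succ (hn : 3 ≤ n) (k : ℕ) : kernelPoly n (k + 1) =
    kernelPoly n k + C (gegenbauerLead n (k + 1)) * zonalPoly n (k + 1) := by
  match k with
  | 0 => simp [kernelPoly, gegenbauer, zonalPoly, gegenbauerLead, add_comm]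
  | k + 1 =>
    rw [← gegenbauer_sub hn, kernelPoly, kernelPoly]
    ring

lemma zonalNonneg_kernelPoly (hn : 3 ≤ n) (k : ℕ) : ZonalNonneg n (kernelPoly n k) := by
  match k with
  | 0 => exact zonalNonneg_gegenbauer hn 0
  | k + 1 => exact (zonalNonneg_gegenbauer hn _).add (zonalNonneg_gegenbauer hn _)

lemma natDegree_kernelPoly_le (n k : ℕ) : (kernelPoly n k).natDegree ≤ k := by
  match k with
  | 0 => exact natDegree_gegenbauer_le n 0
  | k + 1 =>
    exact natDegree_add_le_of_degree_le (natDegree_gegenbauer_le n _)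
      ((natDegree_gegenbauer_le n _).trans (by omega))

lemma gegenbauerLead_mul_zonalCoeff_zero_sq (hn : 3 ≤ n) (k : ℕ) :
    gegenbauerLead n k * zonalCoeff n 0 (zonalPoly n k ^ 2) = (zonalPoly n k).eval 1 := by
  induction k with
  | zero => simp [gegenbauerLead, zonalPoly]
  | succ k ih =>
    rw [zonalCoeff_zero_zonalPoly_succ_sq, eval_one_zonalPoly_succ hn, ← ih, gegenbauerLead_succ,
      recCoeff_succ]
    have hk : (2 * k + n : ℝ) ≠ 0 := by positivity
    field_simp

lemma exists_natDegree_le_add_C_mul {R : Type*} [Ring R] {p g : R[X]}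
    (hp : IsMonicOfDegree p (d + 1)) (hg : g.natDegree ≤ d + 1) :
    ∃ (a : R) (g' : R[X]), g'.natDegree ≤ d ∧ g = g' + C a * p := by
  refine ⟨g.coeff (d + 1), g - C (g.coeff (d + 1)) * p, ?_, by simp⟩
  have hle : (g - C (g.coeff (d + 1)) * p).natDegree ≤ d + 1 :=
    (natDegree_sub_le_of_le hg ((natDegree_C_mul_le _ _).trans hp.natDegree_eq.le)).trans
      (max_self _).le
  have hcoeff : p.coeff (d + 1) = 1 := by
    simpa [hp.natDegree_eq] using hp.monic.coeff_natDegree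
  refine natDegree_le_iff_coeff_eq_zero.2 fun N hN ↦ ?_
  rcases (Nat.succ_le_of_lt hN).eq_or_lt with rfl | hN
  · simp [hcoeff]
  · exact coeff_eq_zero_of_natDegree_lt (by omega)

lemma zonalCoeff_zero_kernelPoly_mul (hn : 3 ≤ n) {g : ℝ[X]} (hg : g.natDegree ≤ d) :
    zonalCoeff n 0 (kernelPoly n d * g) = g.eval 1 := by
  induction d generalizing g with
  | zero =>
    rw [eq_C_of_natDegree_le_zero hg, mul_comm, zonalCoeff_C_mul]
    simp [kernelPoly, gegenbauer]
  | succ d ih =>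
    obtain ⟨a, g', hg', rfl⟩ :=
      exists_natDegree_le_add_C_mul (isMonicOfDegree_zonalPoly n (d + 1)) hg
    have hexpand : kernelPoly n (d + 1) * (g' + C a * zonalPoly n (d + 1)) =
        kernelPoly n d * g' + C a * (zonalPoly n (d + 1) * kernelPoly n d) +
          C (gegenbauerLead n (d + 1)) * (zonalPoly n (d + 1) * g') +
          C a * (C (gegenbauerLead n (d + 1)) * zonalPoly n (d + 1) ^ 2) := by
      rw [kernelPoly_succ hn]
      ring
    rw [hexpand]
    simp only [map_add, zonalCoeff_C_mul, eval_add, eval_mul, eval_C]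
    rw [ih hg', zonalCoeff_zero_zonalPoly_mul n (Nat.lt_succ_of_le (natDegree_kernelPoly_le n d)),
      zonalCoeff_zero_zonalPoly_mul n (Nat.lt_succ_of_le hg'),
      gegenbauerLead_mul_zonalCoeff_zero_sq hn]
    ring

lemma one_add_X_mul_gegenbauer (n d : ℕ) : (1 + X) * gegenbauer n (d + 1) =
    C ((d + 2 : ℝ) / (2 * d + 2 + n)) * kernelPoly n (d + 2) +
      C ((d + n : ℝ) / (2 * d + 2 + n)) * kernelPoly n (d + 1) := by
  refine Polynomial.funext fun t ↦ ?_
  simp only [kernelPoly, eval_mul, eval_add, eval_C, eval_X, eval_one]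
  field_simp
  linear_combination -gegenbauer_rec n d t

lemma exists_christoffelDarboux (hn : 3 ≤ n) (h : ∀ k ≤ d, 0 < (gegenbauer n k).eval s) :
    ∃ K : ℝ[X], ZonalNonneg n K ∧ K.natDegree ≤ d ∧ 0 < K.eval s ∧
      (X - C s) * K = C ((gegenbauer n d).eval s) * gegenbauer n (d + 1) -
        C ((gegenbauer n (d + 1)).eval s) * gegenbauer n d := by
  induction d with
  | zero =>
    refine ⟨C n, zonalNonneg_C n n.cast_nonneg, by simp, by simp; omega, ?_⟩
    simp only [gegenbauer, eval_mul, eval_one, eval_C, eval_X, C_mul, C_1]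
    ring
  | succ d ih =>
    obtain ⟨K, hK, hdeg, hpos, hmul⟩ := ih fun k hk ↦ h k (by omega)
    have hd := h (d + 1) le_rfl
    refine ⟨C ((2 * d + 2 + n) / (d + 2) * (gegenbauer n (d + 1)).eval s) * gegenbauer n (d + 1) +
      C ((d + n) / (d + 2) : ℝ) * K, ?_, ?_, ?_, ?_⟩
    · exact ((zonalNonneg_gegenbauer hn _).C_mul (by positivity)).add (hK.C_mul (by positivity))
    · exact natDegree_add_le_of_degree_le
        ((natDegree_C_mul_le _ _).trans (natDegree_gegenbauer_le n _))
        ((natDegree_C_mul_le _ _).trans (by omega))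
    · simp only [eval_add, eval_mul, eval_C]
      positivity
    · refine Polynomial.funext fun t ↦ ?_
      have hmul_t := congrArg (eval t) hmul
      simp only [eval_add, eval_mul, eval_C, eval_sub, eval_X] at hmul_t ⊢
      field_simp
      linear_combination (d + n : ℝ) * hmul_t -
        eval s (gegenbauer n (d + 1)) * gegenbauer_rec n d t +
        eval t (gegenbauer n (d + 1)) * gegenbauer_rec n d s

lemma succ_mul_eval_one_gegenbauer (n d : ℕ) :
    (d + 1) * (gegenbauer n (d + 1)).eval 1 = (d + n) * (gegenbauer n d).eval 1 := by
  induction d with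
  | zero => simp [gegenbauer]
  | succ d ih =>
    push_cast
    linear_combination gegenbauer_rec n d 1 + ih

lemma eval_one_gegenbauer (hn : 1 ≤ n) (d : ℕ) :
    (gegenbauer n d).eval 1 = (d + n - 1).choose (n - 1) := by
  obtain ⟨n, rfl⟩ := Nat.exists_eq_add_of_le' hn
  simp only [← add_assoc, Nat.add_sub_cancel]
  induction d with
  | zero => simp [gegenbauer]
  | succ d ih =>
    have hrec := succ_mul_eval_one_gegenbauer (n + 1) d
    have hchoose : ((d + n).choose n : ℝ) * (d + n + 1) = (d + n + 1).choose n * (d + 1) := by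
      have := Nat.choose_mul_succ_eq (d + n) n
      rw [show d + n + 1 - n = d + 1 by omega] at this
      exact_mod_cast this
    rw [show d + 1 + n = d + n + 1 by ring, ← mul_right_inj' (by positivity : (d + 1 : ℝ) ≠ 0),
      hrec, ih]
    push_cast
    linear_combination hchoose

/-- The polynomial of degree `d + 1` whose largest root is the Levenshtein node. The parameter
`e ∈ {0, 1}` selects the family: up to a scalar it is the Jacobi polynomial of index
`(α + 1, α + e)`, where `α = (n-3)/2`. -/
def nodePoly (n d e : ℕ) : ℝ[X] := gegenbauer n (d + 1) + C (1 - e : ℝ) * gegenbauer n d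

/-- The quotient of `nodePoly n d e` by `X - s`. -/
def nodeQuot (n d e : ℕ) (s : ℝ) : ℝ[X] := nodePoly n d e /ₘ (X - C s)

/-- Levenshtein's polynomial `(1 + t)^e p(t)² / (t - s)`, where `p = nodePoly n d e`. -/
def levenshteinPoly (n d e : ℕ) (s : ℝ) : ℝ[X] :=
  (1 + X) ^ e * nodePoly n d e * nodeQuot n d e s

/-- `s` is a root of `nodePoly n d e` at which the Gegenbauer polynomials up to degree `d` are
positive, so that it is the largest root. -/
structure IsLevenshteinNode (n d e : ℕ) (s : ℝ) : Prop where
  le_one : e ≤ 1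
  pos : ∀ k ≤ d, 0 < (gegenbauer n k).eval s
  root : (nodePoly n d e).eval s = 0

lemma eval_nodePoly (n d e : ℕ) (t : ℝ) : (nodePoly n d e).eval t =
    (gegenbauer n (d + 1)).eval t + (1 - e) * (gegenbauer n d).eval t := by
  rw [nodePoly, eval_add, eval_mul, eval_C]

lemma eval_nodePoly_pos (hn : 1 ≤ n) (he : e ≤ 1) (hs : 1 ≤ s) : 0 < (nodePoly n d e).eval s := by
  have he' : (e : ℝ) ≤ 1 := mod_cast he
  rw [eval_nodePoly]
  exact add_pos_of_pos_of_nonneg (eval_gegenbauer_pos_and_le_succ hn hs _).1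
    (mul_nonneg (by linarith) (eval_gegenbauer_pos_and_le_succ hn hs _).1.le)

namespace IsLevenshteinNode

lemma X_sub_C_mul_nodeQuot (h : IsLevenshteinNode n d e s) :
    (X - C s) * nodeQuot n d e s = nodePoly n d e :=
  mul_divByMonic_eq_iff_isRoot.2 h.root

lemma exists_nodeQuot_eq (hn : 3 ≤ n) (h : IsLevenshteinNode n d e s) :
    ∃ K : ℝ[X], ZonalNonneg n K ∧ K.natDegree ≤ d ∧ 0 < K.eval s ∧
      nodeQuot n d e s = C ((gegenbauer n d).eval s)⁻¹ * K := by
  obtain ⟨K, hK, hdeg, hpos, hmul⟩ := exists_christoffelDarboux hn h.pos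
  refine ⟨K, hK, hdeg, hpos, mul_left_cancel₀ (X_sub_C_ne_zero s) ?_⟩
  have hd := (h.pos d le_rfl).ne'
  have hroot := h.root
  rw [nodePoly, eval_add, eval_mul, eval_C] at hroot
  rw [h.X_sub_C_mul_nodeQuot, mul_left_comm, hmul, nodePoly,
    eq_neg_of_add_eq_zero_left hroot, mul_sub, ← mul_assoc, ← mul_assoc, ← C_mul, ← C_mul,
    inv_mul_cancel₀ hd, mul_neg, mul_left_comm, inv_mul_cancel₀ hd, mul_one, C_neg, C_1]
  ring

lemma zonalNonneg_nodeQuot (hn : 3 ≤ n) (h : IsLevenshteinNode n d e s) :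
    ZonalNonneg n (nodeQuot n d e s) := by
  obtain ⟨K, hK, -, -, hquot⟩ := h.exists_nodeQuot_eq hn
  exact hquot ▸ hK.C_mul (inv_pos.2 (h.pos d le_rfl)).le

lemma natDegree_nodeQuot_le (hn : 3 ≤ n) (h : IsLevenshteinNode n d e s) :
    (nodeQuot n d e s).natDegree ≤ d := by
  obtain ⟨K, -, hdeg, -, hquot⟩ := h.exists_nodeQuot_eq hn
  exact hquot ▸ (natDegree_C_mul_le _ _).trans hdeg

lemma eval_nodeQuot_pos (hn : 3 ≤ n) (h : IsLevenshteinNode n d e s) :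
    0 < (nodeQuot n d e s).eval s := by
  obtain ⟨K, -, -, hpos, hquot⟩ := h.exists_nodeQuot_eq hn
  rw [hquot, eval_mul, eval_C]
  exact mul_pos (inv_pos.2 (h.pos d le_rfl)) hpos

lemma eval_one_nodeQuot_pos (hn : 1 ≤ n) (h : IsLevenshteinNode n d e s) (hs : s < 1) :
    0 < (nodeQuot n d e s).eval 1 := by
  have hp := eval_nodePoly_pos (d := d) hn h.le_one le_rfl
  rw [← h.X_sub_C_mul_nodeQuot, eval_mul, eval_sub, eval_X, eval_C] at hp
  exact pos_of_mul_pos_right hp (by linarith)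

end IsLevenshteinNode

lemma exists_one_add_X_pow_mul_nodePoly_eq (n d : ℕ) (he : e ≤ 1) :
    ∃ a ≥ 0, ∃ b ≥ 0, a + b = 1 ∧ (1 + X) ^ e * nodePoly n d e =
      C a * kernelPoly n (d + 2) + C b * kernelPoly n (d + 1) := by
  interval_cases e
  · exact ⟨0, le_rfl, 1, zero_le_one, zero_add 1, by simp [nodePoly, kernelPoly]⟩
  · refine ⟨(d + 2) / (2 * d + 2 + n), by positivity, (d + n) / (2 * d + 2 + n), by positivity,
      ?_, ?_⟩
    · field_simp
      ring
    · simpa [nodePoly] using one_add_X_mul_gegenbauer n d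

lemma eval_levenshteinPoly (n d e : ℕ) (s t : ℝ) : (levenshteinPoly n d e s).eval t =
    (1 + t) ^ e * (nodePoly n d e).eval t * (nodeQuot n d e s).eval t := by
  simp [levenshteinPoly]

namespace IsLevenshteinNode

lemma zonalNonneg_levenshteinPoly (hn : 4 ≤ n) (h : IsLevenshteinNode n d e s) :
    ZonalNonneg n (levenshteinPoly n d e s) := by
  obtain ⟨a, ha, b, hb, -, hab⟩ := exists_one_add_X_pow_mul_nodePoly_eq n d h.le_one
  rw [levenshteinPoly, hab]
  exact (((zonalNonneg_kernelPoly (by omega) _).C_mul ha).add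
    ((zonalNonneg_kernelPoly (by omega) _).C_mul hb)).mul hn (h.zonalNonneg_nodeQuot (by omega))

lemma zonalCoeff_zero_levenshteinPoly (hn : 3 ≤ n) (h : IsLevenshteinNode n d e s) :
    zonalCoeff n 0 (levenshteinPoly n d e s) = (nodeQuot n d e s).eval 1 := by
  obtain ⟨a, -, b, -, hab1, hab⟩ := exists_one_add_X_pow_mul_nodePoly_eq n d h.le_one
  have hdeg := h.natDegree_nodeQuot_le hn
  rw [levenshteinPoly, hab, add_mul, map_add, mul_assoc, mul_assoc, zonalCoeff_C_mul,
    zonalCoeff_C_mul, zonalCoeff_zero_kernelPoly_mul hn (by omega),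
    zonalCoeff_zero_kernelPoly_mul hn (by omega), ← add_mul, hab1, one_mul]

end IsLevenshteinNode

end Levenshtein

/-! ### Positive definiteness of zonal polynomials via the Fischer inner product -/

section Fischer

open MvPolynomial
open scoped Matrix

variable {σ : Type*} [Fintype σ] {k n : ℕ}

/-- The linear form `⟨x, ·⟩` as a polynomial. -/
def linForm (x : σ → ℝ) : MvPolynomial σ ℝ := ∑ i, C (x i) * X i

variable (σ) in
/-- The squared Euclidean norm as a polynomial. -/
def normSqPoly : MvPolynomial σ ℝ := ∑ i, X i ^ 2

/-- The derivative of polynomials in the direction `x`. -/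
def dirDeriv (x : σ → ℝ) : Derivation ℝ (MvPolynomial σ ℝ) (MvPolynomial σ ℝ) :=
  ∑ i, x i • pderiv i

variable (σ) in
/-- The Laplace operator on polynomials. -/
def laplacian : MvPolynomial σ ℝ →ₗ[ℝ] MvPolynomial σ ℝ :=
  ∑ i, (pderiv i).toLinearMap ∘ₗ (pderiv i).toLinearMap

lemma dirDeriv_apply (x : σ → ℝ) (p : MvPolynomial σ ℝ) :
    dirDeriv x p = ∑ i, C (x i) * pderiv i p := by
  rw [dirDeriv, ← Derivation.coeFnAddMonoidHom_apply, map_sum, Finset.sum_apply]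
  simp [smul_eq_C_mul]

lemma laplacian_apply (p : MvPolynomial σ ℝ) : laplacian σ p = ∑ i, pderiv i (pderiv i p) := by
  simp [laplacian, LinearMap.sum_apply]

lemma laplacian_C_mul (a : ℝ) (p : MvPolynomial σ ℝ) :
    laplacian σ (C a * p) = C a * laplacian σ p := by
  rw [C_mul', map_smul, C_mul']

lemma dirDeriv_C_mul (x : σ → ℝ) (a : ℝ) (p : MvPolynomial σ ℝ) :
    dirDeriv x (C a * p) = C a * dirDeriv x p := by
  rw [C_mul', Derivation.map_smul, C_mul']

lemma eval_linForm (x y : σ → ℝ) : eval y (linForm x) = x ⬝ᵥ y := by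
  simp [linForm, dotProduct]

lemma eval_normSqPoly (y : σ → ℝ) : eval y (normSqPoly σ) = y ⬝ᵥ y := by
  simp [normSqPoly, dotProduct, sq]

lemma pderiv_linForm (x : σ → ℝ) (i : σ) : pderiv i (linForm x) = C (x i) := by
  classical
  simp [linForm, pderiv_X, Pi.single_apply]

lemma pderiv_normSqPoly (i : σ) : pderiv i (normSqPoly σ) = 2 * X i := by
  classical
  simp [normSqPoly, pderiv_X, Pi.single_apply]

lemma dirDeriv_linForm (x : σ → ℝ) : dirDeriv x (linForm x) = C (x ⬝ᵥ x) := by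
  simp [dirDeriv_apply, pderiv_linForm, dotProduct]

lemma dirDeriv_normSqPoly (x : σ → ℝ) : dirDeriv x (normSqPoly σ) = 2 * linForm x := by
  rw [dirDeriv_apply, linForm, Finset.mul_sum]
  exact Finset.sum_congr rfl fun i _ ↦ by rw [pderiv_normSqPoly, mul_left_comm]

lemma laplacian_linForm_mul (x : σ → ℝ) (p : MvPolynomial σ ℝ) :
    laplacian σ (linForm x * p) = linForm x * laplacian σ p + 2 * dirDeriv x p := by
  simp only [laplacian_apply, dirDeriv_apply, Finset.mul_sum, ← Finset.sum_add_distrib]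
  refine Finset.sum_congr rfl fun i _ ↦ ?_
  rw [pderiv_mul, map_add, pderiv_mul, pderiv_mul, pderiv_linForm, pderiv_C]
  ring

lemma laplacian_normSqPoly_mul {p : MvPolynomial σ ℝ} (hp : p.IsHomogeneous k) :
    laplacian σ (normSqPoly σ * p) =
      normSqPoly σ * laplacian σ p + C (4 * k + 2 * Fintype.card σ : ℝ) * p := by
  have hpderiv (i : σ) : pderiv i (pderiv i (normSqPoly σ * p)) =
      normSqPoly σ * pderiv i (pderiv i p) + 4 * (X i * pderiv i p) + 2 * p := by
    have h2X : pderiv i (2 * X i : MvPolynomial σ ℝ) = 2 := by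
      rw [← map_ofNat C 2, pderiv_C_mul, pderiv_X_self, mul_one]
    rw [pderiv_mul, map_add, pderiv_mul, pderiv_mul, pderiv_normSqPoly, h2X]
    ring
  simp only [laplacian_apply, hpderiv, Finset.sum_add_distrib, ← Finset.mul_sum,
    hp.sum_X_mul_pderiv, Finset.sum_const, Finset.card_univ, nsmul_eq_mul, map_add, map_mul,
    map_natCast, map_ofNat]
  ring

lemma isHomogeneous_linForm (x : σ → ℝ) : (linForm x).IsHomogeneous 1 :=
  .sum _ _ _ fun i _ ↦ by simpa using (isHomogeneous_C σ (x i)).mul (isHomogeneous_X ℝ i)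

lemma isHomogeneous_normSqPoly : (normSqPoly σ).IsHomogeneous 2 :=
  .sum _ _ _ fun i _ ↦ by simpa using (isHomogeneous_X ℝ i).pow 2

variable (σ) in
/-- The Fischer inner product, for which distinct monomials are orthogonal and `X^m` has squared
norm `m!`. Multiplication by `X i` is adjoint to `∂/∂x_i`. -/
def fischer : MvPolynomial σ ℝ →ₗ[ℝ] MvPolynomial σ ℝ →ₗ[ℝ] ℝ :=
  (basisMonomials σ ℝ).constr ℝ fun m ↦ ((∏ i, (m i).factorial : ℕ) : ℝ) • lcoeff ℝ m

lemma fischer_monomial (m : σ →₀ ℕ) (a : ℝ) (q : MvPolynomial σ ℝ) :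
    fischer σ (monomial m a) q = a * (((∏ i, (m i).factorial : ℕ) : ℝ) * coeff m q) := by
  have hone : fischer σ (monomial m 1) = ((∏ i, (m i).factorial : ℕ) : ℝ) • lcoeff ℝ m := by
    have := (basisMonomials σ ℝ).constr_basis ℝ
      (fun m ↦ ((∏ i, (m i).factorial : ℕ) : ℝ) • lcoeff ℝ m) m
    rwa [coe_basisMonomials] at this
  have hmonomial : monomial m a = a • monomial m (1 : ℝ) := by
    rw [smul_monomial, smul_eq_mul, mul_one]
  rw [hmonomial, map_smul, hone]
  simp

lemma fischer_C_mul_left (a : ℝ) (p q : MvPolynomial σ ℝ) :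
    fischer σ (C a * p) q = a * fischer σ p q := by
  rw [C_mul', map_smul, LinearMap.smul_apply, smul_eq_mul]

lemma fischer_C_mul_right (a : ℝ) (p q : MvPolynomial σ ℝ) :
    fischer σ p (C a * q) = a * fischer σ p q := by
  rw [C_mul', map_smul, smul_eq_mul]

lemma fischer_X_mul (i : σ) (p q : MvPolynomial σ ℝ) :
    fischer σ (X i * p) q = fischer σ p (pderiv i q) := by
  classical
  induction p using MvPolynomial.induction_on' with
  | add p r hp hr => simp only [mul_add, map_add, LinearMap.add_apply, hp, hr]
  | monomial m a =>
    have hfact : ∏ j, ((Finsupp.single i 1 + m : σ →₀ ℕ) j).factorial =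
        (m i + 1) * ∏ j, (m j).factorial := by
      rw [← Finset.mul_prod_erase _ _ (Finset.mem_univ i),
        ← Finset.mul_prod_erase _ (fun j ↦ (m j).factorial) (Finset.mem_univ i), ← mul_assoc,
        ← Nat.factorial_succ]
      congr 1
      · simp [add_comm]
      · exact Finset.prod_congr rfl fun j hj ↦ by simp [Finset.ne_of_mem_erase hj]
    rw [X, monomial_mul, one_mul, fischer_monomial, fischer_monomial, coeff_pderiv, hfact,
      add_comm (Finsupp.single i 1) m]
    push_cast
    ring

lemma fischer_self_nonneg (p : MvPolynomial σ ℝ) : 0 ≤ fischer σ p p := by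
  have hsum : fischer σ p p =
      ∑ m ∈ p.support, ((∏ i, (m i).factorial : ℕ) : ℝ) * coeff m p ^ 2 := by
    nth_rw 1 [p.as_sum]
    rw [map_sum, LinearMap.sum_apply]
    exact Finset.sum_congr rfl fun m _ ↦ by rw [fischer_monomial]; ring
  rw [hsum]
  positivity

lemma fischer_linForm_mul (y : σ → ℝ) (p q : MvPolynomial σ ℝ) :
    fischer σ (linForm y * p) q = fischer σ p (dirDeriv y q) := by
  simp only [linForm, dirDeriv_apply, Finset.sum_mul, map_sum, LinearMap.sum_apply, mul_assoc,
    fischer_C_mul_left, fischer_X_mul, fischer_C_mul_right]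

lemma fischer_normSqPoly_mul (p q : MvPolynomial σ ℝ) :
    fischer σ (normSqPoly σ * p) q = fischer σ p (laplacian σ q) := by
  simp only [normSqPoly, laplacian_apply, Finset.sum_mul, map_sum, LinearMap.sum_apply, sq,
    mul_assoc, fischer_X_mul]

lemma fischer_linForm_pow (y : σ → ℝ) {q : MvPolynomial σ ℝ} (hq : q.IsHomogeneous k) :
    fischer σ (linForm y ^ k) q = k.factorial * eval y q := by
  induction k generalizing q with
  | zero =>
    rw [← totalDegree_zero_iff_isHomogeneous, totalDegree_eq_zero_iff_eq_C] at hq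
    rw [pow_zero, hq, ← C_1, ← monomial_zero', fischer_monomial]
    simp
  | succ k ih =>
    have hhom : (dirDeriv y q).IsHomogeneous k := by
      rw [dirDeriv_apply]
      refine .sum _ _ _ fun i _ ↦ ?_
      simpa using (isHomogeneous_C σ (y i)).mul (hq.pderiv (i := i))
    have heuler : eval y (dirDeriv y q) = (k + 1) * eval y q := by
      have := congrArg (eval y) hq.sum_X_mul_pderiv
      simpa [dirDeriv_apply] using this
    rw [pow_succ', fischer_linForm_mul, ih hhom, heuler, Nat.factorial_succ]
    push_cast
    ring

/-- The homogenization `|y|^k p_k(⟨x, y⟩ / |y|)` of the zonal polynomial of degree `k`, for `x` on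
the unit sphere. It is harmonic in `y`. -/
def zonalHarmonic (x : Fin n → ℝ) : ℕ → MvPolynomial (Fin n) ℝ
  | 0 => 1
  | 1 => linForm x
  | k + 2 => linForm x * zonalHarmonic x (k + 1) -
      C (recCoeff n (k + 1)) * (normSqPoly (Fin n) * zonalHarmonic x k)

lemma isHomogeneous_zonalHarmonic (x : Fin n → ℝ) (k : ℕ) :
    (zonalHarmonic x k).IsHomogeneous k := by
  induction k using Nat.twoStepInduction with
  | zero => exact isHomogeneous_one (Fin n) ℝ
  | one => exact isHomogeneous_linForm x
  | more k ih ih' =>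
    rw [zonalHarmonic]
    refine .sub ?_ ?_
    · rw [show k + 2 = 1 + (k + 1) by ring]
      exact (isHomogeneous_linForm x).mul ih'
    · rw [show k + 2 = 0 + (2 + k) by ring]
      exact (isHomogeneous_C (Fin n) _).mul (isHomogeneous_normSqPoly.mul ih)

lemma one_add_recCoeff_mul (hn : 3 ≤ n) (k : ℕ) :
    1 + recCoeff n (k + 1) * (2 * k + n - 2) = recCoeff n (k + 2) * (2 * (k + 1) + n) := by
  have hn' : (3 : ℝ) ≤ n := mod_cast hn
  have h₁ : recCoeff n (k + 1) * (2 * k + n - 2) = (k + 1) * (k + n - 2) / (2 * k + n) := by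
    rw [recCoeff_succ, ← div_div, div_mul_cancel₀]
    linarith [k.cast_nonneg (α := ℝ)]
  have h₂ : recCoeff n (k + 2) * (2 * (k + 1) + n) = (k + 2) * (k + n - 1) / (2 * k + n) := by
    rw [recCoeff_succ]
    push_cast
    rw [show (2 * (k + 1) + n - 2 : ℝ) = 2 * k + n by ring]
    field_simp
    ring
  rw [h₁, h₂]
  field_simp
  ring

/-- The last two conjuncts, lowering and raising relations for the directional derivative, are what
makes the induction go through. -/
lemma zonalHarmonic_relations (hn : 3 ≤ n) {x : Fin n → ℝ} (hx : x ⬝ᵥ x = 1) (k : ℕ) :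
    laplacian (Fin n) (zonalHarmonic x k) = 0 ∧
    laplacian (Fin n) (zonalHarmonic x (k + 1)) = 0 ∧
    dirDeriv x (zonalHarmonic x (k + 1)) =
      C (recCoeff n (k + 1) * (2 * k + n)) * zonalHarmonic x k ∧
    C (2 * k + n - 2 : ℝ) * zonalHarmonic x (k + 1) =
      C (2 * k + n - 2 : ℝ) * (linForm x * zonalHarmonic x k) -
        normSqPoly (Fin n) * dirDeriv x (zonalHarmonic x k) := by
  induction k with
  | zero =>
    have hn₀ : (n : ℝ) ≠ 0 := by positivity
    refine ⟨by simp [zonalHarmonic, laplacian_apply],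
      by simp [zonalHarmonic, laplacian_apply, pderiv_linForm], ?_, by simp [zonalHarmonic]⟩
    simp [zonalHarmonic, dirDeriv_linForm, hx, recCoeff_one hn, hn₀]
  | succ k ih =>
    obtain ⟨hlap, hlap', hlower, hraise⟩ := ih
    refine ⟨hlap', ?_, ?_, ?_⟩
    · rw [zonalHarmonic, map_sub, laplacian_linForm_mul, laplacian_C_mul,
        laplacian_normSqPoly_mul (isHomogeneous_zonalHarmonic x k), hlap, hlap', hlower,
        Fintype.card_fin]
      simp only [C_mul, C_add, map_ofNat, map_natCast]
      ring
    · have hsplit : C (1 + recCoeff n (k + 1) * (2 * k + n - 2)) * zonalHarmonic x (k + 1) =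
          zonalHarmonic x (k + 1) +
            C (recCoeff n (k + 1)) * (C (2 * k + n - 2 : ℝ) * zonalHarmonic x (k + 1)) := by
        rw [C_add, C_mul, C_1]
        ring
      push_cast
      rw [← one_add_recCoeff_mul hn, hsplit, hraise, zonalHarmonic, map_sub, dirDeriv_C_mul]
      simp only [Derivation.leibniz, smul_eq_mul, dirDeriv_normSqPoly, dirDeriv_linForm, hx, hlower,
        C_mul, C_add, C_sub, C_1, map_ofNat, map_natCast]
      ring
    · have : recCoeff n (k + 1) * (2 * k + n) =
          recCoeff n (k + 1) * (2 * (k + 1 : ℕ) + n - 2) := by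
        push_cast
        ring
      rw [hlower, this, zonalHarmonic, C_mul]
      ring

lemma exists_linForm_pow_eq (y : Fin n → ℝ) (k : ℕ) :
    ∃ g, linForm y ^ k = zonalHarmonic y k + normSqPoly (Fin n) * g := by
  match k with
  | 0 => exact ⟨0, by simp [zonalHarmonic]⟩
  | 1 => exact ⟨0, by simp [zonalHarmonic]⟩
  | k + 2 =>
    obtain ⟨g, hg⟩ := exists_linForm_pow_eq y (k + 1)
    refine ⟨C (recCoeff n (k + 1)) * zonalHarmonic y k + linForm y * g, ?_⟩
    rw [pow_succ', hg, zonalHarmonic]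
    ring

lemma eval_zonalHarmonic (x : Fin n → ℝ) {y : Fin n → ℝ} (hy : y ⬝ᵥ y = 1) (k : ℕ) :
    eval y (zonalHarmonic x k) = (zonalPoly n k).eval (x ⬝ᵥ y) := by
  induction k using Nat.twoStepInduction with
  | zero => simp [zonalHarmonic, zonalPoly]
  | one => simp [zonalHarmonic, zonalPoly, eval_linForm]
  | more k ih ih' => simp [zonalHarmonic, zonalPoly, eval_linForm, eval_normSqPoly, hy, ih, ih']

lemma fischer_zonalHarmonic (hn : 3 ≤ n) {x y : Fin n → ℝ} (hx : x ⬝ᵥ x = 1) (hy : y ⬝ᵥ y = 1)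
    (k : ℕ) : fischer (Fin n) (zonalHarmonic y k) (zonalHarmonic x k) =
      k.factorial * (zonalPoly n k).eval (x ⬝ᵥ y) := by
  obtain ⟨g, hg⟩ := exists_linForm_pow_eq y k
  have hpow := fischer_linForm_pow y (isHomogeneous_zonalHarmonic x k)
  rwa [hg, map_add, LinearMap.add_apply, fischer_normSqPoly_mul,
    (zonalHarmonic_relations hn hx k).1, map_zero, add_zero, eval_zonalHarmonic x hy] at hpow

lemma zonalPoly_posSemidef (hn : 3 ≤ n) {ι : Type*} {s : Finset ι} {x : ι → Fin n → ℝ}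
    (hx : ∀ i ∈ s, x i ⬝ᵥ x i = 1) (w : ι → ℝ) (k : ℕ) :
    0 ≤ ∑ i ∈ s, ∑ j ∈ s, w i * w j * (zonalPoly n k).eval (x i ⬝ᵥ x j) := by
  have hsq : fischer (Fin n) (∑ i ∈ s, C (w i) * zonalHarmonic (x i) k)
        (∑ i ∈ s, C (w i) * zonalHarmonic (x i) k) =
      k.factorial * ∑ i ∈ s, ∑ j ∈ s, w i * w j * (zonalPoly n k).eval (x i ⬝ᵥ x j) := by
    rw [map_sum (fischer _), LinearMap.sum_apply, Finset.mul_sum]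
    refine Finset.sum_congr rfl fun i hi ↦ ?_
    rw [map_sum, Finset.mul_sum]
    refine Finset.sum_congr rfl fun j hj ↦ ?_
    rw [fischer_C_mul_left, fischer_C_mul_right, fischer_zonalHarmonic hn (hx j hj) (hx i hi),
      dotProduct_comm]
    ring
  have hpos := fischer_self_nonneg (∑ i ∈ s, C (w i) * zonalHarmonic (x i) k)
  rw [hsq] at hpos
  exact nonneg_of_mul_nonneg_right hpos (mod_cast k.factorial_pos)

lemma ZonalNonneg.posSemidef (hn : 3 ≤ n) {f : Polynomial ℝ} (hf : ZonalNonneg n f) {ι : Type*}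
    {s : Finset ι} {x : ι → Fin n → ℝ} (hx : ∀ i ∈ s, x i ⬝ᵥ x i = 1) (w : ι → ℝ) :
    0 ≤ ∑ i ∈ s, ∑ j ∈ s, w i * w j * f.eval (x i ⬝ᵥ x j) := by
  obtain ⟨t, ht⟩ := exists_eq_sum_zonalPoly n f
  have hsum : ∑ i ∈ s, ∑ j ∈ s, w i * w j * f.eval (x i ⬝ᵥ x j) =
      ∑ k ∈ t, zonalCoeff n k f *
        ∑ i ∈ s, ∑ j ∈ s, w i * w j * (zonalPoly n k).eval (x i ⬝ᵥ x j) := by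
    conv_lhs => rw [ht]
    simp only [Polynomial.eval_finsetSum, Polynomial.eval_mul, Polynomial.eval_C, Finset.mul_sum]
    simp_rw [Finset.sum_comm (t := t)]
    exact Finset.sum_congr rfl fun _ _ ↦ Finset.sum_congr rfl fun _ _ ↦
      Finset.sum_congr rfl fun _ _ ↦ by ring
  rw [hsum]
  exact Finset.sum_nonneg fun k _ ↦ mul_nonneg (hf k) (zonalPoly_posSemidef hn hx w k)

lemma ZonalNonneg.sub_C_zonalCoeff_zero {f : Polynomial ℝ} (hf : ZonalNonneg n f) :
    ZonalNonneg n (f - Polynomial.C (zonalCoeff n 0 f)) := fun k ↦ by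
  have hC : zonalCoeff n k (Polynomial.C (zonalCoeff n 0 f)) =
      if 0 = k then zonalCoeff n 0 f else 0 := by
    rw [← mul_one (Polynomial.C _), zonalCoeff_C_mul, show (1 : Polynomial ℝ) = zonalPoly n 0 from
      rfl, zonalCoeff_zonalPoly, mul_ite, mul_one, mul_zero]
  rw [map_sub, hC]
  split_ifs with hk
  · rw [← hk, sub_self]
  · rw [sub_zero]
    exact hf k

lemma ZonalNonneg.zonalCoeff_zero_mul_sq_le (hn : 3 ≤ n) {f : Polynomial ℝ}
    (hf : ZonalNonneg n f) {ι : Type*} {s : Finset ι} {x : ι → EuclideanSpace ℝ (Fin n)}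
    (hx : ∀ i ∈ s, ‖x i‖ = 1) (w : ι → ℝ) : zonalCoeff n 0 f * (∑ i ∈ s, w i) ^ 2 ≤
      ∑ i ∈ s, ∑ j ∈ s, w i * w j * f.eval (inner ℝ (x i) (x j)) := by
  have hinner (i j : ι) : inner ℝ (x i) (x j) = (x i).ofLp ⬝ᵥ (x j).ofLp := by
    rw [EuclideanSpace.inner_eq_star_dotProduct, star_trivial, dotProduct_comm]
  have hpos := hf.sub_C_zonalCoeff_zero.posSemidef hn (s := s) (x := fun i ↦ (x i).ofLp)
    (fun i hi ↦ by rw [← hinner, real_inner_self_eq_norm_sq, hx i hi, one_pow]) w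
  simp only [← hinner, Polynomial.eval_sub, Polynomial.eval_C, mul_sub, Finset.sum_sub_distrib,
    ← Finset.sum_mul, ← Finset.mul_sum] at hpos
  linarith

end Fischer

/-! ### Jacobi polynomials as Gegenbauer polynomials -/

section Jacobi

open PowerSeries

variable {n : ℕ}

lemma genBinom_eq_choose (a : ℝ) (k : ℕ) : genBinom a k = Ring.choose a k := by
  rw [Ring.choose_eq_smul, ← Polynomial.eval₂_smulOneHom_eq_smeval, ← Polynomial.eval_map,
    descPochhammer_map, descPochhammer_eval_eq_prod_range, smul_eq_mul, ← div_eq_inv_mul, genBinom]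

lemma succ_mul_genBinom_succ (a : ℝ) (k : ℕ) :
    (k + 1) * genBinom a (k + 1) = a * genBinom (a - 1) k := by
  have hprod : ∏ i ∈ Finset.range k, (a - (i + 1 : ℕ)) = ∏ i ∈ Finset.range k, (a - 1 - i) :=
    Finset.prod_congr rfl fun i _ ↦ by push_cast; ring
  rw [genBinom, genBinom, Finset.prod_range_succ', hprod, Nat.factorial_succ]
  push_cast
  field_simp
  ring

/-- The binomial series `(1 + y X)^A`. -/
def binomPow (y A : ℝ) : ℝ⟦X⟧ := rescale y (PowerSeries.binomialSeries ℝ A)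

lemma coeff_binomPow (y A : ℝ) (k : ℕ) : coeff k (binomPow y A) = genBinom A k * y ^ k := by
  simp [binomPow, genBinom_eq_choose, mul_comm]

lemma binomPow_eq_mul (y A : ℝ) : binomPow y A = (1 + C y * X) * binomPow y (A - 1) := by
  have hone : PowerSeries.binomialSeries ℝ (1 : ℝ) = 1 + X := by
    simpa using binomialSeries_nat (R := ℝ) (A := ℝ) 1
  nth_rw 1 [binomPow, ← add_sub_cancel 1 A, binomialSeries_add, map_mul, hone]
  rw [map_add, map_one, rescale_X, binomPow]

lemma derivative_binomPow (y A : ℝ) : d⁄dX ℝ (binomPow y A) = C (A * y) * binomPow y (A - 1) := by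
  ext k
  rw [coeff_derivative, coeff_C_mul, coeff_binomPow, coeff_binomPow]
  linear_combination y ^ (k + 1) * succ_mul_genBinom_succ A k

lemma jacobiP_eq_coeff (α β : ℝ) (d : ℕ) (x : ℝ) : jacobiP α β d x =
    coeff d (binomPow ((x + 1) / 2) (d + α) * binomPow ((x - 1) / 2) (d + β)) := by
  rw [mul_comm, coeff_mul, Finset.Nat.sum_antidiagonal_eq_sum_range_succ_mk, jacobiP]
  refine Finset.sum_congr rfl fun s _ ↦ ?_
  rw [coeff_binomPow, coeff_binomPow]
  ring

/-- The series `(1 + x X + (x² - 1)/4 X²)^A`; by Rodrigues' formula its `d`-th coefficient at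
`A = d + α` is the Jacobi polynomial of degree `d` and index `(α, α)`. -/
def rodriguesSeries (A x : ℝ) : ℝ⟦X⟧ := binomPow ((x + 1) / 2) A * binomPow ((x - 1) / 2) A

lemma rodriguesSeries_eq_mul (A x : ℝ) : rodriguesSeries A x =
    (1 + C x * X + C ((x ^ 2 - 1) / 4) * X ^ 2) * rodriguesSeries (A - 1) x := by
  have hx : x = (x + 1) / 2 + (x - 1) / 2 := by ring
  have hmul : (x ^ 2 - 1) / 4 = (x + 1) / 2 * ((x - 1) / 2) := by ring
  rw [rodriguesSeries, binomPow_eq_mul, binomPow_eq_mul ((x - 1) / 2), rodriguesSeries, hmul]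
  nth_rw 5 [hx]
  simp only [map_add, map_mul]
  ring

lemma derivative_rodriguesSeries (A x : ℝ) : d⁄dX ℝ (rodriguesSeries A x) =
    C A * ((C x + C ((x ^ 2 - 1) / 2) * X) * rodriguesSeries (A - 1) x) := by
  have hx : x = (x + 1) / 2 + (x - 1) / 2 := by ring
  have hmul : (x ^ 2 - 1) / 2 = 2 * ((x + 1) / 2 * ((x - 1) / 2)) := by ring
  rw [rodriguesSeries, Derivation.leibniz, derivative_binomPow, derivative_binomPow,
    binomPow_eq_mul _ A, binomPow_eq_mul _ A, rodriguesSeries, hmul]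
  nth_rw 9 [hx]
  simp only [map_add, map_mul, smul_eq_mul, map_ofNat]
  ring

lemma coeff_X_mul_derivative (f : ℝ⟦X⟧) (j : ℕ) : coeff j (X * d⁄dX ℝ f) = j * coeff j f := by
  match j with
  | 0 => simp
  | j + 1 => rw [coeff_succ_X_mul, coeff_derivative, mul_comm, Nat.cast_succ]

lemma succ_mul_coeff_rodriguesSeries (A x : ℝ) (j : ℕ) :
    (j + 1) * coeff (j + 1) (rodriguesSeries A x) =
      A * (x * coeff j (rodriguesSeries (A - 1) x) +
        (x ^ 2 - 1) / 2 * coeff j (X * rodriguesSeries (A - 1) x)) := by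
  have h := congrArg (coeff j) (derivative_rodriguesSeries A x)
  rw [add_mul, mul_assoc (C _) X, coeff_derivative] at h
  simp only [coeff_C_mul, map_add] at h
  rw [mul_comm, h]

lemma two_mul_sub_mul_coeff_rodriguesSeries (A x : ℝ) (j : ℕ) :
    (2 * A - j) * coeff j (rodriguesSeries A x) =
      A * (2 * coeff j (rodriguesSeries (A - 1) x) +
        x * coeff j (X * rodriguesSeries (A - 1) x)) := by
  have hseries : C (2 * A) * rodriguesSeries A x - X * d⁄dX ℝ (rodriguesSeries A x) =
      C A * (C 2 * rodriguesSeries (A - 1) x + C x * (X * rodriguesSeries (A - 1) x)) := by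
    have hsq : (x ^ 2 - 1) / 2 = 2 * ((x ^ 2 - 1) / 4) := by ring
    rw [derivative_rodriguesSeries, rodriguesSeries_eq_mul A, hsq]
    simp only [map_mul, map_ofNat]
    ring
  have h := congrArg (coeff j) hseries
  rw [map_sub, coeff_X_mul_derivative] at h
  simp only [coeff_C_mul, map_add] at h
  rw [sub_mul, h]

lemma coeff_rodriguesSeries_rec (A x : ℝ) (j : ℕ) :
    (2 * A - j) * ((j + 2) * coeff (j + 2) (rodriguesSeries (A + 1) x)) =
      (A + 1) * ((2 * A + 1) * (x * coeff (j + 1) (rodriguesSeries A x)) -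
        A * coeff j (rodriguesSeries (A - 1) x)) := by
  have h₁ := succ_mul_coeff_rodriguesSeries (A + 1) x (j + 1)
  have h₂ := two_mul_sub_mul_coeff_rodriguesSeries A x j
  have h₃ := succ_mul_coeff_rodriguesSeries A x j
  rw [coeff_succ_X_mul, add_sub_cancel_right] at h₁
  push_cast at h₁
  linear_combination (2 * A - j) * h₁ + (A + 1) * (x ^ 2 - 1) / 2 * h₂ - (A + 1) * x * h₃

/-- The ratio of the Jacobi polynomial of degree `d` and index `α = β = (n-1)/2` to
`gegenbauer n d`. -/
def jacobiScale (n d : ℕ) : ℝ := ∏ i ∈ Finset.range d, (i + 1 + ((n : ℝ) - 1) / 2) / (i + n)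

lemma jacobiScale_pos (hn : 1 ≤ n) (d : ℕ) : 0 < jacobiScale n d := by
  have hn' : (1 : ℝ) ≤ n := mod_cast hn
  refine Finset.prod_pos fun i _ ↦ div_pos ?_ (by positivity)
  linarith [(i.cast_nonneg : (0 : ℝ) ≤ i)]

lemma jacobiScale_succ_mul (hn : 1 ≤ n) (d : ℕ) :
    jacobiScale n (d + 1) * (d + n) = jacobiScale n d * (d + 1 + ((n : ℝ) - 1) / 2) := by
  rw [jacobiScale, Finset.prod_range_succ, mul_assoc, div_mul_cancel₀ _ (by positivity),
    jacobiScale]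

lemma coeff_rodriguesSeries (hn : 1 ≤ n) (x : ℝ) (d : ℕ) :
    coeff d (rodriguesSeries (d + ((n : ℝ) - 1) / 2) x) =
      jacobiScale n d * (gegenbauer n d).eval x := by
  have hzero (A : ℝ) : coeff 0 (rodriguesSeries A x) = 1 := by
    simp [rodriguesSeries, coeff_mul, coeff_binomPow, genBinom]
  induction d using Nat.twoStepInduction with
  | zero => simpa [jacobiScale, gegenbauer] using hzero _
  | one =>
    have h := succ_mul_coeff_rodriguesSeries (1 + ((n : ℝ) - 1) / 2) x 0
    rw [hzero, coeff_zero_X_mul] at h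
    have hscale := jacobiScale_succ_mul hn 0
    simp only [gegenbauer, Polynomial.eval_mul, Polynomial.eval_C, Polynomial.eval_X,
      jacobiScale, Finset.range_zero, Finset.prod_empty] at hscale ⊢
    push_cast at h hscale ⊢
    linear_combination h - x * hscale
  | more d ih ih' =>
    have hrec := coeff_rodriguesSeries_rec (d + 1 + ((n : ℝ) - 1) / 2) x d
    have hscale := jacobiScale_succ_mul hn d
    have hscale' := jacobiScale_succ_mul hn (d + 1)
    push_cast at hscale' ih'
    rw [show (d + 1 + ((n : ℝ) - 1) / 2 - 1) = d + ((n : ℝ) - 1) / 2 by ring, ih, ih',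
      show (d + 1 + ((n : ℝ) - 1) / 2 + 1) = (d + 2 : ℕ) + ((n : ℝ) - 1) / 2 by push_cast; ring]
      at hrec
    push_cast at hrec ⊢
    have hne : ((d + 1 + n : ℝ) * (d + 2)) ≠ 0 := by positivity
    refine mul_left_cancel₀ hne ?_
    linear_combination hrec -
      (d + 2) * (gegenbauer n (d + 2)).eval x * hscale' +
      (d + 2 + ((n : ℝ) - 1) / 2) * (gegenbauer n d).eval x * hscale -
      jacobiScale n (d + 1) * (d + 2 + ((n : ℝ) - 1) / 2) * gegenbauer_rec n d x

lemma jacobiP_eq_gegenbauer (hn : 1 ≤ n) (d : ℕ) (x : ℝ) :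
    jacobiP (((n : ℝ) - 3) / 2 + 1) (((n : ℝ) - 3) / 2 + 1) d x =
      jacobiScale n d * (gegenbauer n d).eval x := by
  rw [jacobiP_eq_coeff, show ((n : ℝ) - 3) / 2 + 1 = ((n : ℝ) - 1) / 2 by ring,
    ← coeff_rodriguesSeries hn, rodriguesSeries]

lemma jacobiP_eq_kernelPoly (hn : 1 ≤ n) (d : ℕ) (x : ℝ) :
    jacobiP (((n : ℝ) - 3) / 2 + 1) (((n : ℝ) - 3) / 2) (d + 1) x =
      jacobiScale n d / 2 * (kernelPoly n (d + 1)).eval x := by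
  set A : ℝ := (d + 1 : ℕ) + ((n : ℝ) - 1) / 2 with hA
  have hApos : 0 < A := by
    have hn' : (1 : ℝ) ≤ n := mod_cast hn
    rw [hA]
    push_cast
    linarith [(d.cast_nonneg : (0 : ℝ) ≤ d)]
  have hfactor : binomPow ((x + 1) / 2) A * binomPow ((x - 1) / 2) (A - 1) =
      rodriguesSeries (A - 1) x + C ((x + 1) / 2) * (X * rodriguesSeries (A - 1) x) := by
    rw [binomPow_eq_mul, rodriguesSeries]
    ring
  have hcoeff := two_mul_sub_mul_coeff_rodriguesSeries A x (d + 1)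
  have hd : coeff d (rodriguesSeries (A - 1) x) =
      jacobiScale n d * (gegenbauer n d).eval x := by
    rw [show A - 1 = d + ((n : ℝ) - 1) / 2 by rw [hA]; push_cast; ring]
    exact coeff_rodriguesSeries hn x d
  rw [hA, coeff_rodriguesSeries hn, ← hA, coeff_succ_X_mul, hd] at hcoeff
  have hscale := jacobiScale_succ_mul hn d
  rw [jacobiP_eq_coeff, show ((d + 1 : ℕ) : ℝ) + (((n : ℝ) - 3) / 2 + 1) = A by rw [hA]; ring,
    show ((d + 1 : ℕ) : ℝ) + ((n : ℝ) - 3) / 2 = A - 1 by rw [hA]; ring, hfactor, map_add,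
    coeff_C_mul, coeff_succ_X_mul, hd, kernelPoly, Polynomial.eval_add]
  refine mul_left_cancel₀ hApos.ne' ?_
  rw [hA] at hcoeff ⊢
  push_cast at hcoeff hscale ⊢
  linear_combination -hcoeff / 2 + (gegenbauer n (d + 1)).eval x / 2 * hscale

end Jacobi

/-! ### Bounds for the largest root -/

section Roots

open Polynomial

variable {n d e k : ℕ} {s : ℝ}

lemma exists_largest_root {p : ℝ → ℝ} (hp : Continuous p) {a b : ℝ} (ha : p a < 0)
    (hb : ∀ z, b ≤ z → 0 < p z) : ∃ r, a < r ∧ r < b ∧ p r = 0 ∧ ∀ z, r < z → 0 < p z := by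
  have hab : a < b := lt_of_not_ge fun h ↦ (hb a h).not_gt ha
  have hcompact : IsCompact (Set.Icc a b ∩ {z | p z ≤ 0}) :=
    isCompact_Icc.inter_right (isClosed_le hp continuous_const)
  obtain ⟨r, ⟨⟨har, hrb⟩, hr : p r ≤ 0⟩, hmax⟩ :=
    hcompact.exists_isGreatest ⟨a, ⟨le_rfl, hab.le⟩, ha.le⟩
  have hgt (z : ℝ) (hz : r < z) : 0 < p z := by
    by_contra! hneg
    exact hz.not_ge (hmax ⟨⟨har.trans hz.le, le_of_not_ge fun h ↦ (hb z h).not_ge hneg⟩, hneg⟩)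
  have hroot : p r = 0 := by
    refine hr.antisymm (ge_of_tendsto (hp.continuousWithinAt (s := Set.Ioi r)) ?_)
    filter_upwards [self_mem_nhdsWithin] with z hz using (hgt z hz).le
  exact ⟨r, har.lt_of_ne (by rintro rfl; exact ha.ne hroot),
    lt_of_not_ge fun h ↦ (hb r h).ne' hroot, hroot, hgt⟩

/-- At a root of `gegenbauer n (d + 1)` the recurrence makes `gegenbauer n (d + 2)` have the sign
opposite to that of `gegenbauer n d`. -/
lemma eval_gegenbauer_add_two_neg (hn : 1 ≤ n) (hs : (gegenbauer n (d + 1)).eval s = 0)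
    (hpos : 0 < (gegenbauer n d).eval s) : (gegenbauer n (d + 2)).eval s < 0 := by
  have hrec := gegenbauer_rec n d s
  rw [hs, mul_zero, mul_zero, zero_sub] at hrec
  have hprod : 0 < (d + n) * (gegenbauer n d).eval s := by positivity
  exact neg_of_mul_neg_right (by linarith) (by positivity : (0 : ℝ) ≤ d + 2)

lemma exists_isLevenshteinNode (hn : 1 ≤ n) (d : ℕ) (he : e ≤ 1) :
    ∃ s < 1, IsLevenshteinNode n d e s ∧
      ∀ z, s < z → 0 < (nodePoly n d e).eval z ∧ ∀ k ≤ d, 0 < (gegenbauer n k).eval z := by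
  have he' : (e : ℝ) ≤ 1 := mod_cast he
  have hn' : (0 : ℝ) < n := mod_cast hn
  induction d generalizing e with
  | zero =>
    have heval (z : ℝ) : (nodePoly n 0 e).eval z = n * z + (1 - e) := by
      simp [eval_nodePoly, gegenbauer]
    have hone (z : ℝ) (k : ℕ) (hk : k ≤ 0) : 0 < (gegenbauer n k).eval z := by
      simp [Nat.le_zero.1 hk, gegenbauer]
    refine ⟨(e - 1) / n, (div_nonpos_of_nonpos_of_nonneg (by linarith) hn'.le).trans_lt one_pos,
      ⟨he, hone _, ?_⟩, fun z hz ↦ ⟨?_, hone z⟩⟩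
    · rw [heval, mul_div_cancel₀ _ hn'.ne']
      ring
    · rw [div_lt_iff₀' hn'] at hz
      linarith [heval z]
  | succ d ih =>
    obtain ⟨a, -, ha, hgt⟩ := ih le_rfl (by simp)
    have hroot : (gegenbauer n (d + 1)).eval a = 0 := by simpa [eval_nodePoly] using ha.root
    have hneg : (nodePoly n (d + 1) e).eval a < 0 := by
      simpa [eval_nodePoly, hroot] using eval_gegenbauer_add_two_neg hn hroot (ha.pos d le_rfl)
    obtain ⟨r, har, hr1, hr, hrgt⟩ := exists_largest_root (nodePoly n (d + 1) e).continuous hneg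
      fun z ↦ eval_nodePoly_pos hn he
    have hpos (z : ℝ) (hz : a < z) (k : ℕ) (hk : k ≤ d + 1) : 0 < (gegenbauer n k).eval z := by
      rcases Nat.le_succ_iff.1 hk with hk | rfl
      · exact (hgt z hz).2 k hk
      · simpa [eval_nodePoly] using (hgt z hz).1
    exact ⟨r, hr1, ⟨he, hpos r har, hr⟩, fun z hz ↦ ⟨hrgt z hz, hpos z (har.trans hz)⟩⟩

lemma exists_jacobiP_eq_nodePoly (hn : 1 ≤ n) (d : ℕ) (he : e ≤ 1) : ∃ c > 0, ∀ x,
    jacobiP (((n : ℝ) - 3) / 2 + 1) (((n : ℝ) - 3) / 2 + e) (d + 1) x =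
      c * (nodePoly n d e).eval x := by
  interval_cases e
  · exact ⟨_, half_pos (jacobiScale_pos hn d), fun x ↦ by
      simpa [nodePoly, kernelPoly] using jacobiP_eq_kernelPoly hn d x⟩
  · exact ⟨_, jacobiScale_pos hn (d + 1), fun x ↦ by
      simpa [nodePoly] using jacobiP_eq_gegenbauer hn (d + 1) x⟩

lemma isLevenshteinNode_maxRoot_and_lt_one (hn : 1 ≤ n) (d : ℕ) (he : e ≤ 1) :
    IsLevenshteinNode n d e (maxRoot (((n : ℝ) - 3) / 2 + 1) (((n : ℝ) - 3) / 2 + e) (d + 1)) ∧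
      maxRoot (((n : ℝ) - 3) / 2 + 1) (((n : ℝ) - 3) / 2 + e) (d + 1) < 1 := by
  obtain ⟨s, hs1, hs, hgt⟩ := exists_isLevenshteinNode hn d he
  obtain ⟨c, hc, hjacobi⟩ := exists_jacobiP_eq_nodePoly hn d he
  have hmax : maxRoot (((n : ℝ) - 3) / 2 + 1) (((n : ℝ) - 3) / 2 + e) (d + 1) = s := by
    refine IsGreatest.csSup_eq ⟨?_, fun x (hx : jacobiP _ _ _ x = 0) ↦ ?_⟩
    · rw [Set.mem_ofPred_eq, hjacobi, hs.root, mul_zero]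
    · by_contra! hlt
      exact (mul_pos hc (hgt x hlt).1).ne' (hjacobi x ▸ hx)
  exact hmax ▸ ⟨hs, hs1⟩

lemma recCoeff_add_two (hn : 2 ≤ n) (hk : 1 ≤ k) :
    4 * recCoeff (n + 2) k = 1 - n * (n - 2) / ((2 * k + n) * (2 * k + n - 2)) := by
  rw [four_mul_recCoeff (by omega) hk]
  push_cast
  ring_nf

lemma gegenbauerLead_pos (hn : 1 ≤ n) (k : ℕ) : 0 < gegenbauerLead n k :=
  Finset.prod_pos fun _ _ ↦ by positivity

lemma gegenbauer_eq_C_mul_zonalPoly (hn : 1 ≤ n) (k : ℕ) :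
    gegenbauer n k = C (gegenbauerLead n k) * zonalPoly (n + 2) k := by
  induction k using Nat.twoStepInduction with
  | zero => simp [gegenbauer, gegenbauerLead, zonalPoly]
  | one => simp [gegenbauer, gegenbauerLead, zonalPoly]
  | more k ih ih' =>
    have hlead : gegenbauerLead n (k + 2) =
        (2 * k + 2 + n) / (k + 2) * gegenbauerLead n (k + 1) := by
      rw [gegenbauerLead_succ n (k + 1)]
      push_cast
      ring
    have hrec : gegenbauerLead n (k + 2) * recCoeff (n + 2) (k + 1) =
        (k + n) / (k + 2) * gegenbauerLead n k := by
      rw [hlead, gegenbauerLead_succ, recCoeff_succ]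
      push_cast
      rw [show (2 * k + (n + 2) - 2 : ℝ) = 2 * k + n by ring]
      have hk : (2 * k + n : ℝ) ≠ 0 := by positivity
      field_simp
      ring
    rw [gegenbauer, ih, ih', zonalPoly, mul_sub, ← mul_assoc (C _) (C (recCoeff _ _)), ← C_mul,
      hrec, hlead, C_mul, C_mul]
    ring

/-- The ratio of consecutive zonal polynomials; the recurrence turns into a continued fraction
whose positivity controls the largest root. -/
def zonalRatio (n : ℕ) (s : ℝ) (k : ℕ) : ℝ := (zonalPoly n (k + 1)).eval s / (zonalPoly n k).eval s

lemma zonalRatio_zero (n : ℕ) (s : ℝ) : zonalRatio n s 0 = s := by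
  simp [zonalRatio, zonalPoly]

lemma zonalRatio_pos (h : 0 < (zonalPoly n k).eval s) (h' : 0 < (zonalPoly n (k + 1)).eval s) :
    0 < zonalRatio n s k :=
  div_pos h' h

lemma zonalRatio_succ (h : (zonalPoly n (k + 1)).eval s ≠ 0) :
    zonalRatio n s (k + 1) = s - recCoeff n (k + 1) / zonalRatio n s k := by
  rw [zonalRatio, zonalRatio, zonalPoly, eval_sub, eval_mul, eval_mul, eval_X, eval_C, sub_div,
    mul_div_cancel_right₀ _ h, div_div_eq_mul_div]

lemma zonalRatio_le (hn : 3 ≤ n) (hpos : ∀ j ≤ k, 0 < (zonalPoly n j).eval s) :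
    zonalRatio n s k ≤ s := by
  match k with
  | 0 => exact (zonalRatio_zero n s).le
  | k + 1 =>
    have hk := hpos k (by omega)
    have hk' := hpos (k + 1) le_rfl
    rw [zonalRatio_succ hk'.ne']
    exact sub_le_self _ (div_nonneg (recCoeff_nonneg hn _) (zonalRatio_pos hk hk').le)

lemma sub_div_le_sub {γ γ' u : ℝ} (hγ : γ ≤ γ') (hu : 0 < u) (hu1 : u ≤ 1)
    (hδ : 0 ≤ γ - s ^ 2 / 4) : s - γ' / u ≤ u - (γ - s ^ 2 / 4) := by
  rw [sub_le_iff_le_add, ← sub_le_iff_le_add', le_div_iff₀ hu]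
  nlinarith [sq_nonneg (u - s / 2), mul_nonneg hδ (sub_nonneg.2 hu1)]

/-- If `γ_{j+1}` exceeded `s²/4` by more than `1/m`, then the ratios would become negative within
`m` steps. -/
lemma four_mul_recCoeff_sub_le_sq (hn : 4 ≤ n) (hs : s ≤ 1) {j m : ℕ} (hm : 1 ≤ m)
    (hpos : ∀ k ≤ j + m + 1, 0 < (zonalPoly n k).eval s) :
    4 * recCoeff n (j + 1) - 4 / m ≤ s ^ 2 := by
  by_contra! hlt
  have hm' : (0 : ℝ) < m := mod_cast hm
  set δ := recCoeff n (j + 1) - s ^ 2 / 4 with hδ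
  have hδm : 1 < δ * m := by
    have : 4 / (m : ℝ) < 4 * δ := by linarith
    rw [div_lt_iff₀ hm'] at this
    linarith
  have hδ0 : 0 < δ := pos_of_mul_pos_left (one_pos.trans hδm) hm'.le
  have hdec (i : ℕ) (hi : i ≤ m) : zonalRatio n s (j + i) ≤ 1 - i * δ := by
    induction i with
    | zero => simpa using (zonalRatio_le (by omega) fun k hk ↦ hpos k (by omega)).trans hs
    | succ i ih =>
      have hk := hpos (j + i) (by omega)
      have hk' := hpos (j + i + 1) (by omega)
      have hstep : zonalRatio n s (j + i + 1) ≤ zonalRatio n s (j + i) - δ := by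
        rw [zonalRatio_succ hk'.ne']
        exact sub_div_le_sub (recCoeff_mono hn (by omega)) (zonalRatio_pos hk hk')
          ((zonalRatio_le (by omega) fun k hk ↦ hpos k (by omega)).trans hs) hδ0.le
      rw [← add_assoc]
      push_cast
      linarith [ih (by omega)]
  have hlast := zonalRatio_pos (hpos (j + m) (by omega)) (hpos (j + m + 1) le_rfl)
  linarith [hdec m le_rfl]

lemma sq_le_four_mul_recCoeff (hn : 4 ≤ n) (hs : 0 ≤ s)
    (hpos : ∀ k ≤ d, 0 < (zonalPoly n k).eval s) (hneg : (zonalPoly n (d + 1)).eval s ≤ 0) :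
    s ^ 2 ≤ 4 * recCoeff n d := by
  by_contra! hlt
  have hs0 : 0 < s := by
    refine hs.lt_of_ne ?_
    rintro rfl
    linarith [recCoeff_nonneg (by omega : 3 ≤ n) d]
  have hratio (k : ℕ) (hk : k ≤ d) : s / 2 ≤ zonalRatio n s k := by
    induction k with
    | zero => linarith [zonalRatio_zero n s]
    | succ k ih =>
      have ih := ih (by omega)
      have hdiv : recCoeff n (k + 1) / zonalRatio n s k ≤ s / 2 := by
        rw [div_le_iff₀ (by linarith)]
        nlinarith [recCoeff_mono hn hk]
      rw [zonalRatio_succ (hpos (k + 1) hk).ne']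
      linarith
  have hnonpos : zonalRatio n s d ≤ 0 :=
    div_nonpos_of_nonpos_of_nonneg hneg (hpos d le_rfl).le
  linarith [hratio d le_rfl]

/-- The asymptotic value of the square of the largest root of `gegenbauer n d`, which is also the
square of the turning point of its differential equation. -/
def turningPointSq (n d : ℕ) : ℝ := 1 - (n / (2 * d + n)) ^ 2

lemma turningPointSq_add_le (hn : 1 ≤ n) (d i : ℕ) :
    turningPointSq n (d + i) ≤ turningPointSq n d + 4 * i / n := by
  have hn' : (0 : ℝ) < n := mod_cast hn
  set x : ℝ := n / (2 * d + n) with hx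
  set y : ℝ := n / (2 * (d + i : ℕ) + n) with hy
  have hx1 : x ≤ 1 := div_le_one_of_le₀ (by linarith [d.cast_nonneg (α := ℝ)]) (by positivity)
  have hyx : y ≤ x := by
    rw [hx, hy]
    push_cast
    gcongr
    exact le_add_of_nonneg_right i.cast_nonneg
  have hsub : x - y ≤ 2 * i / n := by
    rw [hx, hy, div_sub_div _ _ (by positivity) (by positivity),
      div_le_div_iff₀ (by positivity) hn']
    push_cast
    have : (0 : ℝ) ≤ 2 * i * (4 * d * (d + i + n) + 2 * i * n) := by positivity
    linarith
  have hy0 : 0 ≤ y := by positivity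
  have hsq : x ^ 2 - y ^ 2 ≤ 2 * (x - y) := by nlinarith only [hyx, hx1, hy0]
  have hdiv : 4 * (i : ℝ) / n = 2 * (2 * i / n) := by ring
  rw [turningPointSq, turningPointSq, ← hx, ← hy, hdiv]
  linarith

lemma turningPointSq_le_four_mul_recCoeff (hn : 2 ≤ n) (hd : 1 ≤ d) :
    turningPointSq n d ≤ 4 * recCoeff (n + 2) d := by
  have hn' : (2 : ℝ) ≤ n := mod_cast hn
  have hd' : (1 : ℝ) ≤ d := mod_cast hd
  rw [recCoeff_add_two hn hd, turningPointSq, div_pow]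
  gcongr ?_ - ?_
  rw [div_le_div_iff₀ (mul_pos (by linarith) (by linarith)) (by positivity)]
  nlinarith [mul_nonneg (mul_nonneg n.cast_nonneg (by positivity : (0 : ℝ) ≤ 2 * d + n))
    (by positivity : (0 : ℝ) ≤ d)]

lemma four_mul_recCoeff_le_turningPointSq (hn : 2 ≤ n) (d : ℕ) :
    4 * recCoeff (n + 2) d ≤ turningPointSq n (d + 1) + 2 / n := by
  have hn' : (2 : ℝ) ≤ n := mod_cast hn
  rcases d.eq_zero_or_pos with rfl | hd
  · have hle : ((n : ℝ) / (2 + n)) ^ 2 ≤ 1 :=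
      pow_le_one₀ (by positivity) (div_le_one_of_le₀ (by linarith) (by positivity))
    have hdiv : (0 : ℝ) ≤ 2 / n := by positivity
    simp only [recCoeff, turningPointSq]
    norm_num
    linarith
  have hd' : (1 : ℝ) ≤ d := mod_cast hd
  rw [recCoeff_add_two hn hd, turningPointSq]
  push_cast
  set N : ℝ := 2 * (d + 1) + n with hN
  rw [show 2 * d + n = N - 2 by rw [hN]; ring]
  have hnN : (n : ℝ) ≤ N := by linarith
  have hmono : (n : ℝ) * (n - 2) / N ^ 2 ≤ n * (n - 2) / ((N - 2) * (N - 2 - 2)) :=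
    div_le_div_of_nonneg_left (mul_nonneg (by linarith) (by linarith))
      (mul_pos (by linarith) (by linarith)) (by nlinarith)
  have hsplit : (n : ℝ) * (n - 2) / N ^ 2 = (n / N) ^ 2 - 2 * n / N ^ 2 := by
    rw [div_pow]
    ring
  have hsmall : 2 * n / N ^ 2 ≤ 2 / (n : ℝ) := by
    rw [div_le_div_iff₀ (by positivity) (by positivity)]
    linarith [mul_self_le_mul_self n.cast_nonneg hnN]
  linarith

namespace IsLevenshteinNode

lemma eval_zonalPoly_pos (hn : 1 ≤ n) (h : IsLevenshteinNode n d e s) (hk : k ≤ d) :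
    0 < (zonalPoly (n + 2) k).eval s := by
  have hpos := h.pos k hk
  rw [gegenbauer_eq_C_mul_zonalPoly hn, eval_mul, eval_C] at hpos
  exact pos_of_mul_pos_right hpos (gegenbauerLead_pos hn k).le

lemma eval_zonalPoly_succ_nonpos (hn : 1 ≤ n) (h : IsLevenshteinNode n d e s) :
    (zonalPoly (n + 2) (d + 1)).eval s ≤ 0 := by
  have he : (e : ℝ) ≤ 1 := mod_cast h.le_one
  have hroot := h.root
  have hprod := mul_nonneg (sub_nonneg.2 he) (h.pos d le_rfl).le
  rw [eval_nodePoly, gegenbauer_eq_C_mul_zonalPoly hn (d + 1), eval_mul, eval_C] at hroot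
  exact nonpos_of_mul_nonpos_right (by linarith) (gegenbauerLead_pos hn (d + 1))

lemma turningPointSq_sub_le_sq (hn : 2 ≤ n) (h : IsLevenshteinNode n d e s) (hs : s ≤ 1) {m : ℕ}
    (hm : 1 ≤ m) : turningPointSq n (d + 1) - 4 * (m + 1) / n - 4 / m ≤ s ^ 2 := by
  have hn' : (n : ℝ) ≠ 0 := by positivity
  have hm' : (0 : ℝ) ≤ 4 / m := by positivity
  rcases le_or_gt d m with hd | hd
  · have hadd := turningPointSq_add_le (by omega : 1 ≤ n) 0 (d + 1)
    have hzero : turningPointSq n 0 = 0 := by simp [turningPointSq, hn']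
    have hdm : 4 * ((d + 1 : ℕ) : ℝ) / n ≤ 4 * (m + 1) / n := by
      push_cast
      gcongr
    rw [zero_add, hzero, zero_add] at hadd
    linarith [sq_nonneg s]
  · obtain ⟨j, rfl⟩ : ∃ j, d = j + m + 1 := ⟨d - m - 1, by omega⟩
    have hadd := turningPointSq_add_le (by omega : 1 ≤ n) (j + 1) (m + 1)
    have hle := turningPointSq_le_four_mul_recCoeff hn (by omega : 1 ≤ j + 1)
    have hroot := four_mul_recCoeff_sub_le_sq (by omega : 4 ≤ n + 2) hs hm
      fun k hk ↦ h.eval_zonalPoly_pos (by omega) hk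
    rw [show j + m + 1 + 1 = j + 1 + (m + 1) by ring]
    push_cast at hadd
    linarith

lemma sq_le_turningPointSq_add (hn : 2 ≤ n) (h : IsLevenshteinNode n d e s) (hs : 0 ≤ s) :
    s ^ 2 ≤ turningPointSq n (d + 1) + 2 / n :=
  (sq_le_four_mul_recCoeff (by omega) hs (fun _ hk ↦ h.eval_zonalPoly_pos (by omega) hk)
    (h.eval_zonalPoly_succ_nonpos (by omega))).trans (four_mul_recCoeff_le_turningPointSq hn d)

end IsLevenshteinNode

lemma half_le_maxRoot (hn : 200 ≤ n) :
    1 / 2 ≤ maxRoot (((n : ℝ) - 3) / 2 + 1) (((n : ℝ) - 3) / 2 + 1) n := by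
  obtain ⟨d, hd⟩ : ∃ d, d + 1 = n := ⟨n - 1, by omega⟩
  have hn' : (200 : ℝ) ≤ n := mod_cast hn
  obtain ⟨h, h1⟩ := isLevenshteinNode_maxRoot_and_lt_one (by omega : 1 ≤ n) d le_rfl
  rw [hd, Nat.cast_one] at h h1
  set s := maxRoot (((n : ℝ) - 3) / 2 + 1) (((n : ℝ) - 3) / 2 + 1) n
  have hlower := h.turningPointSq_sub_le_sq (by omega) h1.le (by norm_num : 1 ≤ 20)
  have hturning : turningPointSq n n = 8 / 9 := by
    have hn0 : (n : ℝ) ≠ 0 := by positivity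
    rw [turningPointSq]
    field_simp
    norm_num
  have hfrac : 4 * ((20 : ℕ) + 1 : ℝ) / n ≤ 42 / 100 := by
    rw [div_le_div_iff₀ (by linarith) (by norm_num)]
    norm_num
    linarith
  have hs : 0 < s := by
    have hpos := h.pos 1 (by omega)
    simp only [gegenbauer, eval_mul, eval_C, eval_X] at hpos
    exact pos_of_mul_pos_right hpos (by positivity)
  rw [hd, hturning] at hlower
  norm_num at hlower hfrac
  exact le_of_sq_le_sq (by linarith) hs.le

lemma one_le_levD_and_cos_le_maxRoot (hn : 200 ≤ n) {θ : ℝ} (hθ : cos θ ≤ 1 / 2) :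
    1 ≤ levD n θ ∧
      cos θ ≤ maxRoot (((n : ℝ) - 3) / 2 + 1) (((n : ℝ) - 3) / 2 + 1) (levD n θ) :=
  Nat.sInf_mem
    (s := {d | 1 ≤ d ∧ cos θ ≤ maxRoot (((n : ℝ) - 3) / 2 + 1) (((n : ℝ) - 3) / 2 + 1) d})
    ⟨n, by omega, hθ.trans (half_le_maxRoot hn)⟩

lemma exists_isLevenshteinNode_MLev_eq (hn : 200 ≤ n) {θ : ℝ} (hθ : cos θ ≤ 1 / 2) :
    ∃ (d e : ℕ) (s : ℝ), IsLevenshteinNode n d e s ∧ cos θ ≤ s ∧ s < 1 ∧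
      MLev n θ = (1 + 1) ^ e * (nodePoly n d e).eval 1 := by
  obtain ⟨hd, hcos⟩ := one_le_levD_and_cos_le_maxRoot hn hθ
  obtain ⟨d, hd⟩ : ∃ d, levD n θ = d + 1 := ⟨levD n θ - 1, by omega⟩
  rw [hd] at hcos
  rw [MLev, hd]
  split_ifs with hif
  · obtain ⟨h, h1⟩ := isLevenshteinNode_maxRoot_and_lt_one (by omega : 1 ≤ n) d le_rfl
    rw [Nat.cast_one] at h h1
    refine ⟨d, 1, _, h, hcos, h1, ?_⟩
    rw [eval_nodePoly, eval_one_gegenbauer (by omega)]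
    norm_num
  · obtain ⟨h, h1⟩ := isLevenshteinNode_maxRoot_and_lt_one (by omega : 1 ≤ n) d zero_le_one
    rw [Nat.cast_zero, add_zero] at h h1
    refine ⟨d, 0, _, h, not_lt.1 hif, h1, ?_⟩
    rw [eval_nodePoly, eval_one_gegenbauer (by omega), eval_one_gegenbauer (by omega),
      show d + 1 + n - 2 = d + n - 1 by omega]
    norm_num

end Roots

/-! ### Behaviour near the node -/

section NearNode

open Polynomial

variable {n d e : ℕ} {s t : ℝ}

lemma derivative_gegenbauer_rec (n k : ℕ) (t : ℝ) :
    (k + 2) * (derivative (gegenbauer n (k + 2))).eval t =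
      (2 * k + 2 + n) * ((gegenbauer n (k + 1)).eval t +
        t * (derivative (gegenbauer n (k + 1))).eval t) -
      (k + n) * (derivative (gegenbauer n k)).eval t := by
  have hrec : C (k + 2 : ℝ) * gegenbauer n (k + 2) =
      C (2 * k + 2 + n : ℝ) * (X * gegenbauer n (k + 1)) - C (k + n : ℝ) * gegenbauer n k :=
    Polynomial.funext fun x ↦ by simpa using gegenbauer_rec n k x
  simpa [derivative_mul] using congrArg (fun p ↦ (derivative p).eval t) hrec

lemma one_sub_sq_mul_derivative_gegenbauer (n k : ℕ) (t : ℝ) :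
    (1 - t ^ 2) * (derivative (gegenbauer n k)).eval t =
      (k + n) * t * (gegenbauer n k).eval t - (k + 1) * (gegenbauer n (k + 1)).eval t := by
  induction k using Nat.twoStepInduction with
  | zero => simp [gegenbauer]
  | one =>
    have hrec := gegenbauer_rec n 0 t
    simp only [gegenbauer, zero_add, eval_one, eval_mul, eval_C, eval_X, derivative_mul,
      derivative_C, derivative_X, zero_mul, mul_one] at hrec ⊢
    push_cast at hrec ⊢
    linear_combination hrec
  | more k ih ih' =>
    have hderiv := derivative_gegenbauer_rec n k t
    have hrec := gegenbauer_rec n k t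
    have hrec' := gegenbauer_rec n (k + 1) t
    push_cast at hrec' ih' ⊢
    refine mul_left_cancel₀ (by positivity : (k : ℝ) + 2 ≠ 0) ?_
    linear_combination (1 - t ^ 2) * hderiv + (2 * k + 2 + n : ℝ) * t * ih' - (k + n : ℝ) * ih -
      (k + n : ℝ) * t * hrec + (k + 2 : ℝ) * hrec'

lemma one_sub_sq_mul_derivative_gegenbauer_succ (n k : ℕ) (t : ℝ) :
    (1 - t ^ 2) * (derivative (gegenbauer n (k + 1))).eval t =
      -(k + 1) * t * (gegenbauer n (k + 1)).eval t + (k + n) * (gegenbauer n k).eval t := by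
  have hderiv := one_sub_sq_mul_derivative_gegenbauer n (k + 1) t
  push_cast at hderiv
  linear_combination hderiv - gegenbauer_rec n k t

lemma gegenbauer_ode (n k : ℕ) (ht : 1 - t ^ 2 ≠ 0) :
    (1 - t ^ 2) * (derivative (derivative (gegenbauer n k))).eval t =
      (n + 1) * t * (derivative (gegenbauer n k)).eval t -
        k * (k + n) * (gegenbauer n k).eval t := by
  rcases k with _ | k
  · simp [gegenbauer]
  have hpoly : (1 - X ^ 2) * derivative (gegenbauer n (k + 1)) =
      C (-(k + 1 : ℝ)) * (X * gegenbauer n (k + 1)) + C (k + n : ℝ) * gegenbauer n k :=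
    Polynomial.funext fun x ↦ by
      have hx := one_sub_sq_mul_derivative_gegenbauer_succ n k x
      simp only [eval_mul, eval_sub, eval_one, eval_pow, eval_X, eval_add, eval_C]
      linear_combination hx
  have hderiv := congrArg (fun p ↦ (derivative p).eval t) hpoly
  simp only [derivative_mul, derivative_sub, derivative_one, derivative_X_pow, derivative_X,
    derivative_C, derivative_add, eval_mul, eval_sub, eval_one, eval_pow, eval_X, eval_add, eval_C,
    eval_zero] at hderiv
  refine mul_left_cancel₀ ht ?_
  push_cast at hderiv ⊢
  linear_combination (1 - t ^ 2) * hderiv +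
    (k + n : ℝ) * one_sub_sq_mul_derivative_gegenbauer n k t -
    (k + n : ℝ) * t * one_sub_sq_mul_derivative_gegenbauer_succ n k t

/-- The coefficient of the first derivative in the differential equation of `nodePoly n d e`. -/
def nodeDrift (n e : ℕ) (t : ℝ) : ℝ := (n + e) * t + (1 - e)

lemma nodePoly_ode (n d : ℕ) (he : e ≤ 1) (ht : 1 - t ^ 2 ≠ 0) :
    (1 - t ^ 2) * (derivative (derivative (nodePoly n d e))).eval t =
      nodeDrift n e t * (derivative (nodePoly n d e)).eval t -
        (d + 1) * (d + n + e) * (nodePoly n d e).eval t := by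
  have hsucc := gegenbauer_ode n (d + 1) ht
  push_cast at hsucc
  simp only [nodePoly, nodeDrift, derivative_add, derivative_mul, derivative_C, eval_add, eval_mul,
    eval_C, zero_mul, zero_add]
  interval_cases e
  · have ht' : 1 + t ≠ 0 := fun h ↦ ht (by linear_combination (1 - t) * h)
    refine mul_left_cancel₀ ht' ?_
    push_cast
    linear_combination (1 + t) * hsucc + (1 + t) * gegenbauer_ode n d ht -
      one_sub_sq_mul_derivative_gegenbauer_succ n d t - one_sub_sq_mul_derivative_gegenbauer n d t
  · push_cast
    linear_combination hsucc

/-- The Liouville factor `(1 - t)^((n+1)/4) (1 + t)^((n-1+2e)/4)`: multiplication by it removes the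
first-order term from the differential equation of `nodePoly n d e`. -/
def liouvilleFactor (n e : ℕ) (t : ℝ) : ℝ :=
  exp ((n + 1) / 4 * log (1 - t) + (n - 1 + 2 * e) / 4 * log (1 + t))

/-- The potential `V` in the normal form `φ'' = V φ` of the differential equation of
`nodePoly n d e`, where `φ = nodePoly n d e * liouvilleFactor n e`. -/
def liouvillePotential (n d e : ℕ) (t : ℝ) : ℝ :=
  (nodeDrift n e t ^ 2 - 2 * (n + e) * (1 - t ^ 2) - 4 * t * nodeDrift n e t -
    4 * ((d + 1) * (d + n + e)) * (1 - t ^ 2)) / (4 * (1 - t ^ 2) ^ 2)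

lemma one_sub_sq_pos (ht : |t| < 1) : 0 < 1 - t ^ 2 := sub_pos.2 ((sq_lt_one_iff_abs_lt_one t).2 ht)

lemma hasDerivAt_liouvilleFactor (n e : ℕ) (ht : |t| < 1) :
    HasDerivAt (liouvilleFactor n e)
      (-nodeDrift n e t / (2 * (1 - t ^ 2)) * liouvilleFactor n e t) t := by
  obtain ⟨ht₁, ht₂⟩ := abs_lt.1 ht
  have hsub : 1 - t ≠ 0 := by linarith
  have hadd : 1 + t ≠ 0 := by linarith
  have hlog_sub : HasDerivAt (fun t ↦ log (1 - t)) (-1 / (1 - t)) t :=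
    ((hasDerivAt_id t).const_sub 1).log hsub
  have hlog_add : HasDerivAt (fun t ↦ log (1 + t)) (1 / (1 + t)) t :=
    ((hasDerivAt_id t).const_add 1).log hadd
  refine ((hlog_sub.const_mul _).add (hlog_add.const_mul _)).exp.congr_deriv ?_
  rw [mul_comm, nodeDrift, show 1 - t ^ 2 = (1 - t) * (1 + t) by ring]
  refine congrArg₂ _ ?_ rfl
  field_simp
  ring

lemma hasDerivAt_neg_nodeDrift_div (n e : ℕ) (ht : 1 - t ^ 2 ≠ 0) :
    HasDerivAt (fun t ↦ -nodeDrift n e t / (2 * (1 - t ^ 2)))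
      (-((n + e) * (1 - t ^ 2) + 2 * t * nodeDrift n e t) / (2 * (1 - t ^ 2) ^ 2)) t := by
  have hdrift : HasDerivAt (fun t ↦ -nodeDrift n e t) (-((n + e) * 1)) t :=
    (((hasDerivAt_id t).const_mul (n + e : ℝ)).add_const (1 - e : ℝ)).neg
  have hden : HasDerivAt (fun t : ℝ ↦ 2 * (1 - t ^ 2)) (2 * -(2 * t)) t := by
    simpa using ((hasDerivAt_pow 2 t).const_sub 1).const_mul 2
  refine (hdrift.div hden (mul_ne_zero two_ne_zero ht)).congr_deriv ?_
  field_simp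
  ring

lemma hasDerivAt_nodePoly_mul_liouvilleFactor (n d e : ℕ) (ht : |t| < 1) :
    HasDerivAt (fun t ↦ (nodePoly n d e).eval t * liouvilleFactor n e t)
      (((derivative (nodePoly n d e)).eval t +
        -nodeDrift n e t / (2 * (1 - t ^ 2)) * (nodePoly n d e).eval t) *
          liouvilleFactor n e t) t :=
  (((nodePoly n d e).hasDerivAt t).mul (hasDerivAt_liouvilleFactor n e ht)).congr_deriv (by ring)

lemma hasDerivAt_deriv_nodePoly_mul_liouvilleFactor (n d : ℕ) (he : e ≤ 1) (ht : |t| < 1) :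
    HasDerivAt (fun t ↦ ((derivative (nodePoly n d e)).eval t +
        -nodeDrift n e t / (2 * (1 - t ^ 2)) * (nodePoly n d e).eval t) * liouvilleFactor n e t)
      (liouvillePotential n d e t * ((nodePoly n d e).eval t * liouvilleFactor n e t)) t := by
  have ht' := (one_sub_sq_pos ht).ne'
  have hode := nodePoly_ode n d he ht'
  refine ((((derivative (nodePoly n d e)).hasDerivAt t).add
    ((hasDerivAt_neg_nodeDrift_div n e ht').mul ((nodePoly n d e).hasDerivAt t))).mul
    (hasDerivAt_liouvilleFactor n e ht)).congr_deriv ?_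
  rw [mul_comm, ← eq_div_iff ht'] at hode
  simp only [Pi.add_apply, Pi.mul_apply]
  rw [hode, liouvillePotential]
  field_simp
  ring

/-- A solution of `f'' = V f` vanishing at `s` is nearly linear on intervals short compared with
`|V|^(-1/2)`. -/
lemma abs_sub_deriv_mul_sub_le {f f' f'' : ℝ → ℝ} {s r V ε : ℝ} (hV : 0 ≤ V)
    (hf : ∀ t, |t - s| ≤ r → HasDerivAt f (f' t) t)
    (hf' : ∀ t, |t - s| ≤ r → HasDerivAt f' (f'' t) t)
    (hf'' : ∀ t, |t - s| ≤ r → |f'' t| ≤ V * |f t|)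
    (h0 : f s = 0) (hVε : V * r ^ 2 ≤ ε) (hε : ε ≤ 1 / 2) (ht : |t - s| ≤ r) :
    |f t - f' s * (t - s)| ≤ 2 * ε * |f' s| * |t - s| := by
  have hr := (abs_nonneg _).trans ht
  have hs : |s - s| ≤ r := by simpa using hr
  have hball {x : ℝ} : x ∈ Metric.closedBall s r ↔ |x - s| ≤ r := by
    rw [Metric.mem_closedBall, dist_eq]
  have mean_value {g g' : ℝ → ℝ} {C x : ℝ} (hg : ∀ y, |y - s| ≤ r → HasDerivAt g (g' y) y)
      (hC : ∀ y, |y - s| ≤ r → |g' y| ≤ C) (hx : |x - s| ≤ r) : |g x - g s| ≤ C * |x - s| :=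
    (convex_closedBall s r).norm_image_sub_le_of_norm_hasDerivWithin_le
      (fun y hy ↦ (hg y (hball.1 hy)).hasDerivWithinAt) (fun y hy ↦ hC y (hball.1 hy))
      (hball.2 hs) (hball.2 hx)
  obtain ⟨t₀, ht₀, hmax⟩ := (isCompact_closedBall s r).exists_isMaxOn ⟨s, hball.2 hs⟩
    (fun x hx ↦ (hf' x (hball.1 hx)).continuousAt.continuousWithinAt.abs :
      ContinuousOn (fun x ↦ |f' x|) (Metric.closedBall s r))
  set K := |f' t₀|
  have hK : 0 ≤ K := abs_nonneg _
  have hfK (x : ℝ) (hx : |x - s| ≤ r) : |f x| ≤ K * r := by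
    have hmv := mean_value hf (fun y hy ↦ hmax (hball.2 hy)) hx
    rw [h0, sub_zero] at hmv
    exact hmv.trans (by gcongr)
  have hf'K (x : ℝ) (hx : |x - s| ≤ r) : |f' x - f' s| ≤ ε * K := by
    calc |f' x - f' s| ≤ V * (K * r) * |x - s| :=
          mean_value hf' (fun y hy ↦ (hf'' y hy).trans (by gcongr; exact hfK y hy)) hx
      _ ≤ V * (K * r) * r := by gcongr
      _ = V * r ^ 2 * K := by ring
      _ ≤ ε * K := by gcongr
  have hK_le : K ≤ 2 * |f' s| := by
    have htri := abs_sub_abs_le_abs_sub (f' t₀) (f' s)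
    linarith [hf'K t₀ (hball.1 ht₀), mul_le_mul_of_nonneg_right hε hK]
  have hε0 : 0 ≤ ε := (by positivity : 0 ≤ V * r ^ 2).trans hVε
  have hmv := mean_value (g := fun x ↦ f x - f' s * (x - s)) (g' := fun x ↦ f' x - f' s * 1)
    (fun x hx ↦ (hf x hx).sub (((hasDerivAt_id x).sub_const s).const_mul (f' s)))
    (by simpa using hf'K) ht
  simp only [h0, sub_self, mul_zero, sub_zero] at hmv
  refine hmv.trans (mul_le_mul_of_nonneg_right ?_ (abs_nonneg _))
  linarith [mul_le_mul_of_nonneg_left hK_le hε0]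

lemma liouvillePotential_remainder {n k : ℝ} (hn : 1 ≤ n) (hk : 0 ≤ k) (hkn : k ≤ n / 4)
    (he : e ≤ 1) (ht : |t| ≤ 3 / 4) :
    |2 * n * t * (e * t + (1 - e)) + (e * t + (1 - e)) ^ 2 + 4 * k * (1 - e) * (1 - t ^ 2) -
      2 * (n + e) * (1 - t ^ 2) - 4 * t * ((n + e) * t + (1 - e))| ≤ 10 * n := by
  have hsq : t ^ 2 ≤ 9 / 16 := by
    rw [← sq_abs]
    exact (pow_le_pow_left₀ (abs_nonneg t) ht 2).trans (by norm_num)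
  obtain ⟨ht₁, ht₂⟩ := abs_le.1 ht
  interval_cases e
  · rw [abs_le]
    push_cast
    constructor <;> nlinarith [sq_nonneg t, mul_le_mul_of_nonneg_left hsq hk,
      mul_nonneg hk (sq_nonneg t)]
  · rw [abs_le]
    push_cast
    constructor <;> nlinarith [sq_nonneg t]

lemma sq_le_two_mul_sq_of_turningPointSq_le (hΓ : turningPointSq n d ≤ 1 / 2) :
    (2 * d + n : ℝ) ^ 2 ≤ 2 * n ^ 2 := by
  rcases n.eq_zero_or_pos with rfl | hn
  · norm_num [turningPointSq] at hΓ
  have hdiv : 1 / 2 ≤ (n : ℝ) ^ 2 / (2 * d + n) ^ 2 := by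
    rw [turningPointSq, div_pow] at hΓ
    linarith
  rw [le_div_iff₀ (by positivity)] at hdiv
  linarith

lemma abs_liouvillePotential_le {g : ℝ} (hn : 1 ≤ n) (he : e ≤ 1) (ht : |t| ≤ 3 / 4)
    (hΓ : turningPointSq n (d + 1) ≤ 1 / 2) (hg : |t ^ 2 - turningPointSq n (d + 1)| ≤ g) :
    |liouvillePotential n d e t| ≤ 4 / 3 * (2 * n ^ 2 * g + 10 * n) := by
  have hn' : (1 : ℝ) ≤ n := mod_cast hn
  have hd := sq_le_two_mul_sq_of_turningPointSq_le hΓ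
  set k : ℝ := ((d + 1 : ℕ) : ℝ) with hk
  have hk0 : 0 ≤ k := Nat.cast_nonneg _
  have hkn : k ≤ n / 4 := by nlinarith
  have hmain : |(2 * k + n) ^ 2 * (t ^ 2 - turningPointSq n (d + 1))| ≤ 2 * n ^ 2 * g := by
    rw [abs_mul, abs_of_nonneg (sq_nonneg _)]
    gcongr
  have hnum : nodeDrift n e t ^ 2 - 2 * (n + e) * (1 - t ^ 2) - 4 * t * nodeDrift n e t -
      4 * ((d + 1) * (d + n + e)) * (1 - t ^ 2) =
      (2 * k + n) ^ 2 * (t ^ 2 - turningPointSq n (d + 1)) +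
      (2 * n * t * (e * t + (1 - e)) + (e * t + (1 - e)) ^ 2 + 4 * k * (1 - e) * (1 - t ^ 2) -
        2 * (n + e) * (1 - t ^ 2) - 4 * t * ((n + e) * t + (1 - e))) := by
    have hsum : 2 * k + n ≠ 0 := by positivity
    have hturn : (2 * k + n) ^ 2 * (t ^ 2 - turningPointSq n (d + 1)) =
        (2 * k + n) ^ 2 * t ^ 2 - (2 * k + n) ^ 2 + n ^ 2 := by
      rw [turningPointSq, ← hk]
      field_simp
      ring
    rw [hturn, nodeDrift, hk]
    push_cast
    ring
  have hden : 3 / 4 ≤ 4 * (1 - t ^ 2) ^ 2 := by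
    have hsq : t ^ 2 ≤ 9 / 16 := by
      rw [← sq_abs]
      exact (pow_le_pow_left₀ (abs_nonneg t) ht 2).trans (by norm_num)
    nlinarith
  have hg0 : 0 ≤ g := (abs_nonneg _).trans hg
  rw [liouvillePotential, hnum, abs_div, abs_of_pos (by linarith : 0 < 4 * (1 - t ^ 2) ^ 2),
    div_le_iff₀ (by linarith)]
  calc _ ≤ 2 * n ^ 2 * g + 10 * n := (abs_add_le _ _).trans
        (add_le_add hmain (liouvillePotential_remainder hn' hk0 hkn he ht))
    _ = 4 / 3 * (2 * n ^ 2 * g + 10 * n) * (3 / 4) := by ring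
    _ ≤ _ := by gcongr

lemma eventually_div_natCast_le (a : ℝ) {ε : ℝ} (hε : 0 < ε) : ∀ᶠ n : ℕ in atTop, a / n ≤ ε :=
  (tendsto_const_div_atTop_nhds_zero_nat a).eventually_le_const hε

lemma abs_sq_sub_sq_le {δ : ℝ} (hs : |s| ≤ 1) (hδ : δ ≤ 1) (ht : |t - s| ≤ δ) :
    |t ^ 2 - s ^ 2| ≤ 3 * δ := by
  rw [sq_sub_sq, abs_mul]
  have hadd : |t + s| ≤ 3 := by
    rw [show t + s = t - s + (s + s) by ring]
    linarith [abs_add_le (t - s) (s + s), abs_add_le s s]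
  exact mul_le_mul hadd ht (abs_nonneg _) (by norm_num)

lemma eventually_abs_sq_sub_turningPointSq_le (B : ℝ) {g : ℝ} (hg : 0 < g) :
    ∀ᶠ n : ℕ in atTop, ∀ (d e : ℕ) (s : ℝ), IsLevenshteinNode n d e s → 0 ≤ s → s ≤ 1 →
      ∀ t, |t - s| ≤ B / n → |t ^ 2 - turningPointSq n (d + 1)| ≤ g := by
  obtain ⟨m, hm, hm1⟩ :=
    ((eventually_div_natCast_le 4 (half_pos (half_pos hg))).and (eventually_ge_atTop 1)).exists
  filter_upwards [eventually_ge_atTop 2, eventually_div_natCast_le B one_pos,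
    eventually_div_natCast_le B (by positivity : 0 < g / 12),
    eventually_div_natCast_le (4 * (m + 1)) (half_pos hg),
    eventually_div_natCast_le 2 (half_pos hg)] with n hn hB hBg hmn h2n d e s h hs0 hs1 t ht
  obtain ⟨hsq₁, hsq₂⟩ := abs_le.1 (abs_sq_sub_sq_le (abs_le.2 ⟨by linarith, hs1⟩) hB ht)
  have hlower := h.turningPointSq_sub_le_sq hn hs1 hm1
  have hupper := h.sq_le_turningPointSq_add hn hs0
  exact abs_le.2 ⟨by linarith, by linarith⟩

lemma eventually_abs_liouvillePotential_le (B : ℝ) {ε : ℝ} (hε : 0 < ε) :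
    ∀ᶠ n : ℕ in atTop, ∀ (d e : ℕ) (s : ℝ), IsLevenshteinNode n d e s → 0 ≤ s → s ≤ 5 / 8 →
      ∀ t, |t - s| ≤ B / n → |t| ≤ 3 / 4 ∧ |liouvillePotential n d e t| ≤ ε * n ^ 2 := by
  filter_upwards [eventually_ge_atTop 1,
    eventually_div_natCast_le B (by norm_num : (0 : ℝ) < 1 / 8),
    eventually_div_natCast_le 40 hε,
    eventually_abs_sq_sub_turningPointSq_le 0 (by norm_num : (0 : ℝ) < 1 / 16),
    eventually_abs_sq_sub_turningPointSq_le B (by positivity : 0 < ε / 4)]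
    with n hn hB h40 hΓ hg d e s h hs0 hs t ht
  have hn' : (0 : ℝ) < n := mod_cast hn
  obtain ⟨ht₁, ht₂⟩ := abs_le.1 ht
  have ht' : |t| ≤ 3 / 4 := abs_le.2 ⟨by linarith, by linarith⟩
  have hΓ' : turningPointSq n (d + 1) ≤ 1 / 2 := by
    have hΓs := abs_le.1 (hΓ d e s h hs0 (by linarith) s (by simp))
    nlinarith
  refine ⟨ht', (abs_liouvillePotential_le hn h.le_one ht' hΓ'
    (hg d e s h hs0 (by linarith) t ht)).trans ?_⟩
  rw [div_le_iff₀ hn'] at h40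
  nlinarith

/-- `φ = nodePoly n d e * liouvilleFactor n e` solves `φ'' = V φ` with `V = o(n²)` near the node. -/
lemma eventually_abs_nodePoly_mul_liouvilleFactor_sub_le (B : ℝ) {ε : ℝ} (hε : 0 < ε)
    (hε1 : ε ≤ 1) :
    ∀ᶠ n : ℕ in atTop, ∀ (d e : ℕ) (s : ℝ), IsLevenshteinNode n d e s → 0 ≤ s → s ≤ 5 / 8 →
      ∀ t, |t - s| ≤ B / n → |t| ≤ 3 / 4 ∧
        |(nodePoly n d e).eval t * liouvilleFactor n e t -
          (nodeQuot n d e s).eval s * liouvilleFactor n e s * (t - s)| ≤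
        ε * ((nodeQuot n d e s).eval s * liouvilleFactor n e s * |t - s|) := by
  filter_upwards [eventually_ge_atTop 3, eventually_abs_liouvillePotential_le B
    (by positivity : 0 < ε / 2 / (B ^ 2 + 1))] with n hn hV d e s h hs0 hs t ht
  have hn' : (n : ℝ) ≠ 0 := by positivity
  have hlt (x : ℝ) (hx : |x - s| ≤ B / n) : |x| < 1 :=
    (hV d e s h hs0 hs x hx).1.trans_lt (by norm_num)
  have hquot : (derivative (nodePoly n d e)).eval s = (nodeQuot n d e s).eval s := by
    rw [← h.X_sub_C_mul_nodeQuot]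
    simp [derivative_mul]
  have hpos : 0 < (nodeQuot n d e s).eval s * liouvilleFactor n e s :=
    mul_pos (h.eval_nodeQuot_pos hn) (exp_pos _)
  have hlinear := abs_sub_deriv_mul_sub_le (V := ε / 2 / (B ^ 2 + 1) * n ^ 2) (ε := ε / 2)
    (by positivity) (fun x hx ↦ hasDerivAt_nodePoly_mul_liouvilleFactor n d e (hlt x hx))
    (fun x hx ↦ hasDerivAt_deriv_nodePoly_mul_liouvilleFactor n d h.le_one (hlt x hx))
    (fun x hx ↦ by
      rw [abs_mul]
      gcongr
      exact (hV d e s h hs0 hs x hx).2)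
    (by rw [h.root, zero_mul]) (by
      calc ε / 2 / (B ^ 2 + 1) * n ^ 2 * (B / n) ^ 2 = ε / 2 * (B ^ 2 / (B ^ 2 + 1)) := by
            field_simp
        _ ≤ ε / 2 * 1 := by
            gcongr
            exact div_le_one_of_le₀ (by linarith) (by positivity)
        _ = ε / 2 := mul_one _) (by linarith) ht
  rw [h.root, mul_zero, add_zero, hquot, abs_of_pos hpos, mul_div_cancel₀ _ two_ne_zero,
    mul_assoc ε] at hlinear
  exact ⟨(hV d e s h hs0 hs t ht).1, hlinear⟩

lemma hasDerivAt_artanh (ht : |t| < 1) : HasDerivAt artanh (1 / (1 - t ^ 2)) t := by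
  obtain ⟨ht₁, ht₂⟩ := abs_lt.1 ht
  have hsub : 1 - t ≠ 0 := by linarith
  have hadd : 1 + t ≠ 0 := by linarith
  have hlog : HasDerivAt (fun t ↦ 1 / 2 * (log (1 + t) - log (1 - t)))
      (1 / 2 * (1 / (1 + t) - -1 / (1 - t))) t :=
    ((((hasDerivAt_id t).const_add 1).log hadd).sub
      (((hasDerivAt_id t).const_sub 1).log hsub)).const_mul _
  refine (hlog.congr_of_eventuallyEq ?_).congr_deriv ?_
  · filter_upwards [Ioo_mem_nhds ht₁ ht₂] with x hx
    rw [artanh_eq_half_log ⟨hx.1.le, hx.2.le⟩,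
      log_div (by linarith [hx.1]) (by linarith [hx.2])]
  · rw [show 1 - t ^ 2 = (1 - t) * (1 + t) by ring]
    field_simp
    ring

lemma abs_artanh_sub_artanh_le (hs : |s| ≤ 3 / 4) (ht : |t| ≤ 3 / 4) :
    |artanh t - artanh s| ≤ 3 * |t - s| := by
  refine (convex_Icc (-(3 / 4) : ℝ) (3 / 4)).norm_image_sub_le_of_norm_hasDerivWithin_le
    (fun x hx ↦ (hasDerivAt_artanh ((abs_le.2 hx).trans_lt (by norm_num))).hasDerivWithinAt)
    (fun x hx ↦ ?_) (abs_le.1 hs) (abs_le.1 ht)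
  have hpos := one_sub_sq_pos ((abs_le.2 hx).trans_lt (by norm_num))
  rw [norm_eq_abs, abs_of_pos (by positivity), div_le_iff₀ hpos]
  nlinarith [hx.1, hx.2]

lemma one_add_pow_mul_sqrt_pow (n e : ℕ) (ht : |t| < 1) :
    (1 + t) ^ e * √(1 - t ^ 2) ^ n = liouvilleFactor n e t ^ 2 * exp (artanh t) := by
  obtain ⟨ht₁, ht₂⟩ := abs_lt.1 ht
  have hsub : 0 < 1 - t := by linarith
  have hadd : 0 < 1 + t := by linarith
  have hsqrt : √(1 - t ^ 2) = exp (1 / 2 * (log (1 - t) + log (1 + t))) := by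
    rw [← log_mul hsub.ne' hadd.ne', show (1 - t) * (1 + t) = 1 - t ^ 2 by ring, sqrt_eq_rpow,
      rpow_def_of_pos (one_sub_sq_pos ht), mul_comm]
  have hpow : (1 + t) ^ e = exp (e * log (1 + t)) := by rw [exp_nat_mul, exp_log hadd]
  rw [hsqrt, hpow, liouvilleFactor, artanh_eq_half_log ⟨ht₁.le, ht₂.le⟩,
    log_div hadd.ne' hsub.ne', ← exp_nat_mul, ← exp_nat_mul, ← exp_add, ← exp_add]
  congr 1
  push_cast
  ring

lemma abs_one_add_sq_mul_one_add_sub_one_le {a b ε : ℝ} (ha : |a| ≤ ε) (hb : |b| ≤ ε)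
    (hε : ε ≤ 1 / 2) : |(1 + a) ^ 2 * (1 + b) - 1| ≤ 7 * ε := by
  have hsq : |a * a| ≤ ε := by
    rw [abs_mul]
    nlinarith [abs_nonneg a]
  have hmul : |a * b| ≤ ε := by
    rw [abs_mul]
    nlinarith [abs_nonneg a, abs_nonneg b]
  have hcube : |a * a * b| ≤ ε := by
    rw [abs_mul]
    nlinarith [abs_nonneg (a * a), abs_nonneg b]
  rw [abs_le] at *
  constructor <;> linarith

lemma abs_sub_mul_le_of_mul_eq {x F y p w w₀ ε : ℝ} (hp : 0 < p) (hx : x ≠ 0)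
    (hF : x * F = y ^ 2 * exp w) (hy : |y - p * x| ≤ ε * (p * |x|)) (hw : |w - w₀| ≤ ε / 2)
    (hε : ε ≤ 1 / 2) : |F - p ^ 2 * exp w₀ * x| ≤ 7 * ε * (p ^ 2 * exp w₀ * |x|) := by
  have ha : |(y - p * x) / (p * x)| ≤ ε := by
    rw [abs_div, abs_mul, abs_of_pos hp]
    exact div_le_of_le_mul₀ (by positivity) ((abs_nonneg _).trans hw |> fun h ↦ by linarith) hy
  have hb : |exp (w - w₀) - 1| ≤ ε := (abs_exp_sub_one_le (by linarith)).trans (by linarith)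
  have hFeq : F - p ^ 2 * exp w₀ * x =
      ((1 + (y - p * x) / (p * x)) ^ 2 * (1 + (exp (w - w₀) - 1)) - 1) *
        (p ^ 2 * exp w₀ * x) := by
    refine mul_left_cancel₀ hx ?_
    rw [mul_sub, hF, exp_sub]
    field_simp
    ring
  rw [hFeq, abs_mul, abs_mul (p ^ 2 * exp w₀), abs_of_pos (by positivity : 0 < p ^ 2 * exp w₀)]
  gcongr
  exact abs_one_add_sq_mul_one_add_sub_one_le ha hb hε

lemma eventually_abs_levenshteinPoly_mul_sub_le (B : ℝ) {ε : ℝ} (hε : 0 < ε) :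
    ∀ᶠ n : ℕ in atTop, ∀ (d e : ℕ) (s : ℝ), IsLevenshteinNode n d e s → 0 ≤ s → s ≤ 5 / 8 →
      ∃ K > 0, ∀ t, |t - s| ≤ B / n →
        |(levenshteinPoly n d e s).eval t * √(1 - t ^ 2) ^ n - K * (t - s)| ≤
          ε * (K * |t - s|) := by
  obtain ⟨η, hη, hηε, hη2⟩ : ∃ η : ℝ, 0 < η ∧ 7 * η ≤ ε ∧ η ≤ 1 / 2 :=
    ⟨min (ε / 7) (1 / 2), by positivity, by linarith [min_le_left (ε / 7) (1 / 2)],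
      min_le_right _ _⟩
  filter_upwards [eventually_ge_atTop 3, eventually_div_natCast_le (6 * B) hη,
    eventually_abs_nodePoly_mul_liouvilleFactor_sub_le B hη (by linarith)]
    with n hn hBn hlinear d e s h hs0 hs
  have hp : 0 < (nodeQuot n d e s).eval s * liouvilleFactor n e s :=
    mul_pos (h.eval_nodeQuot_pos hn) (exp_pos _)
  refine ⟨((nodeQuot n d e s).eval s * liouvilleFactor n e s) ^ 2 * exp (artanh s),
    by positivity, fun t ht ↦ ?_⟩
  obtain ⟨ht', hY⟩ := hlinear d e s h hs0 hs t ht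
  rcases eq_or_ne t s with rfl | hts
  · simp [eval_levenshteinPoly, h.root]
  have hquot : (t - s) * (nodeQuot n d e s).eval t = (nodePoly n d e).eval t := by
    simpa using congrArg (eval t) h.X_sub_C_mul_nodeQuot
  have hF : (t - s) * ((levenshteinPoly n d e s).eval t * √(1 - t ^ 2) ^ n) =
      ((nodePoly n d e).eval t * liouvilleFactor n e t) ^ 2 * exp (artanh t) := by
    rw [mul_pow, mul_assoc, ← one_add_pow_mul_sqrt_pow n e (ht'.trans_lt (by norm_num)),
      eval_levenshteinPoly]
    linear_combination (1 + t) ^ e * (nodePoly n d e).eval t * √(1 - t ^ 2) ^ n * hquot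
  have hw : |artanh t - artanh s| ≤ η / 2 := by
    have hlip := abs_artanh_sub_artanh_le (abs_le.2 ⟨by linarith, by linarith⟩ : |s| ≤ 3 / 4) ht'
    rw [mul_div_assoc] at hBn
    linarith
  refine (abs_sub_mul_le_of_mul_eq hp (sub_ne_zero.2 hts) hF hY hw hη2).trans ?_
  gcongr

end NearNode

/-! ### Integrating functions of two distances -/

section TwoDistances

variable {E : Type*} [NormedAddCommGroup E] [InnerProductSpace ℝ E]

lemma norm_smul_add_sq {u : E} (hu : ‖u‖ = 1) (x : ℝ) (v : (Submodule.span ℝ {u})ᗮ) :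
    ‖x • u + (v : E)‖ ^ 2 = x ^ 2 + ‖v‖ ^ 2 := by
  have horth : inner ℝ (x • u) (v : E) = 0 := by
    rw [inner_smul_left, (Submodule.mem_orthogonal_singleton_iff_inner_right).1 v.2, mul_zero]
  rw [norm_add_sq_real, horth, norm_smul, hu, mul_one, mul_zero, add_zero, norm_eq_abs, sq_abs,
    Submodule.coe_norm]

lemma finrank_orthogonal_span_singleton_eq {m : ℕ} {u : E} (hu : ‖u‖ = 1)
    (hE : Module.finrank ℝ E = m + 1) : Module.finrank ℝ (Submodule.span ℝ {u})ᗮ = m := by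
  have hu0 : u ≠ 0 := norm_ne_zero_iff.1 (hu ▸ one_ne_zero)
  have : Fact (Module.finrank ℝ E = m + 1) := ⟨hE⟩
  exact Submodule.finrank_orthogonal_span_singleton hu0

variable [FiniteDimensional ℝ E] [MeasurableSpace E] [BorelSpace E]

/-- The measurable equivalence `(x, v) ↦ x • u + v` between `ℝ × u^⊥` and the whole space, for a
unit vector `u`. -/
def axisEquiv (u : E) (hu : ‖u‖ = 1) : (ℝ × (Submodule.span ℝ {u})ᗮ) ≃ᵐ E :=
  ((LinearIsometryEquiv.toSpanUnitSingleton (𝕜 := ℝ) u hu).toMeasurableEquiv.prodCongr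
      (MeasurableEquiv.refl _)).trans
    ((MeasurableEquiv.toLp 2 _).trans
      (Submodule.span ℝ {u}).orthogonalDecomposition.symm.toMeasurableEquiv)

lemma axisEquiv_apply (u : E) (hu : ‖u‖ = 1) (p : ℝ × (Submodule.span ℝ {u})ᗮ) :
    axisEquiv u hu p = p.1 • u + (p.2 : E) := by
  change (Submodule.span ℝ {u}).orthogonalDecomposition.symm
    (WithLp.toLp 2 (LinearIsometryEquiv.toSpanUnitSingleton (𝕜 := ℝ) u hu p.1, p.2)) = _
  simp

lemma measurePreserving_axisEquiv (u : E) (hu : ‖u‖ = 1) :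
    MeasurePreserving (axisEquiv u hu) :=
  ((LinearIsometryEquiv.toSpanUnitSingleton (𝕜 := ℝ) u hu).measurePreserving.prod
      (MeasurePreserving.id (volume : Measure (Submodule.span ℝ {u})ᗮ))).trans
    ((WithLp.volume_preserving_toLp _ _).trans
      (Submodule.span ℝ {u}).orthogonalDecomposition.symm.measurePreserving)

lemma integral_Ioi_pow_mul_comp_sq_add (g : ℝ → ℝ) {k : ℕ} (hk : k ≠ 0) (c : ℝ) :
    ∫ y in Set.Ioi (0 : ℝ), y ^ (k + 1) * g (y ^ 2 + c) = 1 / 2 * ∫ q, √(q - c) ^ k * g q := by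
  have hsq : ∫ y in Set.Ioi (0 : ℝ), y ^ (k + 1) * g (y ^ 2 + c) =
      1 / 2 * ∫ y in Set.Ioi (0 : ℝ), √y ^ k * g (y + c) := by
    rw [← integral_comp_rpow_Ioi_of_pos (g := fun y : ℝ ↦ √y ^ k * g (y + c)) two_pos,
      ← integral_const_mul]
    refine setIntegral_congr_fun measurableSet_Ioi fun y hy ↦ ?_
    simp only [smul_eq_mul]
    rw [show (2 - 1 : ℝ) = 1 by norm_num, Real.rpow_one, Real.rpow_two,
      Real.sqrt_sq (le_of_lt hy)]
    ring
  have hext : ∫ y in Set.Ioi (0 : ℝ), √y ^ k * g (y + c) = ∫ y, √y ^ k * g (y + c) :=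
    setIntegral_eq_integral_of_forall_compl_eq_zero fun y hy ↦ by
      rw [Real.sqrt_eq_zero_of_nonpos (not_lt.1 hy), zero_pow hk, zero_mul]
  rw [hsq, hext, ← integral_sub_right_eq_self (fun y ↦ √y ^ k * g (y + c)) c]
  simp only [sub_add_cancel]

lemma integral_comp_sq_norm_axis {k : ℕ} (hk : k ≠ 0) (hE : Module.finrank ℝ E = k + 2)
    (Ψ : ℝ → ℝ) (c : ℝ) :
    ∫ v : E, Ψ (‖v‖ ^ 2 + c) =
      (k + 2 : ℕ) * volume.real (Metric.ball (0 : E) 1) * (1 / 2) *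
        ∫ q, √(q - c) ^ k * Ψ q := by
  have : Nontrivial E := Module.nontrivial_of_finrank_pos (R := ℝ) (by omega)
  rw [integral_fun_norm_addHaar volume (fun r ↦ Ψ (r ^ 2 + c)), hE, mul_assoc _ (1 / 2 : ℝ),
    ← integral_Ioi_pow_mul_comp_sq_add Ψ hk]
  simp only [nsmul_eq_mul, smul_eq_mul, mul_assoc, Nat.add_succ_sub_one]

/-- With `w = 2τu` and `z = (τ + ξ)u + v`, `v ⊥ u`, the squared distances of `z` from `0` and `w`
are `q ± 2τξ`, where `q = τ² + ξ² + ‖v‖²`. -/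
lemma exists_integral_comp_two_dist_eq {k : ℕ} (hk : k ≠ 0) (hE : Module.finrank ℝ E = k + 3)
    (Φ : ℝ → ℝ → ℝ) {w : E} {τ : ℝ} (hτ : 0 < τ) (hw : ‖w‖ = 2 * τ)
    (hΦ : Integrable fun z : E ↦ Φ (‖z‖ ^ 2) (‖z - w‖ ^ 2)) :
    ∃ κ : ℝ, 0 ≤ κ ∧ ∫ z : E, Φ (‖z‖ ^ 2) (‖z - w‖ ^ 2) =
      κ * ∫ ξ : ℝ, ∫ q : ℝ,
        √(q - (τ ^ 2 + ξ ^ 2)) ^ k * Φ (q + 2 * τ * ξ) (q - 2 * τ * ξ) := by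
  obtain ⟨u, hu, rfl⟩ : ∃ u : E, ‖u‖ = 1 ∧ w = (2 * τ) • u := by
    refine ⟨(2 * τ)⁻¹ • w, ?_, ?_⟩
    · rw [norm_smul, hw, norm_inv, Real.norm_of_nonneg (by positivity),
        inv_mul_cancel₀ (by positivity)]
    · rw [smul_smul, mul_inv_cancel₀ (by positivity), one_smul]
  have hmp := measurePreserving_axisEquiv u hu
  have hcomp (p : ℝ × (Submodule.span ℝ {u})ᗮ) :
      Φ (‖axisEquiv u hu p‖ ^ 2) (‖axisEquiv u hu p - (2 * τ) • u‖ ^ 2) =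
        Φ (p.1 ^ 2 + ‖p.2‖ ^ 2) ((p.1 - 2 * τ) ^ 2 + ‖p.2‖ ^ 2) := by
    rw [axisEquiv_apply, add_sub_right_comm, ← sub_smul, norm_smul_add_sq hu,
      norm_smul_add_sq hu]
  have hint := (hmp.integrable_comp_emb (axisEquiv u hu).measurableEmbedding).2 hΦ
  simp only [Function.comp_def, hcomp] at hint
  refine ⟨(k + 2 : ℕ) * volume.real (Metric.ball (0 : (Submodule.span ℝ {u})ᗮ) 1) * (1 / 2),
    by positivity, ?_⟩
  rw [← hmp.integral_comp (axisEquiv u hu).measurableEmbedding]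
  simp_rw [hcomp]
  rw [Measure.volume_eq_prod] at hint ⊢
  rw [integral_prod _ hint, ← integral_add_right_eq_self _ τ, ← integral_const_mul]
  congr 1 with ξ
  rw [← integral_comp_sq_norm_axis hk (finrank_orthogonal_span_singleton_eq hu hE)
    (fun q ↦ Φ (q + 2 * τ * ξ) (q - 2 * τ * ξ))]
  congr 1 with v
  congr 1 <;> ring

end TwoDistances

/-! ### The linear programming bound -/

section Shell

variable {n : ℕ}

/-- The closed spherical shell `ρ ≤ ‖z‖ ≤ R` around the origin. -/
def shell (n : ℕ) (ρ R : ℝ) : Set (EuclideanSpace ℝ (Fin n)) := {z | ρ ≤ ‖z‖ ∧ ‖z‖ ≤ R}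

open Classical in
/-- The kernel `f(cos ∠(a, b))` cut off to pairs of points in the shell `ρ ≤ ‖z‖ ≤ R`. -/
def shellKernel (f : Polynomial ℝ) (ρ R : ℝ) (a b : EuclideanSpace ℝ (Fin n)) : ℝ :=
  if a ∈ shell n ρ R ∧ b ∈ shell n ρ R then f.eval (inner ℝ a b / (‖a‖ * ‖b‖)) else 0

lemma measurableSet_shell (n : ℕ) (ρ R : ℝ) : MeasurableSet (shell n ρ R) :=
  ((isClosed_le continuous_const continuous_norm).inter
    (isClosed_le continuous_norm continuous_const)).measurableSet

lemma shell_subset_closedBall (n : ℕ) (ρ R : ℝ) : shell n ρ R ⊆ Metric.closedBall 0 R :=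
  fun _ hz ↦ mem_closedBall_zero_iff.2 hz.2

lemma volume_shell_ne_top (n : ℕ) (ρ R : ℝ) : volume (shell n ρ R) ≠ ⊤ :=
  ((measure_mono (shell_subset_closedBall n ρ R)).trans_lt measure_closedBall_lt_top).ne

lemma volume_real_ball (x : EuclideanSpace ℝ (Fin n)) {r : ℝ} (hr : 0 < r) :
    volume.real (Metric.ball x r) =
      r ^ n * volume.real (Metric.ball (0 : EuclideanSpace ℝ (Fin n)) 1) := by
  rw [measureReal_def, Measure.addHaar_ball_of_pos _ _ hr, ENNReal.toReal_mul,
    ENNReal.toReal_ofReal (by positivity), finrank_euclideanSpace_fin, measureReal_def]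

lemma volume_real_shell {ρ R : ℝ} (hρ : 0 < ρ) (hρR : ρ < R) :
    volume.real (shell n ρ R) =
      (R ^ n - ρ ^ n) * volume.real (Metric.ball (0 : EuclideanSpace ℝ (Fin n)) 1) := by
  have hdiff : shell n ρ R = Metric.closedBall 0 R \ Metric.ball 0 ρ := by
    ext z
    simp [shell, and_comm]
  rw [hdiff, measureReal_sdiff (Metric.ball_subset_closedBall.trans
      (Metric.closedBall_subset_closedBall hρR.le)) measurableSet_ball
      measure_closedBall_lt_top.ne, Measure.addHaar_real_closedBall _ _ (hρ.trans hρR).le,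
    volume_real_ball _ hρ, finrank_euclideanSpace_fin, sub_mul]

lemma exists_abs_shellKernel_le (f : Polynomial ℝ) (ρ R : ℝ) :
    ∃ B, ∀ a b : EuclideanSpace ℝ (Fin n), |shellKernel f ρ R a b| ≤ B := by
  obtain ⟨B, hB⟩ := (isCompact_Icc (a := (-1 : ℝ)) (b := 1)).exists_bound_of_continuousOn
    f.continuous.continuousOn
  refine ⟨B, fun a b ↦ ?_⟩
  unfold shellKernel
  split_ifs
  · exact hB _ (abs_le.1 (abs_real_inner_div_norm_mul_norm_le_one a b))
  · rw [abs_zero]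
    exact (norm_nonneg _).trans (hB 0 (by norm_num))

lemma measurable_shellKernel_sub (f : Polynomial ℝ) (ρ R : ℝ) (w : EuclideanSpace ℝ (Fin n)) :
    Measurable fun z ↦ shellKernel f ρ R z (z - w) := by
  have hshell := measurableSet_shell n ρ R
  refine Measurable.ite (hshell.inter (measurable_id.sub_const w hshell)) ?_ measurable_const
  exact f.continuous.measurable.comp (by fun_prop)

lemma integrable_shellKernel_sub (f : Polynomial ℝ) (ρ R : ℝ)
    (w : EuclideanSpace ℝ (Fin n)) : Integrable fun z ↦ shellKernel f ρ R z (z - w) := by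
  obtain ⟨B, hB⟩ := exists_abs_shellKernel_le (n := n) f ρ R
  refine (integrableOn_iff_integrable_of_support_subset fun z hz ↦ ?_).1
    (Measure.integrableOn_of_bounded (M := B) (s := shell n ρ R) (volume_shell_ne_top n ρ R)
      (measurable_shellKernel_sub f ρ R w).aestronglyMeasurable
      (Eventually.of_forall fun z ↦ hB z (z - w)))
  by_contra hzs
  exact hz (if_neg fun h ↦ hzs h.1)

lemma integrable_shellKernel_sub_sub (f : Polynomial ℝ) (ρ R : ℝ)
    (x y : EuclideanSpace ℝ (Fin n)) :
    Integrable fun z ↦ shellKernel f ρ R (x - z) (y - z) := by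
  refine ((integrable_shellKernel_sub f ρ R (x - y)).comp_sub_left x).congr
    (Eventually.of_forall fun z ↦ ?_)
  simp only [sub_right_comm x z, sub_sub_cancel]

lemma integral_shellKernel_sub_sub (f : Polynomial ℝ) (ρ R : ℝ)
    (x y : EuclideanSpace ℝ (Fin n)) :
    ∫ z, shellKernel f ρ R (x - z) (y - z) = ∫ z, shellKernel f ρ R z (z - (x - y)) := by
  rw [← integral_sub_left_eq_self (fun z ↦ shellKernel f ρ R z (z - (x - y))) volume x]
  simp only [sub_right_comm x _ (x - y), sub_sub_cancel]

lemma integral_shellKernel_self (f : Polynomial ℝ) {ρ R : ℝ} (hρ : 0 < ρ) :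
    ∫ z : EuclideanSpace ℝ (Fin n), shellKernel f ρ R z z =
      f.eval 1 * volume.real (shell n ρ R) := by
  have hind : (fun z : EuclideanSpace ℝ (Fin n) ↦ shellKernel f ρ R z z) =
      (shell n ρ R).indicator fun _ ↦ f.eval 1 := by
    ext z
    by_cases hz : z ∈ shell n ρ R
    · have hz0 : 0 < ‖z‖ := hρ.trans_le hz.1
      rw [shellKernel, if_pos ⟨hz, hz⟩, Set.indicator_of_mem hz,
        real_inner_self_eq_norm_mul_norm, div_self (by positivity)]
    · rw [shellKernel, if_neg fun h ↦ hz h.1, Set.indicator_of_notMem hz]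
  rw [hind, integral_indicator (measurableSet_shell n ρ R), setIntegral_const, smul_eq_mul,
    mul_comm]

lemma ZonalNonneg.zonalCoeff_zero_le_eval_one (hn : 3 ≤ n) {f : Polynomial ℝ}
    (hf : ZonalNonneg n f) : zonalCoeff n 0 f ≤ f.eval 1 := by
  let i : Fin n := ⟨0, by omega⟩
  have h := hf.zonalCoeff_zero_mul_sq_le hn (s := {()})
    (x := fun _ ↦ EuclideanSpace.single i (1 : ℝ)) (by simp) 1
  simpa using h

open Classical in
lemma ZonalNonneg.zonalCoeff_zero_mul_sq_le_sum_shellKernel (hn : 3 ≤ n) {f : Polynomial ℝ}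
    (hf : ZonalNonneg n f) {ρ : ℝ} (hρ : 0 < ρ) (R : ℝ)
    (T : Finset (EuclideanSpace ℝ (Fin n))) :
    zonalCoeff n 0 f * (∑ x ∈ T, (shell n ρ R).indicator (fun _ ↦ 1) x) ^ 2 ≤
      ∑ x ∈ T, ∑ y ∈ T, shellKernel f ρ R x y := by
  have h := hf.zonalCoeff_zero_mul_sq_le hn (s := T.filter (· ∈ shell n ρ R))
    (x := fun x ↦ ‖x‖⁻¹ • x) (fun x hx ↦ norm_smul_inv_norm
      (norm_pos_iff.1 (hρ.trans_le (Finset.mem_filter.1 hx).2.1))) 1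
  convert h using 1
  · simp [Set.indicator_apply]
  · simp only [Finset.sum_filter, shellKernel, ite_and, real_inner_smul_left,
      real_inner_smul_right, Pi.one_apply, one_mul, div_eq_mul_inv, mul_inv, Finset.sum_ite_irrel,
      Finset.sum_const_zero, mul_comm, mul_assoc]

lemma mul_sq_integral_le {α : Type*} [MeasurableSpace α] {μ : Measure α} {s : Set α}
    {g K : α → ℝ} {c : ℝ} (hs : MeasurableSet s) (hμs : μ s ≠ ⊤) (hc : 0 ≤ c)
    (hgs : ∀ z ∉ s, g z = 0) (hg : Integrable g μ) (hK : Integrable K μ)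
    (hgK : ∀ z, c * g z ^ 2 ≤ K z) :
    c * (∫ z, g z ∂μ) ^ 2 ≤ μ.real s * ∫ z, K z ∂μ := by
  set V := μ.real s with hV
  set a := ∫ z, g z ∂μ with ha
  obtain hV0 | hV0 := (measureReal_nonneg (μ := μ) (s := s)).eq_or_lt
  · have ha0 : a = 0 := by
      rw [ha, ← setIntegral_eq_integral_of_forall_compl_eq_zero hgs,
        setIntegral_measure_zero g (((ENNReal.toReal_eq_zero_iff _).1 hV0.symm).resolve_right hμs)]
    rw [ha0, hV, ← hV0, zero_mul, zero_pow two_ne_zero, mul_zero]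
  have hind : Integrable (s.indicator fun _ ↦ a ^ 2) μ :=
    (integrable_indicator_iff hs).2 (integrableOn_const hμs)
  have hpointwise (z) : c * (2 * V * a * g z - s.indicator (fun _ ↦ a ^ 2) z) ≤ V ^ 2 * K z := by
    refine le_trans ?_ (mul_le_mul_of_nonneg_left (hgK z) (sq_nonneg V))
    rw [mul_left_comm]
    refine mul_le_mul_of_nonneg_left ?_ hc
    by_cases hz : z ∈ s
    · rw [Set.indicator_of_mem hz]
      nlinarith [sq_nonneg (V * g z - a)]
    · rw [Set.indicator_of_notMem hz, hgs z hz]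
      simp
  have hint := integral_mono (((hg.const_mul (2 * V * a)).sub hind).const_mul c)
    (hK.const_mul (V ^ 2)) hpointwise
  simp only [Pi.sub_apply] at hint
  rw [integral_const_mul, integral_sub (hg.const_mul _) hind, integral_const_mul,
    integral_const_mul, integral_indicator hs, setIntegral_const, smul_eq_mul, ← hV, ← ha] at hint
  refine le_of_mul_le_mul_left (le_of_eq_of_le ?_ (hint.trans_eq ?_)) hV0 <;> ring

lemma integrable_indicator_shell_sub (ρ R : ℝ) (x : EuclideanSpace ℝ (Fin n)) :
    Integrable fun z ↦ (shell n ρ R).indicator (fun _ ↦ (1 : ℝ)) (x - z) :=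
  ((integrable_indicator_iff (measurableSet_shell n ρ R)).2
    (integrableOn_const (volume_shell_ne_top n ρ R))).comp_sub_left x

lemma integral_indicator_shell_sub (ρ R : ℝ) (x : EuclideanSpace ℝ (Fin n)) :
    ∫ z, (shell n ρ R).indicator (fun _ ↦ (1 : ℝ)) (x - z) = volume.real (shell n ρ R) := by
  rw [integral_sub_left_eq_self ((shell n ρ R).indicator fun _ ↦ 1) volume x,
    integral_indicator_const _ (measurableSet_shell n ρ R), smul_eq_mul, mul_one]

lemma sum_integral_shellKernel_le {f : Polynomial ℝ} {ρ R : ℝ} (hρ : 0 < ρ)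
    (hneg : ∀ w : EuclideanSpace ℝ (Fin n), 2 ≤ ‖w‖ → ∫ z, shellKernel f ρ R z (z - w) ≤ 0)
    {T : Finset (EuclideanSpace ℝ (Fin n))}
    (hT : (T : Set (EuclideanSpace ℝ (Fin n))).Pairwise fun x y ↦ 2 ≤ dist x y) :
    ∑ x ∈ T, ∑ y ∈ T, ∫ z, shellKernel f ρ R (x - z) (y - z) ≤
      T.card * (f.eval 1 * volume.real (shell n ρ R)) := by
  rw [← nsmul_eq_mul]
  refine Finset.sum_le_card_nsmul _ _ _ fun x hx ↦ ?_
  have hself : ∫ z, shellKernel f ρ R (x - z) (x - z) = f.eval 1 * volume.real (shell n ρ R) := by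
    rw [integral_shellKernel_sub_sub, sub_self]
    simp only [sub_zero, integral_shellKernel_self f hρ]
  rw [← Finset.add_sum_erase _ _ hx, hself]
  refine add_le_of_nonpos_right (Finset.sum_nonpos fun y hy ↦ ?_)
  rw [integral_shellKernel_sub_sub]
  refine hneg _ ?_
  rw [← dist_eq_norm]
  exact hT hx (Finset.mem_of_mem_erase hy) (Finset.ne_of_mem_erase hy).symm

lemma ZonalNonneg.card_mul_le_of_integral_shellKernel_nonpos (hn : 3 ≤ n) {f : Polynomial ℝ}
    (hf : ZonalNonneg n f) {ρ R : ℝ} (hρ : 0 < ρ)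
    (hneg : ∀ w : EuclideanSpace ℝ (Fin n), 2 ≤ ‖w‖ → ∫ z, shellKernel f ρ R z (z - w) ≤ 0)
    {T : Finset (EuclideanSpace ℝ (Fin n))}
    (hT : (T : Set (EuclideanSpace ℝ (Fin n))).Pairwise fun x y ↦ 2 ≤ dist x y) {L : ℝ}
    (hL : (T : Set (EuclideanSpace ℝ (Fin n))) ⊆ Metric.closedBall 0 L) :
    zonalCoeff n 0 f * (T.card * volume.real (shell n ρ R)) ≤
      volume.real (Metric.closedBall (0 : EuclideanSpace ℝ (Fin n)) (L + R)) * f.eval 1 := by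
  have hind (x) := integrable_indicator_shell_sub (n := n) ρ R x
  have hkernel (x y) := integrable_shellKernel_sub_sub (n := n) f ρ R x y
  have h := mul_sq_integral_le (s := Metric.closedBall 0 (L + R))
    (g := fun z ↦ ∑ x ∈ T, (shell n ρ R).indicator (fun _ ↦ 1) (x - z))
    (K := fun z ↦ ∑ x ∈ T, ∑ y ∈ T, shellKernel f ρ R (x - z) (y - z))
    measurableSet_closedBall measure_closedBall_lt_top.ne (hf 0) (fun z hz ↦ ?_)
    (integrable_finsetSum _ fun x _ ↦ hind x)
    (integrable_finsetSum _ fun x _ ↦ integrable_finsetSum _ fun y _ ↦ hkernel x y) (fun z ↦ ?_)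
  · simp only [integral_finsetSum _ fun x _ ↦ hind x, integral_indicator_shell_sub,
      Finset.sum_const, nsmul_eq_mul,
      integral_finsetSum _ fun x _ ↦ integrable_finsetSum _ fun y _ ↦ hkernel x y,
      integral_finsetSum _ fun y _ ↦ hkernel _ y] at h
    have hle := h.trans (mul_le_mul_of_nonneg_left (sum_integral_shellKernel_le hρ hneg hT)
      measureReal_nonneg)
    obtain hzero | hpos := (by positivity : 0 ≤ T.card * volume.real (shell n ρ R)).eq_or_lt
    · rw [← hzero, mul_zero]
      exact mul_nonneg measureReal_nonneg ((hf 0).trans (hf.zonalCoeff_zero_le_eval_one hn))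
    · exact le_of_mul_le_mul_left (by linarith) hpos
  · refine Finset.sum_eq_zero fun x hx ↦ Set.indicator_of_notMem (fun hxz ↦ hz ?_) _
    have hz' : ‖z‖ ≤ ‖x‖ + ‖x - z‖ := by simpa using norm_sub_le x (x - z)
    exact mem_closedBall_zero_iff.2
      (hz'.trans (add_le_add (mem_closedBall_zero_iff.1 (hL hx)) hxz.2))
  · have := hf.zonalCoeff_zero_mul_sq_le_sum_shellKernel hn hρ R (T.image (· - z))
    simpa [Finset.sum_image] using this

end Shell

section Density

variable {n : ℕ} {S : Set (EuclideanSpace ℝ (Fin n))}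

lemma volume_real_iUnion_ball_inter_ball_le {r A : ℝ}
    (hA : ∀ T : Finset (EuclideanSpace ℝ (Fin n)),
      (T : Set (EuclideanSpace ℝ (Fin n))) ⊆ S ∩ Metric.closedBall 0 (r + 1) → T.card ≤ A) :
    volume.real ((⋃ x ∈ S, Metric.ball x 1) ∩ Metric.ball 0 r) ≤
      A * volume.real (Metric.ball (0 : EuclideanSpace ℝ (Fin n)) 1) := by
  have hfin : (S ∩ Metric.closedBall 0 (r + 1)).Finite := by
    by_contra hinf
    obtain ⟨m, hm⟩ := exists_nat_gt A
    obtain ⟨T, hT, rfl⟩ := Set.Infinite.exists_subset_card_eq hinf m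
    exact hm.not_ge (hA T hT)
  have hsub : (⋃ x ∈ S, Metric.ball x 1) ∩ Metric.ball 0 r ⊆
      ⋃ x ∈ hfin.toFinset, Metric.ball x 1 := by
    rintro z ⟨hz, hzr⟩
    obtain ⟨x, hx, hzx⟩ := Set.mem_iUnion₂.1 hz
    refine Set.mem_iUnion₂.2 ⟨x, hfin.mem_toFinset.2 ⟨hx, ?_⟩, hzx⟩
    rw [Metric.mem_ball] at hzx hzr
    exact Metric.mem_closedBall.2 ((dist_triangle_left x 0 z).trans (by linarith))
  calc _ ≤ volume.real (⋃ x ∈ hfin.toFinset, Metric.ball x 1) := measureReal_mono hsub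
        (measure_biUnion_lt_top hfin.toFinset.finite_toSet fun _ _ ↦ measure_ball_lt_top).ne
    _ ≤ ∑ x ∈ hfin.toFinset, volume.real (Metric.ball x 1) := measureReal_biUnion_finset_le _ _
    _ = hfin.toFinset.card * volume.real (Metric.ball (0 : EuclideanSpace ℝ (Fin n)) 1) := by
      rw [Finset.sum_congr rfl fun x _ ↦ volume_real_ball x one_pos, Finset.sum_const, one_pow,
        one_mul, nsmul_eq_mul]
    _ ≤ _ := mul_le_mul_of_nonneg_right (hA _ hfin.coe_toFinset.subset) measureReal_nonneg

lemma packingDensity_nonneg (n : ℕ) (S : Set (EuclideanSpace ℝ (Fin n))) :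
    0 ≤ packingDensity n S :=
  le_limsup_of_frequently_le (Frequently.of_forall fun r ↦ by positivity)
    (isBoundedUnder_of ⟨1, fun r ↦ div_le_one_of_le₀
      (ENNReal.toReal_mono measure_ball_lt_top.ne (measure_mono Set.inter_subset_right))
      ENNReal.toReal_nonneg⟩)

lemma packingDensity_le_of_card_le {C R : ℝ}
    (h : ∀ L, 0 ≤ L → ∀ T : Finset (EuclideanSpace ℝ (Fin n)),
      (T : Set (EuclideanSpace ℝ (Fin n))) ⊆ S ∩ Metric.closedBall 0 L →
        T.card ≤ C * (L + R) ^ n) :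
    packingDensity n S ≤ C := by
  have hle : ∀ᶠ r : ℝ in atTop,
      (volume ((⋃ x ∈ S, Metric.ball x 1) ∩ Metric.ball 0 r)).toReal /
        (volume (Metric.ball (0 : EuclideanSpace ℝ (Fin n)) r)).toReal ≤
      C * (1 + (1 + R) * r⁻¹) ^ n := by
    filter_upwards [eventually_gt_atTop 0] with r hr
    have hball := volume_real_ball (0 : EuclideanSpace ℝ (Fin n)) hr
    have hunit : 0 < volume.real (Metric.ball (0 : EuclideanSpace ℝ (Fin n)) 1) :=
      ENNReal.toReal_pos (Metric.measure_ball_pos _ _ one_pos).ne' measure_ball_lt_top.ne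
    rw [← measureReal_def, ← measureReal_def, hball, div_le_iff₀ (by positivity)]
    refine (volume_real_iUnion_ball_inter_ball_le (h (r + 1) (by positivity))).trans_eq ?_
    rw [show r + 1 + R = (1 + (1 + R) * r⁻¹) * r by field_simp; ring, mul_pow]
    ring
  have hlim : Tendsto (fun r : ℝ ↦ C * (1 + (1 + R) * r⁻¹) ^ n) atTop (nhds C) := by
    simpa using (((tendsto_inv_atTop_zero (𝕜 := ℝ)).const_mul (1 + R)).const_add 1).pow n
      |>.const_mul C
  exact (limsup_le_limsup hle (isCoboundedUnder_le_of_le atTop (x := 0) fun r ↦ by positivity)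
    hlim.isBoundedUnder_le).trans_eq hlim.limsup_eq

lemma spherePackingConst_nonneg (n : ℕ) : 0 ≤ spherePackingConst n :=
  Real.sSup_nonneg fun _ ⟨S, _, hδ⟩ ↦ hδ ▸ packingDensity_nonneg n S

theorem ZonalNonneg.spherePackingConst_le (hn : 3 ≤ n) {f : Polynomial ℝ}
    (hf : ZonalNonneg n f) (hf0 : 0 < zonalCoeff n 0 f) {ρ R : ℝ} (hρ : 0 < ρ) (hρR : ρ < R)
    (hneg : ∀ w : EuclideanSpace ℝ (Fin n), 2 ≤ ‖w‖ → ∫ z, shellKernel f ρ R z (z - w) ≤ 0) :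
    spherePackingConst n ≤ f.eval 1 / zonalCoeff n 0 f / (R ^ n - ρ ^ n) := by
  have hshell : 0 < R ^ n - ρ ^ n := sub_pos.2 (pow_lt_pow_left₀ hρR hρ.le (by omega))
  have hone : 0 ≤ f.eval 1 := hf0.le.trans (hf.zonalCoeff_zero_le_eval_one hn)
  have hunit : 0 < volume.real (Metric.ball (0 : EuclideanSpace ℝ (Fin n)) 1) :=
    ENNReal.toReal_pos (Metric.measure_ball_pos _ _ one_pos).ne' measure_ball_lt_top.ne
  refine Real.sSup_le ?_ (by positivity)
  rintro _ ⟨S, hS, rfl⟩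
  refine packingDensity_le_of_card_le (R := R) fun L hL T hT ↦ ?_
  have h := hf.card_mul_le_of_integral_shellKernel_nonpos hn hρ hneg
    (hS.mono (hT.trans Set.inter_subset_left)) (hT.trans Set.inter_subset_right)
  rw [volume_real_shell hρ hρR, Measure.addHaar_real_closedBall _ _ (by linarith),
    finrank_euclideanSpace_fin] at h
  rw [div_div, div_mul_eq_mul_div, le_div_iff₀ (by positivity)]
  exact le_of_mul_le_mul_right (by linarith) hunit

end Density

/-! ### The kernel in the meridian half-plane -/

section Meridian

variable {A B R τ κ ξ q s x ρ : ℝ} {k n : ℕ} {f : Polynomial ℝ} {p : ℝ × ℝ}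

/-- The cosine of the angle at the apex of a triangle with squared legs `A`, `B` and base `2 * τ`,
given by the law of cosines. -/
def apexCos (τ A B : ℝ) : ℝ := (A + B - 4 * τ ^ 2) / (2 * (√A * √B))

lemma inner_div_norm_mul_norm_eq_apexCos {E : Type*} [NormedAddCommGroup E]
    [InnerProductSpace ℝ E] (z : E) {w : E} (hw : ‖w‖ = 2 * τ) :
    inner ℝ z (z - w) / (‖z‖ * ‖z - w‖) = apexCos τ (‖z‖ ^ 2) (‖z - w‖ ^ 2) := by
  have h := norm_sub_sq_real z (z - w)
  rw [sub_sub_cancel, hw] at h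
  rw [apexCos, sqrt_sq (norm_nonneg z), sqrt_sq (norm_nonneg (z - w)),
    ← mul_div_mul_left _ _ two_ne_zero]
  congr 1
  linarith

lemma sq_mul_one_sub_apexCos_sq (hA : 0 < q + 2 * τ * ξ) (hB : 0 < q - 2 * τ * ξ) :
    (√(q + 2 * τ * ξ) * √(q - 2 * τ * ξ)) ^ 2 *
        (1 - apexCos τ (q + 2 * τ * ξ) (q - 2 * τ * ξ) ^ 2) =
      4 * τ ^ 2 * (q - (τ ^ 2 + ξ ^ 2)) := by
  have hg : 0 < √(q + 2 * τ * ξ) * √(q - 2 * τ * ξ) := by positivity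
  have hg2 : (√(q + 2 * τ * ξ) * √(q - 2 * τ * ξ)) ^ 2 = (q + 2 * τ * ξ) * (q - 2 * τ * ξ) := by
    rw [mul_pow, sq_sqrt hA.le, sq_sqrt hB.le]
  rw [apexCos]
  generalize √(q + 2 * τ * ξ) * √(q - 2 * τ * ξ) = g at hg hg2 ⊢
  field_simp
  linear_combination 4 * hg2

lemma sq_add_sq_sub_mul_le_of_le {r₁ r₂ : ℝ} (h₁ : r₁ ∈ Set.Icc (3 / 4 * R) R)
    (h₂ : r₂ ∈ Set.Icc (3 / 4 * R) R) (hκ : κ ∈ Set.Icc 0 (3 / 4)) (hx : x ∈ Set.Icc 0 1)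
    (h : r₁ ^ 2 + r₂ ^ 2 ≤ 2 * R ^ 2 * (1 - x)) (hle : r₂ ≤ r₁) :
    r₁ ^ 2 + r₂ ^ 2 - 2 * κ * (r₁ * r₂) ≤ R ^ 2 * (2 * (1 - κ) * (1 - x / 2) + (x / 2) ^ 2) := by
  have hR : 0 ≤ R := by linarith [h₁.1, h₁.2]
  have hr₂ : r₂ ≤ R * (1 - x / 2) := by
    refine le_of_sq_le_sq ?_ (mul_nonneg hR (by linarith [hx.2]))
    nlinarith [pow_le_pow_left₀ (by linarith [h₂.1]) hle 2, sq_nonneg (R * x)]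
  have hκr₂ : κ * r₂ ≤ 3 / 4 * R := mul_le_mul hκ.2 h₂.2 (by linarith [h₂.1]) (by norm_num)
  have hκR : κ * R ≤ 3 / 4 * R := mul_le_mul_of_nonneg_right hκ.2 hR
  -- The left side increases in `r₁ ≤ R` and then in `r₂ ≤ R * (1 - x / 2)`.
  have hinc₁ : 0 ≤ (R - r₁) * (R + r₁ - 2 * (κ * r₂)) :=
    mul_nonneg (by linarith [h₁.2]) (by linarith [h₁.1])
  have hinc₂ : 0 ≤ (R * (1 - x / 2) - r₂) * (R * (1 - x / 2) + r₂ - 2 * (κ * R)) :=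
    mul_nonneg (by linarith) (by linarith [h₂.1])
  linarith

lemma apexCos_le (hR : 0 < R) (hA : A ∈ Set.Icc ((3 / 4 * R) ^ 2) (R ^ 2))
    (hB : B ∈ Set.Icc ((3 / 4 * R) ^ 2) (R ^ 2)) (hκ : κ ∈ Set.Icc 0 (3 / 4))
    (hx : x ∈ Set.Icc 0 1) (hAB : A + B ≤ 2 * R ^ 2 * (1 - x))
    (hτ : R ^ 2 * (2 * (1 - κ) * (1 - x / 2) + (x / 2) ^ 2) ≤ 4 * τ ^ 2) :
    apexCos τ A B ≤ κ := by
  have hmem {Z : ℝ} (hZ : Z ∈ Set.Icc ((3 / 4 * R) ^ 2) (R ^ 2)) :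
      0 < Z ∧ √Z ∈ Set.Icc (3 / 4 * R) R :=
    ⟨(by positivity : 0 < (3 / 4 * R) ^ 2).trans_le hZ.1, le_sqrt_of_sq_le hZ.1,
      sqrt_le_iff.2 ⟨hR.le, hZ.2⟩⟩
  obtain ⟨⟨hA0, hA'⟩, hB0, hB'⟩ := And.intro (hmem hA) (hmem hB)
  have hsq : √A ^ 2 + √B ^ 2 = A + B := by rw [sq_sqrt hA0.le, sq_sqrt hB0.le]
  have key : √A ^ 2 + √B ^ 2 - 2 * κ * (√A * √B) ≤
      R ^ 2 * (2 * (1 - κ) * (1 - x / 2) + (x / 2) ^ 2) := by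
    rcases le_total √B √A with hle | hle
    · exact sq_add_sq_sub_mul_le_of_le hA' hB' hκ hx (hsq.trans_le hAB) hle
    · rw [add_comm, mul_comm √A]
      exact sq_add_sq_sub_mul_le_of_le hB' hA' hκ hx (by linarith) hle
  rw [apexCos, div_le_iff₀ (by positivity)]
  linarith

open Classical in
/-- The function with `shellKernel f ρ R z (z - w) = shellKernelOfSq f ρ R τ (‖z‖²) (‖z - w‖²)`
whenever `‖w‖ = 2 * τ`. -/
def shellKernelOfSq (f : Polynomial ℝ) (ρ R τ A B : ℝ) : ℝ :=
  if A ∈ Set.Icc (ρ ^ 2) (R ^ 2) ∧ B ∈ Set.Icc (ρ ^ 2) (R ^ 2) then f.eval (apexCos τ A B) else 0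

lemma mem_shell_iff_sq_norm_mem (hρ : 0 ≤ ρ) (hR : 0 ≤ R) {z : EuclideanSpace ℝ (Fin n)} :
    z ∈ shell n ρ R ↔ ‖z‖ ^ 2 ∈ Set.Icc (ρ ^ 2) (R ^ 2) := by
  rw [Set.mem_Icc, pow_le_pow_iff_left₀ hρ (norm_nonneg z) two_ne_zero,
    pow_le_pow_iff_left₀ (norm_nonneg z) hR two_ne_zero]
  rfl

lemma shellKernel_sub_eq (hρ : 0 ≤ ρ) (hR : 0 ≤ R) (z : EuclideanSpace ℝ (Fin n))
    {w : EuclideanSpace ℝ (Fin n)} (hw : ‖w‖ = 2 * τ) :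
    shellKernel f ρ R z (z - w) = shellKernelOfSq f ρ R τ (‖z‖ ^ 2) (‖z - w‖ ^ 2) := by
  simp only [shellKernel, shellKernelOfSq, mem_shell_iff_sq_norm_mem hρ hR,
    inner_div_norm_mul_norm_eq_apexCos z hw]

/-- The integrand produced by `exists_integral_comp_two_dist_eq` from `shellKernelOfSq f ρ R τ`:
`p.1` is the displacement along the axis, `p.2` the mean of the two squared distances. -/
def meridianIntegrand (f : Polynomial ℝ) (ρ R τ : ℝ) (k : ℕ) (p : ℝ × ℝ) : ℝ :=
  √(p.2 - (τ ^ 2 + p.1 ^ 2)) ^ k *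
    shellKernelOfSq f ρ R τ (p.2 + 2 * τ * p.1) (p.2 - 2 * τ * p.1)

/-- The support of `meridianIntegrand f ρ R τ k`: both squared distances lie in `[ρ², R²]`. -/
def meridianShell (ρ R τ : ℝ) : Set (ℝ × ℝ) :=
  {p | p.2 + 2 * τ * p.1 ∈ Set.Icc (ρ ^ 2) (R ^ 2) ∧ p.2 - 2 * τ * p.1 ∈ Set.Icc (ρ ^ 2) (R ^ 2)}

lemma meridianIntegrand_of_mem (hp : p ∈ meridianShell ρ R τ) :
    meridianIntegrand f ρ R τ k p = √(p.2 - (τ ^ 2 + p.1 ^ 2)) ^ k *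
      f.eval (apexCos τ (p.2 + 2 * τ * p.1) (p.2 - 2 * τ * p.1)) := by
  rw [meridianIntegrand, shellKernelOfSq, if_pos ⟨hp.1, hp.2⟩]

lemma meridianIntegrand_of_notMem (hp : p ∉ meridianShell ρ R τ) :
    meridianIntegrand f ρ R τ k p = 0 := by
  rw [meridianIntegrand, shellKernelOfSq, if_neg (by exact hp), mul_zero]

lemma meridianIntegrand_nonpos (hk : k ≠ 0) (hρ : 0 < ρ)
    (hf : ∀ t, -1 ≤ t → t ≤ s → f.eval t ≤ 0)
    (hp : p ∈ meridianShell ρ R τ → apexCos τ (p.2 + 2 * τ * p.1) (p.2 - 2 * τ * p.1) ≤ s) :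
    meridianIntegrand f ρ R τ k p ≤ 0 := by
  by_cases hmem : p ∈ meridianShell ρ R τ
  swap
  · exact (meridianIntegrand_of_notMem hmem).le
  rw [meridianIntegrand_of_mem hmem]
  rcases le_or_gt (p.2 - (τ ^ 2 + p.1 ^ 2)) 0 with hm | hm
  · rw [sqrt_eq_zero'.2 hm, zero_pow hk, zero_mul]
  refine mul_nonpos_of_nonneg_of_nonpos (by positivity) (hf _ ?_ (hp hmem))
  have hρ2 : 0 < ρ ^ 2 := by positivity
  have hA := hρ2.trans_le hmem.1.1
  have hB := hρ2.trans_le hmem.2.1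
  have hsq := sq_mul_one_sub_apexCos_sq hA hB
  have hone : 0 ≤ 1 - apexCos τ (p.2 + 2 * τ * p.1) (p.2 - 2 * τ * p.1) ^ 2 :=
    nonneg_of_mul_nonneg_right (hsq ▸ by positivity)
      (by positivity : 0 < (√(p.2 + 2 * τ * p.1) * √(p.2 - 2 * τ * p.1)) ^ 2)
  exact (abs_le.1 ((sq_le_one_iff_abs_le_one _).1 (by linarith))).1

lemma isCompact_meridianShell (hτ : 0 < τ) : IsCompact (meridianShell ρ R τ) := by
  have hclosed : IsClosed (meridianShell ρ R τ) :=
    (isClosed_Icc.preimage (by fun_prop : Continuous fun p : ℝ × ℝ ↦ p.2 + 2 * τ * p.1)).inter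
      (isClosed_Icc.preimage (by fun_prop : Continuous fun p : ℝ × ℝ ↦ p.2 - 2 * τ * p.1))
  refine IsCompact.of_isClosed_subset (s := Set.Icc (-(R ^ 2 / (2 * τ))) (R ^ 2 / (2 * τ)) ×ˢ
    Set.Icc (ρ ^ 2) (R ^ 2)) (isCompact_Icc.prod isCompact_Icc) hclosed ?_
  rintro ⟨ξ, q⟩ ⟨⟨h₁, h₂⟩, h₃, h₄⟩
  dsimp only at h₁ h₂ h₃ h₄
  rw [Set.mem_prod, Set.mem_Icc, ← abs_le, le_div_iff₀ (by positivity), ← abs_of_pos hτ,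
    ← abs_two, ← abs_mul, ← abs_mul, abs_le]
  have := sq_nonneg ρ
  exact ⟨⟨by linarith, by linarith⟩, by dsimp only; linarith, by dsimp only; linarith⟩

lemma integrable_meridianIntegrand (f : Polynomial ℝ) (k : ℕ) (R : ℝ) (hρ : 0 < ρ) (hτ : 0 < τ) :
    Integrable (meridianIntegrand f ρ R τ k) := by
  have heq : meridianIntegrand f ρ R τ k = (meridianShell ρ R τ).indicator fun p ↦
      √(p.2 - (τ ^ 2 + p.1 ^ 2)) ^ k *
        f.eval (apexCos τ (p.2 + 2 * τ * p.1) (p.2 - 2 * τ * p.1)) := by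
    ext p
    by_cases hp : p ∈ meridianShell ρ R τ
    · rw [meridianIntegrand_of_mem hp, Set.indicator_of_mem hp]
    · rw [meridianIntegrand_of_notMem hp, Set.indicator_of_notMem hp]
  rw [heq, integrable_indicator_iff (isCompact_meridianShell hτ).measurableSet]
  refine ContinuousOn.integrableOn_compact (isCompact_meridianShell hτ) (.mul (by fun_prop) ?_)
  refine f.continuous.comp_continuousOn (.div (by fun_prop) (by fun_prop) fun p hp ↦ ?_)
  have hρ2 : 0 < ρ ^ 2 := by positivity
  have hA := hρ2.trans_le hp.1.1
  have hB := hρ2.trans_le hp.2.1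
  positivity

lemma integral_shellKernel_nonpos_of_meridian (hn : 4 ≤ n) (hρ : 0 < ρ) (hR : 0 ≤ R) (hτ : 0 < τ)
    {w : EuclideanSpace ℝ (Fin n)} (hw : ‖w‖ = 2 * τ)
    (h : ∫ p, meridianIntegrand f ρ R τ (n - 3) p ≤ 0) :
    ∫ z, shellKernel f ρ R z (z - w) ≤ 0 := by
  have hint := integrable_shellKernel_sub f ρ R w
  simp only [shellKernel_sub_eq hρ.le hR _ hw] at hint ⊢
  obtain ⟨κ, hκ, heq⟩ := exists_integral_comp_two_dist_eq (k := n - 3) (by omega)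
    (by rw [finrank_euclideanSpace_fin]; omega) (shellKernelOfSq f ρ R τ) hτ hw hint
  rw [heq]
  rw [Measure.volume_eq_prod, integral_prod _ (integrable_meridianIntegrand f _ R hρ hτ)] at h
  exact mul_nonpos_of_nonneg_of_nonpos hκ h

end Meridian

/-! ### Boundary-layer estimates -/

section BoundaryLayer

variable {A B C Q τ b h g u η : ℝ}

lemma sqrt_mul_sqrt_mem_Icc (hQ : 0 < Q) (hA : A ∈ Set.Icc 0 Q) (hB : B ∈ Set.Icc 0 Q)
    (hAB : A + B = 2 * (Q * (1 - b))) (hb₀ : 0 ≤ b) (hb : b ≤ 1 / 4) :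
    √A * √B ∈ Set.Icc (Q * (1 - b - b ^ 2)) (Q * (1 - b)) := by
  rw [← sqrt_mul hA.1]
  constructor
  · refine le_sqrt_of_sq_le ?_
    have hcorner : 0 ≤ (Q - A) * (Q - B) := mul_nonneg (by linarith [hA.2]) (by linarith [hB.2])
    have hpoly : (1 - b - b ^ 2) ^ 2 ≤ 1 - 2 * b := by
      nlinarith [pow_nonneg hb₀ 2, pow_nonneg hb₀ 3]
    calc (Q * (1 - b - b ^ 2)) ^ 2 = Q ^ 2 * (1 - b - b ^ 2) ^ 2 := mul_pow ..
      _ ≤ Q ^ 2 * (1 - 2 * b) := by gcongr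
      _ ≤ A * B := by linear_combination hcorner - Q * hAB
  · refine sqrt_le_iff.2 ⟨mul_nonneg hQ.le (by linarith), ?_⟩
    have hmean : Q * (1 - b) = (A + B) / 2 := by linarith
    rw [hmean]
    linear_combination sq_nonneg ((A - B) / 2)

lemma exp_neg_add_sq_le_one_sub {t : ℝ} (ht₀ : 0 ≤ t) (ht : t ≤ 1 / 2) :
    exp (-(t + t ^ 2)) ≤ 1 - t := by
  have hquad := quadratic_le_exp_of_nonneg (by positivity : 0 ≤ t + t ^ 2)
  rw [exp_neg, inv_le_comm₀ (exp_pos _) (by linarith), inv_le_iff_one_le_mul₀ (by linarith)]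
  refine le_trans ?_ (mul_le_mul_of_nonneg_right hquad (by linarith))
  have hkey : 0 ≤ t ^ 2 * (1 + t + t ^ 2) * (1 - 2 * t) := by
    have := sub_nonneg.2 ht
    have : 0 ≤ 1 - 2 * t := by linarith
    positivity
  nlinarith [pow_nonneg ht₀ 2, pow_nonneg ht₀ 3, pow_nonneg ht₀ 4]

lemma abs_pow_sub_exp_neg_le (n : ℕ) (hb₀ : 0 ≤ b) (hb : b ≤ 1 / 4)
    (hg : g ∈ Set.Icc (1 - b - b ^ 2) (1 - b)) : |g ^ n - exp (-(n * b))| ≤ 3 * n * b ^ 2 := by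
  have hlower : exp (-(b + 3 * b ^ 2)) ≤ g := by
    refine le_trans ?_ ((exp_neg_add_sq_le_one_sub (by positivity) (by nlinarith)).trans
      (by linarith [hg.1] : 1 - (b + b ^ 2) ≤ g))
    rw [exp_le_exp, neg_le_neg_iff]
    nlinarith [pow_nonneg hb₀ 2, pow_nonneg hb₀ 3]
  have hpow_le : g ^ n ≤ exp (-(n * b)) := by
    rw [← mul_neg, exp_nat_mul]
    exact pow_le_pow_left₀ ((exp_pos _).le.trans hlower)
      (hg.2.trans (by linarith [add_one_le_exp (-b)])) n
  have hle_pow : exp (-(n * b)) * exp (-(3 * n * b ^ 2)) ≤ g ^ n := by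
    refine le_of_eq_of_le ?_ (pow_le_pow_left₀ (exp_pos _).le hlower n)
    rw [← exp_nat_mul, ← exp_add]
    congr 1
    ring
  have hexp : exp (-(n * b)) ≤ 1 := exp_le_one_iff.2 (by rw [neg_nonpos]; positivity)
  have hloss : exp (-(n * b)) * (3 * n * b ^ 2) ≤ 3 * n * b ^ 2 :=
    mul_le_of_le_one_left (by positivity) hexp
  rw [abs_le]
  constructor <;> nlinarith [add_one_le_exp (-(3 * n * b ^ 2)), exp_pos (-(n * b))]

lemma div_sub_mem_Icc (hC : C ∈ Set.Icc 0 (1 / 2)) (hb₀ : 0 ≤ b) (hb : b ≤ 1 / 4) (hh : 0 ≤ h)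
    (hu : u ∈ Set.Icc ((1 - C) * (1 - h)) (1 - C)) (hg : g ∈ Set.Icc (1 - b - b ^ 2) (1 - b)) :
    (1 - b - u) / g - C ∈ Set.Icc (-(2 * b)) ((1 - C) * (h - b) + 3 * b ^ 2 + 2 * b * h) := by
  obtain ⟨hC₀, hC₁⟩ := hC
  obtain ⟨hu₁, hu₂⟩ := hu
  obtain ⟨hg₁, hg₂⟩ := hg
  have hg₀ : 11 / 16 ≤ g := by nlinarith
  have hCg : C * (1 - b - b ^ 2) ≤ C * g := by gcongr
  have hCg' : C * g ≤ C * (1 - b) := by gcongr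
  rw [div_sub' (by linarith), Set.mem_Icc, le_div_iff₀ (by linarith), div_le_iff₀ (by linarith)]
  refine ⟨by nlinarith, ?_⟩
  have hbh : 0 ≤ b * h := by positivity
  have hnum : 1 - b - u - g * C ≤ (1 - C) * (h - b) + b ^ 2 / 2 := by nlinarith
  refine hnum.trans ?_
  generalize hS : (1 - C) * (h - b) + 3 * b ^ 2 + 2 * b * h = S
  rcases le_total S 0 with hneg | hpos
  · nlinarith
  · have hSle : S ≤ 3 / 2 * h + b / 4 := by nlinarith
    nlinarith [mul_le_mul_of_nonneg_left hg₁ hpos, mul_le_mul_of_nonneg_left hSle hb₀,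
      mul_le_mul_of_nonneg_left hb (mul_nonneg hb₀ hpos)]

lemma abs_sqrt_div_sqrt_pow_three_sub_one_le {m : ℝ} (hm : 0 < m) (hmu : m ≤ u)
    (hu : u ≤ (1 + η) * m) (hη : η ≤ 1) : |(√u / √m) ^ 3 - 1| ≤ 3 * η := by
  have hp : 1 ≤ √u / √m := (one_le_div₀ (sqrt_pos.2 hm)).2 (sqrt_le_sqrt hmu)
  have hp2 : (√u / √m) ^ 2 ≤ 1 + η := by
    rwa [div_pow, sq_sqrt (hm.le.trans hmu), sq_sqrt hm.le, div_le_iff₀ hm]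
  rw [abs_of_nonneg (sub_nonneg.2 (one_le_pow₀ hp)), sub_le_iff_le_add]
  calc (√u / √m) ^ 3 ≤ ((√u / √m) ^ 2) ^ 2 := by
        rw [← pow_mul]
        exact pow_le_pow_right₀ hp (by norm_num)
    _ ≤ (1 + η) ^ 2 := by gcongr
    _ ≤ 3 * η + 1 := by nlinarith [one_le_pow₀ hp (n := 2)]

lemma mul_mul_le_of_abs_sub_le {E E₀ p z ε₁ ε₂ : ℝ} (hE₀ : 0 ≤ E) (hE₁ : E ≤ 1)
    (hE : |E - E₀| ≤ ε₁) (hp : |p - 1| ≤ ε₂) (hz : |z| ≤ η) :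
    p * E * z ≤ E₀ * z + (ε₁ + ε₂) * η := by
  have hpE : |(p - 1) * E| ≤ ε₂ := by
    rw [abs_mul, abs_of_nonneg hE₀]
    exact (mul_le_of_le_one_right (abs_nonneg _) hE₁).trans hp
  have hdiff : |p * E - E₀| ≤ ε₁ + ε₂ :=
    calc |p * E - E₀| = |(E - E₀) + (p - 1) * E| := by congr 1; ring
      _ ≤ ε₁ + ε₂ := (abs_add_le _ _).trans (add_le_add hE hpE)
  calc p * E * z = E₀ * z + (p * E - E₀) * z := by ring
    _ ≤ E₀ * z + |(p * E - E₀) * z| := by gcongr; exact le_abs_self _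
    _ ≤ E₀ * z + (ε₁ + ε₂) * η := by
      rw [abs_mul]
      gcongr
      exact (abs_nonneg _).trans hdiff

lemma sqrt_pow_sub_three_mul_eq {n : ℕ} {m F t : ℝ} (hn : 3 ≤ n) (hm : 0 < m) (hg : 0 < g)
    (hτ : 0 < τ) (hQ : 0 < Q) (hu : 0 < u) (h : g ^ 2 * (1 - t ^ 2) = 4 * τ ^ 2 * m) :
    √m ^ (n - 3) * F =
      (Q / (2 * τ)) ^ n / √u ^ 3 * ((√u / √m) ^ 3 * (g / Q) ^ n * (F * √(1 - t ^ 2) ^ n)) := by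
  have hsqrt : √m = g / (2 * τ) * √(1 - t ^ 2) := by
    rw [sqrt_eq_iff_eq_sq hm.le (by positivity), mul_pow, sq_sqrt]
    · field_simp
      linarith
    · exact nonneg_of_mul_nonneg_right (h ▸ by positivity) (pow_pos hg 2)
  have hpow : √m ^ n = (Q / (2 * τ)) ^ n * (g / Q) ^ n * √(1 - t ^ 2) ^ n := by
    rw [hsqrt, ← mul_pow, ← mul_pow]
    congr 2
    field_simp
  have := sqrt_pos.2 hu
  rw [pow_sub₀ _ (sqrt_pos.2 hm).ne' hn, hpow]
  field_simp

end BoundaryLayer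

section CriticalCase

variable {n : ℕ} {f : Polynomial ℝ} {p : ℝ × ℝ} {A B b c X ε ξ C s K R τ : ℝ}

/-- The parameters of the critical case of the kernel estimate: centers at distance `2 * τ` with
`τ` within `c / n` of `1`, a node `s` within `2 / n` of `C = cos θ`, and a boundary layer of
relative depth `X / n` in the shell of outer radius `R = (1 + c / n) / sin (θ / 2)`. -/
structure CriticalLayer (n : ℕ) (c X ε C s R τ : ℝ) : Prop where
  c_mem : c ∈ Set.Ioo 0 1
  twelve_le : 12 ≤ X
  ε_mem : ε ∈ Set.Ioc 0 1
  large : 1000 * X ^ 3 ≤ ε * n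
  C_mem : C ∈ Set.Icc 0 (1 / 2)
  s_mem : s ∈ Set.Icc C (C + 2 / n)
  R_pos : 0 < R
  sq_mul : R ^ 2 * (1 - C) = 2 * (1 + c / n) ^ 2
  τ_mem : τ ∈ Set.Icc 1 (1 + c / n)

namespace CriticalLayer

lemma natCast_pos (H : CriticalLayer n c X ε C s R τ) : 0 < (n : ℝ) := by
  have := H.twelve_le
  exact pos_of_mul_pos_right ((by positivity : 0 < 1000 * X ^ 3).trans_le H.large) H.ε_mem.1.le

lemma four_le (H : CriticalLayer n c X ε C s R τ) : 4 ≤ n := by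
  have hX := H.twelve_le
  have hX3 : (12 : ℝ) ^ 3 ≤ X ^ 3 := by gcongr
  have hn : (4 : ℝ) ≤ n := by nlinarith [H.large, H.ε_mem.2, H.natCast_pos]
  exact_mod_cast hn

lemma cube_div_le (H : CriticalLayer n c X ε C s R τ) : X ^ 3 / n ≤ ε / 1000 := by
  rw [div_le_div_iff₀ H.natCast_pos (by norm_num)]
  linarith [H.large]

lemma sq_div_le (H : CriticalLayer n c X ε C s R τ) : X ^ 2 / n ≤ X ^ 3 / n / 12 := by
  have hX := H.twelve_le
  rw [div_right_comm]
  exact div_le_div_of_nonneg_right (by nlinarith [sq_nonneg X]) H.natCast_pos.le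

lemma div_le (H : CriticalLayer n c X ε C s R τ) : X / n ≤ X ^ 2 / n / 12 := by
  have hX := H.twelve_le
  rw [div_right_comm]
  exact div_le_div_of_nonneg_right (by nlinarith) H.natCast_pos.le

lemma div_le_thousandth (H : CriticalLayer n c X ε C s R τ) : X / n ≤ 1 / 1000 := by
  linarith [H.div_le, H.sq_div_le, H.cube_div_le, H.ε_mem.1, H.ε_mem.2]

lemma inv_le (H : CriticalLayer n c X ε C s R τ) : 1 / n ≤ X / n / 12 := by
  have hX := H.twelve_le
  rw [div_right_comm]
  exact div_le_div_of_nonneg_right (by linarith) H.natCast_pos.le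

lemma c_div_mem (H : CriticalLayer n c X ε C s R τ) : c / n ∈ Set.Ioo 0 (1 / (n : ℝ)) :=
  ⟨div_pos H.c_mem.1 H.natCast_pos, div_lt_div_of_pos_right H.c_mem.2 H.natCast_pos⟩

lemma sq_mem (H : CriticalLayer n c X ε C s R τ) : R ^ 2 ∈ Set.Icc 2 5 := by
  have hsq := H.sq_mul
  obtain ⟨⟨hC₀, hC₁⟩, hc₀, hc₁⟩ := And.intro H.C_mem H.c_div_mem
  have := H.inv_le
  have := H.div_le_thousandth
  constructor <;> nlinarith [sq_nonneg R]

lemma apexCos_le_of_far (H : CriticalLayer n c X ε C s R τ)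
    (hp : p ∈ meridianShell (3 / 4 * R) R τ) (hfar : p.2 ≤ R ^ 2 * (1 - X / n)) :
    apexCos τ (p.2 + 2 * τ * p.1) (p.2 - 2 * τ * p.1) ≤ C := by
  obtain ⟨⟨hC₀, hC₁⟩, hc₀, hc₁⟩ := And.intro H.C_mem H.c_div_mem
  have hinv := H.inv_le
  have hx := H.div_le_thousandth
  have hsq := H.sq_mul
  refine apexCos_le H.R_pos hp.1 hp.2 ⟨hC₀, by linarith⟩ (x := X / n)
    ⟨by linarith, by linarith⟩ (by linarith) ?_
  have hk : (1 + c / n) ^ 2 ≤ 1 + X / n / 5 := by nlinarith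
  calc R ^ 2 * (2 * (1 - C) * (1 - X / n / 2) + (X / n / 2) ^ 2)
      = 4 * ((1 + c / n) ^ 2 * (1 - X / n / 2)) + R ^ 2 * (X / n / 2) ^ 2 := by
        linear_combination 2 * (1 - X / n / 2) * hsq
    _ ≤ 4 * ((1 + X / n / 5) * (1 - X / n / 2)) + 5 * (X / n / 2) ^ 2 := by
        gcongr
        · linarith
        · exact H.sq_mem.2
    _ ≤ 4 := by nlinarith
    _ ≤ 4 * τ ^ 2 := by linarith [one_le_pow₀ H.τ_mem.1 (n := 2)]

lemma sqrt_mul_sqrt_div_mem (H : CriticalLayer n c X ε C s R τ) (hb : b ∈ Set.Icc 0 (X / n))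
    (hA : A ∈ Set.Icc ((3 / 4 * R) ^ 2) (R ^ 2))
    (hB : B ∈ Set.Icc ((3 / 4 * R) ^ 2) (R ^ 2)) (hAB : A + B = 2 * (R ^ 2 * (1 - b))) :
    √A * √B / R ^ 2 ∈ Set.Icc (1 - b - b ^ 2) (1 - b) := by
  have hR : 0 < R ^ 2 := pow_pos H.R_pos 2
  have hx := H.div_le_thousandth
  obtain ⟨h₁, h₂⟩ := sqrt_mul_sqrt_mem_Icc hR (Set.Icc_subset_Icc_left (sq_nonneg _) hA)
    (Set.Icc_subset_Icc_left (sq_nonneg _) hB) hAB hb.1 (by linarith [hb.2])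
  exact ⟨(le_div_iff₀' hR).2 h₁, (div_le_iff₀' hR).2 h₂⟩

lemma apexCos_sub_mem (H : CriticalLayer n c X ε C s R τ) (hb : b ∈ Set.Icc 0 (X / n))
    (hA : A ∈ Set.Icc ((3 / 4 * R) ^ 2) (R ^ 2))
    (hB : B ∈ Set.Icc ((3 / 4 * R) ^ 2) (R ^ 2)) (hAB : A + B = 2 * (R ^ 2 * (1 - b))) :
    apexCos τ A B - C ∈ Set.Icc (-(2 * b))
      ((1 - C) * (2 * (c / n) - b) + 3 * b ^ 2 + 2 * b * (2 * (c / n))) := by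
  have hR₀ := H.R_pos
  have hR : 0 < R ^ 2 := pow_pos hR₀ 2
  have heq : apexCos τ A B = (1 - b - 2 * τ ^ 2 / R ^ 2) / (√A * √B / R ^ 2) := by
    rw [apexCos, hAB]
    field_simp
    ring
  obtain ⟨hτ₁, hτ₂⟩ := H.τ_mem
  obtain ⟨hc₀, -⟩ := H.c_div_mem
  have hx := H.div_le_thousandth
  have hsq := H.sq_mul
  rw [heq]
  refine div_sub_mem_Icc H.C_mem hb.1 (by linarith [hb.2]) (by linarith) ?_
    (H.sqrt_mul_sqrt_div_mem hb hA hB hAB)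
  rw [Set.mem_Icc, le_div_iff₀' hR, div_le_iff₀' hR, ← mul_assoc, hsq]
  have hprod : (1 + c / n) ^ 2 * (1 - 2 * (c / n)) ≤ 1 := by nlinarith [sq_nonneg (c / n)]
  have := pow_le_pow_left₀ (by linarith) hτ₂ 2
  exact ⟨by nlinarith, by linarith⟩

lemma abs_apexCos_sub_le (H : CriticalLayer n c X ε C s R τ) (hb : b ∈ Set.Icc 0 (X / n))
    (hA : A ∈ Set.Icc ((3 / 4 * R) ^ 2) (R ^ 2))
    (hB : B ∈ Set.Icc ((3 / 4 * R) ^ 2) (R ^ 2)) (hAB : A + B = 2 * (R ^ 2 * (1 - b))) :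
    |apexCos τ A B - s| ≤ 4 * (X / n) := by
  obtain ⟨⟨hC₀, hC₁⟩, hc₀, hc₁⟩ := And.intro H.C_mem H.c_div_mem
  obtain ⟨⟨hT₁, hT₂⟩, hb₀, hb₁⟩ := And.intro (H.apexCos_sub_mem hb hA hB hAB) hb
  obtain ⟨hs₁, hs₂⟩ := H.s_mem
  have hx := H.div_le_thousandth
  have hinv := H.inv_le
  have htwo : 2 / (n : ℝ) = 2 * (1 / n) := by ring
  rw [abs_le]
  constructor <;> nlinarith

lemma sub_one_le_mul_sub (H : CriticalLayer n c X ε C s R τ) (hb : b ∈ Set.Icc 0 (X / n))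
    (hξ : |2 * τ * ξ| ≤ R ^ 2 * b) :
    R ^ 2 - 1 ≤ (1 + 14 * (X / n)) * (R ^ 2 * (1 - b) - (τ ^ 2 + ξ ^ 2)) := by
  obtain ⟨hτ₁, hτ₂⟩ := H.τ_mem
  obtain ⟨hR₂, hR₅⟩ := H.sq_mem
  obtain ⟨hc₀, hc₁⟩ := H.c_div_mem
  have hx := H.div_le_thousandth
  have hinv := H.inv_le
  have hRb : R ^ 2 * b ≤ 5 * (X / n) := mul_le_mul hR₅ hb.2 hb.1 (by norm_num)
  have hξ2 : 4 * τ ^ 2 * ξ ^ 2 ≤ (5 * (X / n)) ^ 2 := by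
    calc 4 * τ ^ 2 * ξ ^ 2 = |2 * τ * ξ| ^ 2 := by rw [sq_abs]; ring
      _ ≤ (5 * (X / n)) ^ 2 := pow_le_pow_left₀ (abs_nonneg _) (hξ.trans hRb) 2
  have hτ : 1 ≤ τ ^ 2 := one_le_pow₀ hτ₁
  have hτ' : τ ^ 2 ≤ 1 + X / n := by nlinarith
  have hξ' : ξ ^ 2 ≤ X / n := by nlinarith [sq_nonneg ξ]
  have hsub : R ^ 2 - 1 - 7 * (X / n) ≤ R ^ 2 * (1 - b) - (τ ^ 2 + ξ ^ 2) := by linarith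
  calc R ^ 2 - 1 ≤ (1 + 14 * (X / n)) * (R ^ 2 - 1 - 7 * (X / n)) := by nlinarith
    _ ≤ (1 + 14 * (X / n)) * (R ^ 2 * (1 - b) - (τ ^ 2 + ξ ^ 2)) := by gcongr; linarith

lemma mem_meridianShell (H : CriticalLayer n c X ε C s R τ) (hb : b ∈ Set.Icc 0 (X / n))
    (hξ : |2 * τ * ξ| ≤ R ^ 2 * b) :
    (ξ, R ^ 2 * (1 - b)) ∈ meridianShell (3 / 4 * R) R τ := by
  obtain ⟨hξ₁, hξ₂⟩ := abs_le.1 hξ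
  have hRb : R ^ 2 * b ≤ R ^ 2 * (1 / 1000) := by gcongr; exact hb.2.trans H.div_le_thousandth
  refine ⟨⟨?_, ?_⟩, ?_, ?_⟩ <;> dsimp only <;> linarith [sq_nonneg R]

lemma abs_sqrt_div_sqrt_pow_three_sub_one_le (H : CriticalLayer n c X ε C s R τ)
    (hb : b ∈ Set.Icc 0 (X / n)) (hξ : |2 * τ * ξ| ≤ R ^ 2 * b) :
    0 < R ^ 2 * (1 - b) - (τ ^ 2 + ξ ^ 2) ∧
      |(√(R ^ 2 - 1) / √(R ^ 2 * (1 - b) - (τ ^ 2 + ξ ^ 2))) ^ 3 - 1| ≤ 42 * (X / n) := by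
  have hu := H.sub_one_le_mul_sub hb hξ
  have hx := H.div_le_thousandth
  have hm : 0 < R ^ 2 * (1 - b) - (τ ^ 2 + ξ ^ 2) :=
    pos_of_mul_pos_right (lt_of_lt_of_le (by linarith [H.sq_mem.1]) hu)
      (by linarith [hb.1, hb.2])
  have hRb : 0 ≤ R ^ 2 * b := mul_nonneg (sq_nonneg R) hb.1
  refine ⟨hm, (SpherePacking.abs_sqrt_div_sqrt_pow_three_sub_one_le hm ?_ hu ?_).trans_eq ?_⟩
  · linarith [one_le_pow₀ H.τ_mem.1 (n := 2), sq_nonneg ξ]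
  · linarith
  · ring

lemma eval_mul_sqrt_pow_le (H : CriticalLayer n c X ε C s R τ) (hK : 0 < K)
    (hf : ∀ t, |t - s| ≤ 4 * X / n →
      |f.eval t * √(1 - t ^ 2) ^ n - K * (t - s)| ≤ ε / (16 * X) * (K * |t - s|))
    (hb : b ∈ Set.Icc 0 (X / n)) (hA : A ∈ Set.Icc ((3 / 4 * R) ^ 2) (R ^ 2))
    (hB : B ∈ Set.Icc ((3 / 4 * R) ^ 2) (R ^ 2)) (hAB : A + B = 2 * (R ^ 2 * (1 - b))) :
    f.eval (apexCos τ A B) * √(1 - apexCos τ A B ^ 2) ^ n ≤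
      K / n * ((1 - C) * (2 * c - n * b) + (4 * (X ^ 2 / n) + ε / 4)) := by
  have hTs := H.abs_apexCos_sub_le hb hA hB hAB
  have hT := (H.apexCos_sub_mem hb hA hB hAB).2
  generalize apexCos τ A B = T at hTs hT ⊢
  have hn := H.natCast_pos
  have hX := H.twelve_le
  have hlin : T - s ≤ ((1 - C) * (2 * c - n * b) + 4 * (X ^ 2 / n)) / n := by
    have hb2 : b ^ 2 ≤ (X / n) ^ 2 := pow_le_pow_left₀ hb.1 hb.2 2
    have hbc : b * (c / n) ≤ X / n * (1 / n) :=
      mul_le_mul hb.2 H.c_div_mem.2.le H.c_div_mem.1.le (hb.1.trans hb.2)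
    have hXn : X / n * (1 / n) ≤ (X / n) ^ 2 / 12 := by
      nlinarith [H.inv_le, hb.1.trans hb.2]
    have hsplit : ((1 - C) * (2 * c - n * b) + 4 * (X ^ 2 / n)) / n =
        (1 - C) * (2 * (c / n) - b) + 4 * (X / n) ^ 2 := by field_simp
    rw [hsplit]
    linarith [H.s_mem.1, sq_nonneg (X / n)]
  have herr : ε / (16 * X) * (K * |T - s|) ≤ K * (ε / 4 / n) := by
    have := H.ε_mem.1
    calc ε / (16 * X) * (K * |T - s|) ≤ ε / (16 * X) * (K * (4 * (X / n))) := by gcongr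
      _ = K * (ε / 4 / n) := by field_simp; norm_num
  have hmain := (abs_le.1 (hf T (by rwa [mul_div_assoc]))).2
  calc f.eval T * √(1 - T ^ 2) ^ n ≤ K * (T - s) + K * (ε / 4 / n) := by linarith
    _ ≤ K * (((1 - C) * (2 * c - n * b) + 4 * (X ^ 2 / n)) / n) + K * (ε / 4 / n) := by gcongr
    _ = K / n * ((1 - C) * (2 * c - n * b) + (4 * (X ^ 2 / n) + ε / 4)) := by ring

lemma mul_mul_le_exp_mul_add (H : CriticalLayer n c X ε C s R τ) (hb : b ∈ Set.Icc 0 (X / n))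
    {E q : ℝ} (hE₀ : 0 ≤ E) (hE₁ : E ≤ 1) (hE : |E - exp (-(n * b))| ≤ 3 * n * b ^ 2)
    (hq : |q - 1| ≤ 42 * (X / n)) :
    q * E * ((1 - C) * (2 * c - n * b) + (4 * (X ^ 2 / n) + ε / 4)) ≤
      (1 - C) * (exp (-(n * b)) * (2 * c - n * b) + ε) := by
  have hn := H.natCast_pos
  have hX := H.twelve_le
  obtain ⟨⟨hC₀, hC₁⟩, hc₀, hc₁⟩ := And.intro H.C_mem H.c_mem
  have hnb : 0 ≤ n * b := mul_nonneg hn.le hb.1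
  have hnb' : n * b ≤ X := (le_div_iff₀' hn).1 hb.2
  have hcube := H.cube_div_le
  have hsq := H.sq_div_le
  have hε₁ := H.ε_mem.2
  have hz : |(1 - C) * (2 * c - n * b) + (4 * (X ^ 2 / n) + ε / 4)| ≤ 2 * X := by
    have : 0 ≤ X ^ 2 / n := by positivity
    rw [abs_le]
    constructor <;> nlinarith
  have hE' : 3 * n * b ^ 2 ≤ 3 * (X ^ 2 / n) :=
    calc 3 * n * b ^ 2 = 3 * ((n * b) ^ 2 / n) := by field_simp
      _ ≤ 3 * (X ^ 2 / n) := by gcongr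
  have hXcube : X ^ 2 / n * X = X ^ 3 / n := by ring
  have hmain := mul_mul_le_of_abs_sub_le hE₀ hE₁ (hE.trans hE') hq hz
  have hexp : exp (-(n * b)) * (4 * (X ^ 2 / n) + ε / 4) ≤ 4 * (X ^ 2 / n) + ε / 4 :=
    mul_le_of_le_one_left (by have := H.ε_mem.1; positivity) (exp_le_one_iff.2 (by linarith))
  have hCε : ε / 2 ≤ (1 - C) * ε := by nlinarith [H.ε_mem.1]
  have hXsq : X / n * X = X ^ 2 / n := by ring
  linarith [H.ε_mem.1]

lemma exists_meridianIntegrand_le (H : CriticalLayer n c X ε C s R τ) (hK : 0 < K)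
    (hf : ∀ t, |t - s| ≤ 4 * X / n →
      |f.eval t * √(1 - t ^ 2) ^ n - K * (t - s)| ≤ ε / (16 * X) * (K * |t - s|)) :
    ∃ κ ≥ 0, ∀ ξ, ∀ b ∈ Set.Icc 0 (X / n), |2 * τ * ξ| ≤ R ^ 2 * b →
      meridianIntegrand f (3 / 4 * R) R τ (n - 3) (ξ, R ^ 2 * (1 - b)) ≤
        κ * (exp (-(n * b)) * (2 * c - n * b) + ε) := by
  have hR₁ : 0 < R ^ 2 - 1 := by linarith [H.sq_mem.1]
  have hR : 0 < R ^ 2 := by linarith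
  have hτ : 0 < τ := zero_lt_one.trans_le H.τ_mem.1
  have hn := H.natCast_pos
  have h1C : 0 < 1 - C := by linarith [H.C_mem.2]
  refine ⟨(R ^ 2 / (2 * τ)) ^ n / √(R ^ 2 - 1) ^ 3 * (K / n) * (1 - C), by positivity,
    fun ξ b hb hξ ↦ ?_⟩
  have hp := H.mem_meridianShell hb hξ
  obtain ⟨hm, hq⟩ := H.abs_sqrt_div_sqrt_pow_three_sub_one_le hb hξ
  have hρ : 0 < (3 / 4 * R) ^ 2 := by linarith
  have hA := hρ.trans_le hp.1.1
  have hB := hρ.trans_le hp.2.1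
  have hAB : (R ^ 2 * (1 - b) + 2 * τ * ξ) + (R ^ 2 * (1 - b) - 2 * τ * ξ) =
    2 * (R ^ 2 * (1 - b)) := by ring
  have hF := H.eval_mul_sqrt_pow_le hK hf hb hp.1 hp.2 hAB
  have hg := H.sqrt_mul_sqrt_div_mem hb hp.1 hp.2 hAB
  have hsq := sq_mul_one_sub_apexCos_sq hA hB
  rw [meridianIntegrand_of_mem hp]
  dsimp only at hA hB hsq hF hg ⊢
  rw [sqrt_pow_sub_three_mul_eq (by linarith [H.four_le]) hm (by positivity) hτ hR hR₁ hsq]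
  have hfinal := H.mul_mul_le_exp_mul_add hb (by positivity)
    (pow_le_one₀ (n := n) (by positivity) (hg.2.trans (by linarith [hb.1])))
    (abs_pow_sub_exp_neg_le n hb.1 (by linarith [hb.2, H.div_le_thousandth]) hg) hq
  refine (mul_le_mul_of_nonneg_left (mul_le_mul_of_nonneg_left hF (by positivity))
    (by positivity)).trans ?_
  have hscaled := mul_le_mul_of_nonneg_left hfinal
    (by positivity : 0 ≤ (R ^ 2 / (2 * τ)) ^ n / √(R ^ 2 - 1) ^ 3 * (K / n))
  linarith

end CriticalLayer

end CriticalCase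

section BoundaryWedge

variable {n : ℕ} {f : Polynomial ℝ} {φ : ℝ → ℝ} {c m w X ε C K s R τ : ℝ}

/-- The triangle that `meridianShell ρ R τ` cuts off at its vertex `(0, R ^ 2)`, up to depth `w` in
the second coordinate (with `Q = R ^ 2`, and for `w` small compared to `R ^ 2 - ρ ^ 2`). -/
def boundaryWedge (Q w τ : ℝ) : Set (ℝ × ℝ) := {p | |2 * τ * p.1| ≤ Q - p.2 ∧ Q - p.2 ≤ w}

lemma isCompact_boundaryWedge (Q w : ℝ) (hτ : 0 < τ) : IsCompact (boundaryWedge Q w τ) := by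
  have hclosed : IsClosed (boundaryWedge Q w τ) :=
    (isClosed_le (f := fun p : ℝ × ℝ ↦ |2 * τ * p.1|) (g := fun p ↦ Q - p.2)
      (by fun_prop) (by fun_prop)).inter
    (isClosed_le (f := fun p : ℝ × ℝ ↦ Q - p.2) (g := fun _ ↦ w) (by fun_prop) (by fun_prop))
  refine IsCompact.of_isClosed_subset (s := Set.Icc (-(w / (2 * τ))) (w / (2 * τ)) ×ˢ
    Set.Icc (Q - w) Q) (isCompact_Icc.prod isCompact_Icc) hclosed ?_
  rintro ⟨ξ, q⟩ ⟨h₁, h₂⟩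
  dsimp only at h₁ h₂
  have hξ := abs_nonneg (2 * τ * ξ)
  rw [Set.mem_prod, Set.mem_Icc, ← abs_le, le_div_iff₀' (by positivity),
    ← abs_of_pos (by positivity : 0 < 2 * τ), ← abs_mul]
  exact ⟨h₁.trans h₂, by dsimp only; linarith, by dsimp only; linarith⟩

lemma integrable_indicator_boundaryWedge (hφ : Continuous φ) (Q w : ℝ) (hτ : 0 < τ) :
    Integrable ((boundaryWedge Q w τ).indicator fun p ↦ φ (Q - p.2)) := by
  have hcompact := isCompact_boundaryWedge Q w hτ
  rw [integrable_indicator_iff hcompact.measurableSet]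
  exact ContinuousOn.integrableOn_compact hcompact (by fun_prop)

lemma integral_indicator_boundaryWedge_fiber (φ : ℝ → ℝ) (Q w q : ℝ) (hτ : 0 < τ) :
    ∫ ξ, (boundaryWedge Q w τ).indicator (fun p ↦ φ (Q - p.2)) (ξ, q) =
      (Set.Icc (Q - w) Q).indicator (fun q ↦ τ⁻¹ * ((Q - q) * φ (Q - q))) q := by
  by_cases hq : q ∈ Set.Icc (Q - w) Q
  · have hmem (ξ : ℝ) : (ξ, q) ∈ boundaryWedge Q w τ ↔
        ξ ∈ Set.Icc (-((Q - q) / (2 * τ))) ((Q - q) / (2 * τ)) := by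
      rw [Set.mem_Icc, ← abs_le, le_div_iff₀' (by positivity),
        ← abs_of_pos (by positivity : 0 < 2 * τ), ← abs_mul]
      exact and_iff_left (by linarith [hq.1] : Q - q ≤ w)
    have hfiber : (fun ξ ↦ (boundaryWedge Q w τ).indicator (fun p ↦ φ (Q - p.2)) (ξ, q)) =
        (Set.Icc (-((Q - q) / (2 * τ))) ((Q - q) / (2 * τ))).indicator fun _ ↦ φ (Q - q) := by
      ext ξ
      simp only [Set.indicator, hmem]
    rw [hfiber, integral_indicator_const _ measurableSet_Icc, Set.indicator_of_mem hq,
      volume_real_Icc_of_le (neg_le_self (div_nonneg (by linarith [hq.2]) (by positivity))),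
      smul_eq_mul]
    field_simp
    ring
  · have hnot (ξ : ℝ) : (ξ, q) ∉ boundaryWedge Q w τ := fun ⟨h₁, h₂⟩ ↦
      hq ⟨by linarith, by linarith [abs_nonneg (2 * τ * ξ)]⟩
    simp only [Set.indicator_of_notMem (hnot _), Set.indicator_of_notMem hq, integral_zero]

lemma integral_indicator_boundaryWedge (hφ : Continuous φ) (Q : ℝ) (hw : 0 ≤ w) (hτ : 0 < τ) :
    ∫ p, (boundaryWedge Q w τ).indicator (fun p ↦ φ (Q - p.2)) p =
      τ⁻¹ * ∫ r in 0..w, r * φ r := by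
  have hint := integrable_indicator_boundaryWedge hφ Q w hτ
  rw [Measure.volume_eq_prod] at hint ⊢
  simp only [integral_prod_symm _ hint, integral_indicator_boundaryWedge_fiber φ Q w _ hτ]
  rw [integral_indicator measurableSet_Icc, integral_Icc_eq_integral_Ioc,
    ← intervalIntegral.integral_of_le (sub_le_self Q hw), intervalIntegral.integral_const_mul,
    intervalIntegral.integral_comp_sub_left (fun r ↦ r * φ r) Q, sub_self, sub_sub_cancel]

lemma integral_indicator_boundaryWedge_nonpos (hφ : Continuous φ) (Q : ℝ) (hX : 0 ≤ X)
    (hm : 0 < m) (hτ : 0 < τ) (h : ∫ a in 0..X, a * φ a ≤ 0) :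
    ∫ p, (boundaryWedge Q (m * X) τ).indicator (fun p ↦ φ ((Q - p.2) / m)) p ≤ 0 := by
  have hscale : ∫ r in 0..m * X, r * φ (r / m) = m ^ 2 * ∫ a in 0..X, a * φ a :=
    calc ∫ r in 0..m * X, r * φ (r / m) = ∫ r in 0..m * X, m * (r / m * φ (r / m)) := by
          congr with r
          field_simp
      _ = m ^ 2 * ∫ a in 0..X, a * φ a := by
          rw [intervalIntegral.integral_const_mul,
            intervalIntegral.integral_comp_div (fun a ↦ a * φ a) hm.ne', zero_div,
            mul_div_cancel_left₀ _ hm.ne', smul_eq_mul]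
          ring
  rw [integral_indicator_boundaryWedge (φ := fun r ↦ φ (r / m)) (by fun_prop) Q
    (by positivity) hτ, hscale]
  exact mul_nonpos_of_nonneg_of_nonpos (by positivity)
    (mul_nonpos_of_nonneg_of_nonpos (by positivity) h)

lemma integral_mul_exp_neg_mul_sub_add (c ε X : ℝ) :
    ∫ a in 0..X, a * (exp (-a) * (2 * c - a) + ε) =
      exp (-X) * (X ^ 2 + 2 * X + 2 - 2 * c * (1 + X)) + ε * X ^ 2 / 2 - (2 - 2 * c) := by
  have hderiv (a : ℝ) :
      HasDerivAt (fun a ↦ exp (-a) * (a ^ 2 + 2 * a + 2 - 2 * c * (1 + a)) + ε * a ^ 2 / 2)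
        (a * (exp (-a) * (2 * c - a) + ε)) a := by
    have hid := hasDerivAt_id' a
    have hsq : HasDerivAt (fun a : ℝ ↦ a ^ 2) (2 * a) a := by simpa using hasDerivAt_pow 2 a
    have hpoly := ((hsq.fun_add (hid.const_mul 2)).add_const 2).fun_sub
      ((hid.const_add 1).const_mul (2 * c))
    refine (((hasDerivAt_neg a).exp.fun_mul hpoly).fun_add
      ((hsq.const_mul ε).div_const 2)).congr_deriv ?_
    ring
  rw [intervalIntegral.integral_eq_sub_of_hasDerivAt (fun a _ ↦ hderiv a)
    (Continuous.intervalIntegrable (by fun_prop) _ _)]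
  simp

lemma exists_integral_mul_exp_neg_mul_sub_add_nonpos (hc : c ∈ Set.Ioo 0 1) :
    ∃ X ε : ℝ, 12 ≤ X ∧ ε ∈ Set.Ioc 0 1 ∧ ∫ a in 0..X, a * (exp (-a) * (2 * c - a) + ε) ≤ 0 := by
  obtain ⟨hc₀, hc₁⟩ := hc
  have htendsto : Tendsto (fun X : ℝ ↦ exp (-X) * (X ^ 2 + 2 * X + 2)) atTop (nhds 0) := by
    have h := ((tendsto_pow_mul_exp_neg_atTop_nhds_zero 2).add
      ((tendsto_pow_mul_exp_neg_atTop_nhds_zero 1).const_mul 2)).add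
      ((tendsto_pow_mul_exp_neg_atTop_nhds_zero 0).const_mul 2)
    simp only [mul_zero, add_zero] at h
    exact h.congr fun X ↦ by ring
  obtain ⟨X, hX, hX₁₂⟩ := ((htendsto.eventually (ge_mem_nhds (sub_pos.2 hc₁))).and
    (eventually_ge_atTop 12)).exists
  refine ⟨X, (1 - c) / X ^ 2, hX₁₂, ⟨div_pos (by linarith) (by positivity), ?_⟩, ?_⟩
  · rw [div_le_one (by positivity)]
    nlinarith
  rw [integral_mul_exp_neg_mul_sub_add, div_mul_cancel₀ _ (by positivity)]
  have : 0 ≤ exp (-X) * (2 * c * (1 + X)) := by positivity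
  linarith

namespace CriticalLayer

lemma exists_meridianIntegrand_le_indicator (H : CriticalLayer n c X ε C s R τ) (hK : 0 < K)
    (hf : ∀ t, |t - s| ≤ 4 * X / n →
      |f.eval t * √(1 - t ^ 2) ^ n - K * (t - s)| ≤ ε / (16 * X) * (K * |t - s|))
    (hf₀ : ∀ t, -1 ≤ t → t ≤ s → f.eval t ≤ 0) :
    ∃ κ ≥ 0, ∀ p, meridianIntegrand f (3 / 4 * R) R τ (n - 3) p ≤
      κ * (boundaryWedge (R ^ 2) (R ^ 2 / n * X) τ).indicator (fun p ↦
        exp (-((R ^ 2 - p.2) / (R ^ 2 / n))) * (2 * c - (R ^ 2 - p.2) / (R ^ 2 / n)) + ε) p := by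
  obtain ⟨κ, hκ, hle⟩ := H.exists_meridianIntegrand_le hK hf
  have hR := H.R_pos
  have hn := H.natCast_pos
  refine ⟨κ, hκ, fun ⟨ξ, q⟩ ↦ ?_⟩
  by_cases hp : (ξ, q) ∈ boundaryWedge (R ^ 2) (R ^ 2 / n * X) τ
  · rw [Set.indicator_of_mem hp]
    obtain ⟨h₁, h₂⟩ := hp
    dsimp only at h₁ h₂ ⊢
    have hb : (R ^ 2 - q) / R ^ 2 ∈ Set.Icc 0 (X / n) :=
      ⟨div_nonneg ((abs_nonneg _).trans h₁) (by positivity), by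
        rw [div_le_iff₀ (by positivity)]; linarith [mul_comm_div (R ^ 2) (n : ℝ) X]⟩
    have hq : R ^ 2 * (1 - (R ^ 2 - q) / R ^ 2) = q := by field_simp; ring
    have hnb : n * ((R ^ 2 - q) / R ^ 2) = (R ^ 2 - q) / (R ^ 2 / n) := by field_simp
    have := hle ξ _ hb (by rwa [mul_div_cancel₀ _ (by positivity)])
    rwa [hq, hnb] at this
  · rw [Set.indicator_of_notMem hp, mul_zero]
    refine meridianIntegrand_nonpos (by have := H.four_le; omega) (by positivity) hf₀ fun hmem ↦ ?_
    refine (H.apexCos_le_of_far hmem ?_).trans H.s_mem.1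
    by_contra! hnear
    obtain ⟨⟨-, h₁⟩, -, h₂⟩ := hmem
    dsimp only at h₁ h₂ hnear
    exact hp ⟨abs_le.2 ⟨by linarith, by linarith⟩, by
      dsimp only; linarith [mul_comm_div (R ^ 2) (n : ℝ) X]⟩

lemma integral_meridianIntegrand_nonpos (H : CriticalLayer n c X ε C s R τ)
    (hX : ∫ a in 0..X, a * (exp (-a) * (2 * c - a) + ε) ≤ 0) (hK : 0 < K)
    (hf : ∀ t, |t - s| ≤ 4 * X / n →
      |f.eval t * √(1 - t ^ 2) ^ n - K * (t - s)| ≤ ε / (16 * X) * (K * |t - s|))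
    (hf₀ : ∀ t, -1 ≤ t → t ≤ s → f.eval t ≤ 0) :
    ∫ p, meridianIntegrand f (3 / 4 * R) R τ (n - 3) p ≤ 0 := by
  obtain ⟨κ, hκ, hle⟩ := H.exists_meridianIntegrand_le_indicator hK hf hf₀
  have hR := H.R_pos
  have hn := H.natCast_pos
  have hτ : 0 < τ := zero_lt_one.trans_le H.τ_mem.1
  have hX₀ : 0 ≤ X := by linarith [H.twelve_le]
  have hint := integrable_indicator_boundaryWedge
    (φ := fun r ↦ exp (-(r / (R ^ 2 / n))) * (2 * c - r / (R ^ 2 / n)) + ε) (by fun_prop)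
    (R ^ 2) (R ^ 2 / n * X) hτ
  refine (integral_mono (integrable_meridianIntegrand f _ R (by positivity) hτ)
    (hint.const_mul κ) hle).trans ?_
  rw [integral_const_mul]
  exact mul_nonpos_of_nonneg_of_nonpos hκ (integral_indicator_boundaryWedge_nonpos
    (φ := fun a ↦ exp (-a) * (2 * c - a) + ε) (by fun_prop) _ hX₀ (by positivity) hτ hX)

end CriticalLayer

end BoundaryWedge

/-! ### The density ratio -/

section DensityRatio

lemma IsLevenshteinNode.eval_levenshteinPoly_nonpos {n d e : ℕ} {s t : ℝ}
    (h : IsLevenshteinNode n d e s) (ht : -1 ≤ t) (hts : t ≤ s) :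
    (levenshteinPoly n d e s).eval t ≤ 0 := by
  have hquot : (t - s) * (nodeQuot n d e s).eval t = (nodePoly n d e).eval t := by
    simpa using congrArg (Polynomial.eval t) h.X_sub_C_mul_nodeQuot
  have heval : (levenshteinPoly n d e s).eval t =
      (t - s) * ((1 + t) ^ e * (nodeQuot n d e s).eval t ^ 2) := by
    rw [eval_levenshteinPoly, ← hquot]
    ring
  have : 0 ≤ 1 + t := by linarith
  rw [heval]
  exact mul_nonpos_of_nonpos_of_nonneg (sub_nonpos.2 hts) (by positivity)

lemma integral_meridianIntegrand_nonpos_of_sq_mul_le {n : ℕ} {f : Polynomial ℝ} {κ s R τ : ℝ}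
    (hn : 4 ≤ n) (hR : 0 < R) (hκ : κ ∈ Set.Icc 0 (3 / 4)) (hκs : κ ≤ s)
    (hτ : R ^ 2 * (1 - κ) ≤ 2 * τ ^ 2) (hf : ∀ t, -1 ≤ t → t ≤ s → f.eval t ≤ 0) :
    ∫ p, meridianIntegrand f (3 / 4 * R) R τ (n - 3) p ≤ 0 := by
  refine integral_nonpos fun p ↦ meridianIntegrand_nonpos (by omega) (by positivity) hf fun hp ↦
    (apexCos_le hR hp.1 hp.2 hκ (Set.left_mem_Icc.2 zero_le_one) ?_ ?_).trans hκs
  · linarith [hp.1.2, hp.2.2]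
  · linarith

lemma sq_mul_one_sub_add_two_div_le {n : ℕ} {c C R τ : ℝ} (hn : 2 ≤ n) (hc : c ∈ Set.Icc 0 1)
    (hC : 0 ≤ C) (hsq : R ^ 2 * (1 - C) = 2 * (1 + c / n) ^ 2) (hτ : 1 ≤ τ) :
    R ^ 2 * (1 - (C + 2 / n)) ≤ 2 * τ ^ 2 := by
  have hn₀ : 0 < (n : ℝ) := by positivity
  have hn₂ : 2 / (n : ℝ) ≤ 1 := (div_le_one hn₀).2 (by exact_mod_cast hn)
  have hδ : (1 + c / n) ^ 2 * (1 - 2 / n) ≤ 1 :=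
    calc (1 + c / n) ^ 2 * (1 - 2 / n) ≤ (1 + 1 / (n : ℝ)) ^ 2 * (1 - 2 / n) := by
          have := hc.1
          gcongr
          exact hc.2
      _ = 1 - (1 / (n : ℝ)) ^ 2 * (3 + 2 / n) := by ring
      _ ≤ 1 := sub_le_self _ (by positivity)
  have hR : 2 * (1 + c / n) ^ 2 ≤ R ^ 2 := by nlinarith [sq_nonneg R, hC]
  calc R ^ 2 * (1 - (C + 2 / n)) = R ^ 2 * (1 - C) - R ^ 2 * (2 / n) := by ring
    _ ≤ 2 * (1 + c / n) ^ 2 - 2 * (1 + c / n) ^ 2 * (2 / n) := by rw [hsq]; gcongr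
    _ ≤ 2 * τ ^ 2 := by linarith [one_le_pow₀ hτ (n := 2)]

lemma eventually_integral_shellKernel_nonpos {c : ℝ} (hc : c ∈ Set.Ioo 0 1) :
    ∀ᶠ n : ℕ in atTop, ∀ (d e : ℕ) (C s R : ℝ), IsLevenshteinNode n d e s →
      C ∈ Set.Icc 0 (1 / 2) → C ≤ s → 0 < R → R ^ 2 * (1 - C) = 2 * (1 + c / n) ^ 2 →
      ∀ w : EuclideanSpace ℝ (Fin n), 2 ≤ ‖w‖ →
        ∫ z, shellKernel (levenshteinPoly n d e s) (3 / 4 * R) R z (z - w) ≤ 0 := by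
  obtain ⟨X, ε, hX, hε, hint⟩ := exists_integral_mul_exp_neg_mul_sub_add_nonpos hc
  filter_upwards [eventually_ge_atTop 16, eventually_div_natCast_le (1000 * X ^ 3) hε.1,
    eventually_abs_levenshteinPoly_mul_sub_le (4 * X)
      (div_pos hε.1 (by positivity) : 0 < ε / (16 * X))]
    with n hn hlarge hlocal d e C s R h hC hCs hR hsq w hw
  have hn₀ : 0 < (n : ℝ) := by positivity
  have hf₀ (t : ℝ) (ht : -1 ≤ t) (hts : t ≤ s) := h.eval_levenshteinPoly_nonpos ht hts
  have htwo : 2 / (n : ℝ) ≤ 1 / 8 := by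
    rw [div_le_iff₀ hn₀]
    have : (16 : ℝ) ≤ n := by exact_mod_cast hn
    linarith
  have hcn : c / n ∈ Set.Ioo 0 (1 / (n : ℝ)) :=
    ⟨div_pos hc.1 hn₀, div_lt_div_of_pos_right hc.2 hn₀⟩
  obtain ⟨τ, hτ⟩ : ∃ τ, ‖w‖ = 2 * τ := ⟨‖w‖ / 2, by ring⟩
  have hτ₁ : 1 ≤ τ := by linarith
  refine integral_shellKernel_nonpos_of_meridian (by omega) (by positivity) hR.le
    (by linarith) hτ ?_
  rcases lt_or_ge (1 + c / n) τ with hfar | hnear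
  · refine integral_meridianIntegrand_nonpos_of_sq_mul_le (by omega) hR ⟨hC.1, ?_⟩ hCs ?_ hf₀
    · linarith [hC.2]
    · rw [hsq]
      gcongr
      linarith [hcn.1]
  rcases lt_or_ge (C + 2 / n) s with hhigh | hlow
  · refine integral_meridianIntegrand_nonpos_of_sq_mul_le (κ := C + 2 / n) (by omega) hR
      ⟨by linarith [hC.1, div_pos two_pos hn₀], by linarith [hC.2]⟩ hhigh.le ?_ hf₀
    exact sq_mul_one_sub_add_two_div_le (by omega) (Set.Ioo_subset_Icc_self hc) hC.1 hsq hτ₁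
  · have H : CriticalLayer n c X ε C s R τ :=
      ⟨hc, hX, hε, (div_le_iff₀ hn₀).1 hlarge |>.trans_eq (by ring), hC, ⟨hCs, hlow⟩, hR, hsq,
        hτ₁, hnear⟩
    obtain ⟨K, hK, hf⟩ := hlocal d e s h (hC.1.trans hCs) (by linarith [hC.2])
    exact H.integral_meridianIntegrand_nonpos hint hK hf hf₀

lemma MLev_pos {n : ℕ} (hn : 1 ≤ n) (θ : ℝ) : 0 < MLev n θ := by
  have hchoose : 0 < (Nat.choose (levD n θ + n - 1) (n - 1) : ℝ) := by
    exact_mod_cast Nat.choose_pos (by omega)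
  unfold MLev
  split_ifs <;> positivity

lemma eventually_spherePackingConst_le {c θ : ℝ} (hc : c ∈ Set.Ioo 0 1)
    (hθ : θ ∈ Set.Icc (π / 3) (π / 2)) :
    ∀ᶠ n : ℕ in atTop, spherePackingConst n ≤ MLev n θ /
      (((1 + c / n) / sin (θ / 2)) ^ n - (3 / 4 * ((1 + c / n) / sin (θ / 2))) ^ n) := by
  filter_upwards [eventually_ge_atTop 200, eventually_integral_shellKernel_nonpos hc] with n hn hneg
  have hC₀ : 0 ≤ cos θ := cos_nonneg_of_neg_pi_div_two_le_of_le (by linarith [hθ.1, pi_pos]) hθ.2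
  have hC₁ : cos θ ≤ 1 / 2 := by
    rw [← cos_pi_div_three]
    exact cos_le_cos_of_nonneg_of_le_pi (by positivity) (by linarith [hθ.2, pi_pos]) hθ.1
  have hS : 0 < sin (θ / 2) :=
    sin_pos_of_pos_of_lt_pi (by linarith [hθ.1, pi_pos]) (by linarith [hθ.2, pi_pos])
  have hR : 0 < (1 + c / n) / sin (θ / 2) := by have := hc.1; positivity
  have hsq : ((1 + c / n) / sin (θ / 2)) ^ 2 * (1 - cos θ) = 2 * (1 + c / n) ^ 2 := by
    have hdouble := cos_sq' (θ / 2)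
    have hhalf := cos_sq (θ / 2)
    rw [mul_div_cancel₀ _ two_ne_zero] at hhalf
    rw [show 1 - cos θ = 2 * sin (θ / 2) ^ 2 by linarith]
    field_simp
  obtain ⟨d, e, s, h, hCs, hs, hM⟩ := exists_isLevenshteinNode_MLev_eq hn hC₁
  have hquot := h.eval_one_nodeQuot_pos (by omega) hs
  have hcoeff := h.zonalCoeff_zero_levenshteinPoly (by omega)
  have hratio : (levenshteinPoly n d e s).eval 1 / zonalCoeff n 0 (levenshteinPoly n d e s) =
      MLev n θ := by
    rw [hcoeff, eval_levenshteinPoly, mul_div_cancel_right₀ _ hquot.ne', hM]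
  rw [← hratio]
  exact (h.zonalNonneg_levenshteinPoly (by omega)).spherePackingConst_le (by omega)
    (hcoeff ▸ hquot) (by positivity) (by linarith)
    (hneg d e (cos θ) s _ h ⟨hC₀, hC₁⟩ hCs hR hsq)

lemma eventually_spherePackingConst_div_deltaKL_mem {c θ : ℝ} (hc : c ∈ Set.Ioo 0 1)
    (hθ : θ ∈ Set.Icc (π / 3) (π / 2)) :
    ∀ᶠ n : ℕ in atTop, spherePackingConst n / deltaKL n θ ∈
      Set.Icc 0 ((1 + c / n) ^ n * (1 - (3 / 4 : ℝ) ^ n))⁻¹ := by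
  filter_upwards [eventually_ge_atTop 1, eventually_spherePackingConst_le hc hθ] with n hn hle
  have hS : 0 < sin (θ / 2) :=
    sin_pos_of_pos_of_lt_pi (by linarith [hθ.1, pi_pos]) (by linarith [hθ.2, pi_pos])
  have hKL : 0 < deltaKL n θ := mul_pos (by positivity) (MLev_pos hn θ)
  refine ⟨div_nonneg (spherePackingConst_nonneg n) hKL.le, (div_le_iff₀ hKL).2 (hle.trans_eq ?_)⟩
  have hc₀ := hc.1
  have hpow : 0 < (1 + c / n) ^ n := by positivity
  have hsin : 0 < sin (θ / 2) ^ n := by positivity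
  have h34 : 0 < 1 - (3 / 4 : ℝ) ^ n :=
    sub_pos.2 (pow_lt_one₀ (by norm_num) (by norm_num) (by omega))
  rw [mul_pow, ← one_sub_mul, div_pow (1 + c / n), deltaKL]
  generalize (1 + c / n) ^ n = a at *
  generalize sin (θ / 2) ^ n = b at *
  generalize 1 - (3 / 4 : ℝ) ^ n = q at *
  field_simp

lemma limsup_spherePackingConst_div_deltaKL_le_exp_neg {c θ : ℝ} (hc : c ∈ Set.Ioo 0 1)
    (hθ : θ ∈ Set.Icc (π / 3) (π / 2)) :
    limsup (fun n : ℕ ↦ spherePackingConst n / deltaKL n θ) atTop ≤ exp (-c) := by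
  have hmem := eventually_spherePackingConst_div_deltaKL_mem hc hθ
  have htendsto : Tendsto (fun n : ℕ ↦ ((1 + c / n) ^ n * (1 - (3 / 4 : ℝ) ^ n))⁻¹) atTop
      (nhds (exp (-c))) := by
    have hpow : Tendsto (fun n : ℕ ↦ 1 - (3 / 4 : ℝ) ^ n) atTop (nhds (1 - 0)) :=
      tendsto_const_nhds.sub (tendsto_pow_atTop_nhds_zero_of_lt_one (by norm_num) (by norm_num))
    rw [exp_neg]
    simpa using ((tendsto_one_add_div_pow_exp c).mul hpow).inv₀ (by simp [exp_ne_zero])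
  rw [← htendsto.limsup_eq]
  exact limsup_le_limsup (hmem.mono fun n h ↦ h.2)
    (isCoboundedUnder_le_of_eventually_le atTop (hmem.mono fun n h ↦ h.1))
    htendsto.isBoundedUnder_le

end DensityRatio

end SpherePacking

/-- For fixed `θ ∈ [π/3, π/2]`,
`δ_n ≤ (1+o(1))·e⁻¹·δ_n^{KL}(θ)`; equivalently
`limsup_{n→∞} δ_n / δ_n^{KL}(θ) ≤ 1/e`. -/
theorem sphere_packing_bound_improvement
    (θ : ℝ) (hθ1 : π / 3 ≤ θ) (hθ2 : θ ≤ π / 2) :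
    limsup (fun n : ℕ => spherePackingConst n / deltaKL n θ) atTop ≤ 1 / Real.exp 1 := by
  rw [one_div, ← Real.exp_neg]
  have htendsto : Tendsto (fun c : ℝ ↦ Real.exp (-c)) (nhdsWithin 1 (Set.Iio 1))
      (nhds (Real.exp (-1))) :=
    (Continuous.tendsto (by fun_prop) 1).mono_left nhdsWithin_le_nhds
  refine ge_of_tendsto htendsto ?_
  filter_upwards [Ioo_mem_nhdsLT zero_lt_one] with c hc
  exact SpherePacking.limsup_spherePackingConst_div_deltaKL_le_exp_neg hc ⟨hθ1, hθ2⟩
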